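/- For every positive integer n with n ≡ 4 (mod 5) and n ∉ {4, 9, 24}, one has N̄(0,5,n) < N̄(2,5,n). -/

import Mathlib

/-- An overpartition of `n`: a partition of `n` together with a chosen subset of its
distinct part sizes (the overlined parts). -/
def Overpartition (n : ℕ) : Type :=
  {P : n.Partition × Finset ℕ // P.2 ⊆ P.1.parts.toFinset}

/-- The Dyson rank of an overpartition: largest part minus number of parts. -/
def Overpartition.rank {n : ℕ} (P : Overpartition n) : ℤ :=
  (P.1.1.parts.sup : ℤ) - (P.1.1.parts.card : ℤ)

/-- `nbarRank m n` is the number of overpartitions of `n` with rank `m`. -/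
noncomputable def nbarRank (m : ℤ) (n : ℕ) : ℕ :=
  Nat.card {P : Overpartition n // P.rank = m}

/-- `nbar a c n` is the number of overpartitions of `n` with rank congruent to `a` mod `c`. -/
noncomputable def nbar (a : ℤ) (c : ℕ) (n : ℕ) : ℕ :=
  Nat.card {P : Overpartition n // P.rank ≡ a [ZMOD (c : ℤ)]}

/-- `pbar n` is the number of overpartitions of `n`. -/
noncomputable def pbar (n : ℕ) : ℕ := Nat.card (Overpartition n)

/-!
Write `φ(-x) = ∑ (-1)^n x^{n²}`, which is the reciprocal of the generating function of all
overpartitions. Pascal-type recurrences for the overpartitions that fit in a given box show that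
`φ(-x) ∑ (N̄(0,5,n) - N̄(2,5,n)) x^n` is the Lambert series `1 + 4 S(1) - 2 S(2)`, where
`S(b) = ∑_{n ≠ 0} (-1)^n x^{n²+bn} / (1 - x^{5n})`. Sorting exponents modulo `5` turns this into a
linear system for the five components of the rank difference. A solution can be guessed in terms of
`θ(q^k; q^5)` and Appell–Lerch sums of modulus ten; that the guess satisfies the system follows from
the change-of-variable formula for Appell–Lerch sums, and as `φ` is not a zero divisor it is the
rank difference. In particular

  `∑ (N̄(0,5,5m+4) - N̄(2,5,5m+4)) q^{m+1} = -2 (Λ + Λ') / (q^3, q^7, q^{10}; q^{10})_∞`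

for two alternating Lambert series `Λ = q^4 + ⋯` and `Λ' = q^3 + ⋯`. Taking their terms in pairs
makes them sums of terms `q^e (1 - q^{3a+7b})`, and `(1 - q^{3a+7b}) / ((1 - q^3) (1 - q^7))` has
nonnegative coefficients. Hence no coefficient of the left side is positive, and the terms with
`e = 3, 4, 8`, multiplied by `1 / (1 - q^3)`, make all of them negative except at `q`, `q^2`, `q^5`.
-/

namespace OverpartitionRank

open Filter Topology

/-! ### Theta functions and Appell–Lerch sums -/

/-- The general term `p^{r(r-1)} (-z)^r` of the theta function with nome `p`. -/
noncomputable def thetaTerm (p z : ℂ) (r : ℤ) : ℂ := p ^ (r * (r - 1)) * (-z) ^ r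

/-- The theta function `θ(z; p) = ∑ (-1)^r p^{r(r-1)} z^r` as a bilateral series; by the Jacobi
triple product it is `(z; p²)_∞ (p²/z; p²)_∞ (p²; p²)_∞`. -/
noncomputable def theta (p z : ℂ) : ℂ := ∑' r : ℤ, thetaTerm p z r

/-- The Euler derivative `z · dθ/dz` of the theta function. -/
noncomputable def thetaDeriv (p z : ℂ) : ℂ := ∑' r : ℤ, (r : ℂ) * thetaTerm p z r

/-- The Appell–Lerch sum `∑ (-1)^r p^{r(r-1)} z^r / (1 - u p^{2r})`. Where the denominator
vanishes the term is `0`, which makes this the sum with the polar term removed. -/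
noncomputable def lerch (p z u : ℂ) : ℂ := ∑' r : ℤ, thetaTerm p z r / (1 - u * p ^ (2 * r))

/-- Kronecker's bilateral series `∑ A^n / (1 - b p^{2n})`. As for `lerch`, a term with vanishing
denominator is dropped. -/
noncomputable def kronecker (p A b : ℂ) : ℂ := ∑' n : ℤ, A ^ n / (1 - b * p ^ (2 * n))

theorem summable_zpow_mul_natPow {P y : ℝ} (hP : 0 < P) (hP1 : P < 1) (hy : 0 < y) :
    Summable fun n : ℕ => P ^ ((n : ℤ) * ((n : ℤ) - 1)) * y ^ n := by
  refine summable_of_ratio_test_tendsto_lt_one zero_lt_one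
    (Eventually.of_forall fun n => by positivity) ?_
  have ratio : ∀ n : ℕ, ‖P ^ (((n + 1 : ℕ) : ℤ) * (((n + 1 : ℕ) : ℤ) - 1)) * y ^ (n + 1)‖ /
      ‖P ^ ((n : ℤ) * ((n : ℤ) - 1)) * y ^ n‖ = (P ^ 2) ^ n * y := by
    intro n
    rw [Real.norm_of_nonneg (by positivity), Real.norm_of_nonneg (by positivity),
      show ((n + 1 : ℕ) : ℤ) * (((n + 1 : ℕ) : ℤ) - 1)
        = (n : ℤ) * ((n : ℤ) - 1) + ((2 * n : ℕ) : ℤ) by push_cast; ring,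
      zpow_add₀ hP.ne', zpow_natCast, pow_succ, pow_mul]
    have := zpow_pos hP ((n : ℤ) * ((n : ℤ) - 1))
    field_simp
  simp_rw [ratio]
  simpa using (tendsto_pow_atTop_nhds_zero_of_lt_one (r := P ^ 2) (by positivity)
    (by nlinarith)).mul_const y

theorem summable_zpow_mul_zpow {P x : ℝ} (hP : 0 < P) (hP1 : P < 1) (hx : 0 < x) :
    Summable fun r : ℤ => P ^ (r * (r - 1)) * x ^ r := by
  refine Summable.of_nat_of_neg (by simpa using summable_zpow_mul_natPow hP hP1 hx) ?_
  refine (summable_zpow_mul_natPow hP hP1 (y := P ^ 2 * x⁻¹) (by positivity)).congr fun n => ?_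
  rw [show -(n : ℤ) * (-(n : ℤ) - 1) = (n : ℤ) * ((n : ℤ) - 1) + ((2 * n : ℕ) : ℤ) by
    push_cast; ring, zpow_add₀ hP.ne', zpow_natCast, mul_pow, pow_mul, zpow_neg, zpow_natCast,
    inv_pow]
  ring

section Theta

variable {p z : ℂ}

theorem norm_thetaTerm (p z : ℂ) (r : ℤ) :
    ‖thetaTerm p z r‖ = ‖p‖ ^ (r * (r - 1)) * ‖z‖ ^ r := by
  simp [thetaTerm]

theorem summable_norm_thetaTerm (hp : p ≠ 0) (hp1 : ‖p‖ < 1) (hz : z ≠ 0) :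
    Summable fun r => ‖thetaTerm p z r‖ := by
  simp_rw [norm_thetaTerm]
  exact summable_zpow_mul_zpow (norm_pos_iff.2 hp) hp1 (norm_pos_iff.2 hz)

theorem summable_thetaTerm (hp : p ≠ 0) (hp1 : ‖p‖ < 1) (hz : z ≠ 0) : Summable (thetaTerm p z) :=
  (summable_norm_thetaTerm hp hp1 hz).of_norm

theorem abs_le_two_zpow_add (r : ℤ) : |(r : ℝ)| ≤ 2 ^ r + 2⁻¹ ^ r := by
  have natCase : ∀ n : ℕ, (n : ℝ) ≤ 2 ^ n + (2 ^ n)⁻¹ := fun n =>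
    le_add_of_le_of_nonneg (by exact_mod_cast n.lt_two_pow_self.le) (by positivity)
  obtain ⟨n, rfl | rfl⟩ := r.eq_nat_or_neg
  · simpa using natCase n
  · simpa [add_comm] using natCase n

theorem summable_mul_thetaTerm (hp : p ≠ 0) (hp1 : ‖p‖ < 1) (hz : z ≠ 0) :
    Summable fun r : ℤ => (r : ℂ) * thetaTerm p z r := by
  refine Summable.of_norm_bounded
    ((summable_norm_thetaTerm hp hp1 (mul_ne_zero two_ne_zero hz)).add
      (summable_norm_thetaTerm hp hp1 (mul_ne_zero (inv_ne_zero two_ne_zero) hz))) fun r => ?_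
  simp only [norm_mul, norm_thetaTerm, mul_zpow, Complex.norm_intCast, norm_inv,
    Complex.norm_ofNat]
  calc |(r : ℝ)| * (‖p‖ ^ (r * (r - 1)) * ‖z‖ ^ r)
      ≤ (2 ^ r + 2⁻¹ ^ r) * (‖p‖ ^ (r * (r - 1)) * ‖z‖ ^ r) := by
        gcongr; exact abs_le_two_zpow_add r
    _ = _ := by ring

theorem thetaTerm_mul_zpow (hp : p ≠ 0) (hz : z ≠ 0) (i r : ℤ) :
    thetaTerm p (z * p ^ (2 * i)) r
      = p ^ (-(i * (i - 1))) * (-z) ^ (-i) * thetaTerm p z (r + i) := by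
  have hz' : -z ≠ 0 := neg_ne_zero.mpr hz
  have := zpow_ne_zero (i * (i - 1)) hp
  have := zpow_ne_zero i hz'
  unfold thetaTerm
  rw [show -(z * p ^ (2 * i)) = -z * p ^ (2 * i) by ring, mul_zpow, ← zpow_mul,
    show (r + i) * (r + i - 1) = r * (r - 1) + 2 * i * r + i * (i - 1) by ring, zpow_add₀ hp,
    zpow_add₀ hp, zpow_add₀ hz', zpow_neg, zpow_neg]
  field_simp

theorem theta_mul_zpow (hp : p ≠ 0) (hz : z ≠ 0) (i : ℤ) :
    theta p (z * p ^ (2 * i)) = p ^ (-(i * (i - 1))) * (-z) ^ (-i) * theta p z := by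
  unfold theta
  simp_rw [thetaTerm_mul_zpow hp hz, tsum_mul_left]
  rw [← (Equiv.addRight i).tsum_eq (thetaTerm p z)]
  rfl

theorem zpow_ne_one_of_norm_lt_one (hp1 : ‖p‖ < 1) {n : ℤ} (hn : n ≠ 0) : p ^ n ≠ 1 := by
  intro h
  have hnorm := congrArg norm h
  rw [norm_zpow, norm_one, zpow_eq_one_iff_right₀ (norm_nonneg _) hp1.ne] at hnorm
  exact hn hnorm

end Theta

section Lambert

variable {p b : ℂ}

theorem exists_norm_one_div_sub_le (hp1 : ‖p‖ < 1) (b : ℂ) {c : ℂ} (hc : c ≠ 0) :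
    ∃ C : ℝ, ∀ n : ℕ, ‖1 / (c - b * p ^ (2 * n))‖ ≤ C := by
  have hsq : ‖p ^ 2‖ < 1 := by
    rw [norm_pow]; exact pow_lt_one₀ (norm_nonneg _) hp1 two_ne_zero
  have hpow : Tendsto (fun n : ℕ => p ^ (2 * n)) atTop (𝓝 0) := by
    simpa [pow_mul] using tendsto_pow_atTop_nhds_zero_of_norm_lt_one hsq
  have hlim : Tendsto (fun n : ℕ => ‖1 / (c - b * p ^ (2 * n))‖) atTop (𝓝 ‖1 / (c - b * 0)‖) :=
    (tendsto_const_nhds.div (tendsto_const_nhds.sub (tendsto_const_nhds.mul hpow))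
      (by simpa using hc)).norm
  obtain ⟨C, hC⟩ := hlim.bddAbove_range
  exact ⟨C, fun n => hC ⟨n, rfl⟩⟩

theorem one_div_one_sub_mul_zpow_neg (hp : p ≠ 0) (b : ℂ) (n : ℕ) :
    1 / (1 - b * p ^ (2 * (-(n : ℤ)))) = p ^ (2 * n) * (1 / (-b - (-1) * p ^ (2 * n))) := by
  have h : p ^ (2 * n) ≠ 0 := pow_ne_zero _ hp
  rw [show 2 * (-(n : ℤ)) = -((2 * n : ℕ) : ℤ) by push_cast; ring, zpow_neg, zpow_natCast,
    show 1 - b * (p ^ (2 * n))⁻¹ = (-b - (-1) * p ^ (2 * n)) / p ^ (2 * n) by field_simp; ring,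
    one_div_div, ← mul_one_div]

theorem exists_norm_one_div_one_sub_mul_zpow_le (hp : p ≠ 0) (hp1 : ‖p‖ < 1) (hb : b ≠ 0) :
    ∃ C : ℝ, (∀ n : ℕ, ‖1 / (1 - b * p ^ (2 * (n : ℤ)))‖ ≤ C) ∧
      ∀ n : ℕ, ‖1 / (1 - b * p ^ (2 * (-(n : ℤ))))‖ ≤ C * ‖p‖ ^ (2 * n) := by
  obtain ⟨C₁, h₁⟩ := exists_norm_one_div_sub_le hp1 b one_ne_zero
  obtain ⟨C₂, h₂⟩ := exists_norm_one_div_sub_le hp1 (-1) (neg_ne_zero.mpr hb)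
  refine ⟨max C₁ C₂, fun n => ?_, fun n => ?_⟩
  · rw [show 2 * (n : ℤ) = ((2 * n : ℕ) : ℤ) by push_cast; ring, zpow_natCast]
    exact (h₁ n).trans (le_max_left _ _)
  · rw [one_div_one_sub_mul_zpow_neg hp, norm_mul, norm_pow, mul_comm]
    gcongr
    exact (h₂ n).trans (le_max_right _ _)

theorem summable_lerch {z : ℂ} (hp : p ≠ 0) (hp1 : ‖p‖ < 1) (hz : z ≠ 0) (hb : b ≠ 0) :
    Summable fun n => thetaTerm p z n / (1 - b * p ^ (2 * n)) := by
  obtain ⟨C, hpos, hneg⟩ := exists_norm_one_div_one_sub_mul_zpow_le hp hp1 hb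
  have hC : 0 ≤ C := (norm_nonneg _).trans (hpos 0)
  refine Summable.of_norm_bounded ((summable_norm_thetaTerm hp hp1 hz).mul_right C) fun n => ?_
  rw [div_eq_mul_one_div, norm_mul]
  gcongr
  obtain ⟨k, rfl | rfl⟩ := n.eq_nat_or_neg
  · exact hpos k
  · exact (hneg k).trans (mul_le_of_le_one_right hC (pow_le_one₀ (norm_nonneg _) hp1.le))

theorem summable_kronecker {A : ℂ} (hp : p ≠ 0) (hp1 : ‖p‖ < 1) (hA : ‖A‖ < 1)
    (hA2 : ‖p‖ ^ 2 < ‖A‖) (hb : b ≠ 0) :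
    Summable fun n : ℤ => A ^ n / (1 - b * p ^ (2 * n)) := by
  obtain ⟨C, hpos, hneg⟩ := exists_norm_one_div_one_sub_mul_zpow_le hp hp1 hb
  have hA0 : 0 < ‖A‖ := (sq_nonneg _).trans_lt hA2
  have hr : ‖p‖ ^ 2 / ‖A‖ < 1 := (div_lt_one hA0).2 hA2
  refine Summable.of_nat_of_neg
    (Summable.of_norm_bounded
      ((summable_geometric_of_lt_one (norm_nonneg _) hA).mul_right C) fun n => ?_)
    (Summable.of_norm_bounded
      ((summable_geometric_of_lt_one (by positivity) hr).mul_right C) fun n => ?_)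
  · rw [div_eq_mul_one_div, norm_mul, zpow_natCast, norm_pow]
    gcongr
    exact hpos n
  · rw [div_eq_mul_one_div, norm_mul, zpow_neg, zpow_natCast, norm_inv, norm_pow]
    calc (‖A‖ ^ n)⁻¹ * ‖1 / (1 - b * p ^ (2 * -(n : ℤ)))‖
        ≤ (‖A‖ ^ n)⁻¹ * (C * ‖p‖ ^ (2 * n)) := by gcongr; exact hneg n
      _ = (‖p‖ ^ 2 / ‖A‖) ^ n * C := by rw [div_pow, pow_mul]; ring

end Lambert

/-! ### The change-of-variable formula for Appell–Lerch sums -/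

/-- The signed indicator of the interval between `0` and `s`: it is `1` on `[0, s)` if `0 ≤ s` and
`-1` on `[s, 0)` if `s < 0`. -/
noncomputable def signedIndicator (s i : ℤ) : ℂ :=
  (if 0 ≤ i ∧ i < s then 1 else 0) - (if s ≤ i ∧ i < 0 then 1 else 0)

/-- The geometric sum `(1 - y^s) / (1 - y)` for an exponent of any sign, with its limit `s` at
`y = 1`. -/
noncomputable def intGeomSum (s : ℤ) (y : ℂ) : ℂ :=
  if y = 1 then (s : ℂ) else (1 - y ^ s) / (1 - y)

theorem signedIndicator_add_one (s i : ℤ) :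
    signedIndicator (s + 1) i = signedIndicator s i + if i = s then 1 else 0 := by
  unfold signedIndicator
  split_ifs <;> first | omega | norm_num

theorem signedIndicator_zero (i : ℤ) : signedIndicator 0 i = 0 := by
  unfold signedIndicator
  split_ifs <;> first | omega | norm_num

theorem signedIndicator_add_of_nonpos {m : ℤ} (hm : m ≤ 0) (i : ℤ) :
    signedIndicator (m + i) i = if i < 0 then -1 else 0 := by
  unfold signedIndicator
  split_ifs <;> first | omega | norm_num

theorem signedIndicator_add_of_pos {m : ℤ} (hm : 0 < m) (i : ℤ) :
    signedIndicator (m + i) i = if 0 ≤ i then 1 else 0 := by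
  unfold signedIndicator
  split_ifs <;> first | omega | norm_num

theorem intGeomSum_add_one (s : ℤ) {y : ℂ} (hy : y ≠ 0) :
    intGeomSum (s + 1) y = intGeomSum s y + y ^ s := by
  unfold intGeomSum
  split_ifs with h
  · simp [h]
  · have : 1 - y ≠ 0 := sub_ne_zero.mpr (Ne.symm h)
    rw [zpow_add₀ hy, zpow_one]
    field_simp
    ring

theorem hasSum_signedIndicator (s : ℤ) {y : ℂ} (hy : y ≠ 0) :
    HasSum (fun i => signedIndicator s i * y ^ i) (intGeomSum s y) := by
  have single : ∀ s : ℤ, HasSum (fun i => (if i = s then 1 else 0) * y ^ i) (y ^ s) := fun s => by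
    simpa using hasSum_single (f := fun i => (if i = s then (1 : ℂ) else 0) * y ^ i) s
      fun i hi => by simp [hi]
  induction s using Int.induction_on with
  | zero => simp [signedIndicator_zero, intGeomSum]
  | succ n ih =>
    simpa only [signedIndicator_add_one, add_mul, intGeomSum_add_one _ hy] using ih.add (single n)
  | pred n ih =>
    have hind := signedIndicator_add_one (-(n : ℤ) - 1)
    have hgeom := intGeomSum_add_one (-(n : ℤ) - 1) hy
    rw [sub_add_cancel] at hgeom
    simp_rw [sub_add_cancel] at hind
    simpa only [hind, hgeom, add_mul, add_sub_cancel_right] using ih.sub (single (-(n : ℤ) - 1))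

theorem hasSum_nonneg_geometric {w : ℂ} (hw : ‖w‖ < 1) :
    HasSum (fun i : ℤ => (if 0 ≤ i then 1 else 0) * w ^ i) (1 / (1 - w)) := by
  refine (Function.Injective.hasSum_iff (g := ((↑) : ℕ → ℤ)) Nat.cast_injective
    fun i hi => ?_).1 ?_
  · rw [if_neg fun h => hi ⟨i.toNat, Int.toNat_of_nonneg h⟩, zero_mul]
  · simpa [Function.comp_def] using hasSum_geometric_of_norm_lt_one hw

theorem hasSum_neg_geometric {w : ℂ} (hw : 1 < ‖w‖) :
    HasSum (fun i : ℤ => (if i < 0 then -1 else 0) * w ^ i) (1 / (1 - w)) := by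
  have hw0 : w ≠ 0 := norm_pos_iff.1 (one_pos.trans hw)
  have hw1 : w - 1 ≠ 0 := sub_ne_zero.2 fun h => by simp [h] at hw
  have hinv : ‖w⁻¹‖ < 1 := by rw [norm_inv]; exact inv_lt_one_of_one_lt₀ hw
  refine (Function.Injective.hasSum_iff (g := Int.negSucc) (fun _ _ => Int.negSucc.inj)
    fun i hi => ?_).1 ?_
  · obtain ⟨n, rfl⟩ : ∃ n : ℕ, i = n := by
      cases i with
      | ofNat n => exact ⟨n, rfl⟩
      | negSucc n => exact absurd ⟨n, rfl⟩ hi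
    simp
  · have hval : 1 / (1 - w) = -w⁻¹ * (1 - w⁻¹)⁻¹ := by
      rw [show 1 - w⁻¹ = (w - 1) / w by field_simp, ← neg_sub w 1]
      field_simp
    rw [hval]
    refine ((hasSum_geometric_of_norm_lt_one hinv).mul_left (-w⁻¹)).congr_fun fun n => ?_
    simp only [Function.comp_apply, Int.negSucc_lt_zero, if_true, zpow_negSucc, pow_succ, inv_pow,
      mul_inv]
    ring

section ChangeOfVariable

variable {p a b z₀ z₁ : ℂ}

theorem norm_le_norm_mul_zpow_of_nonpos (hp : p ≠ 0) (hp1 : ‖p‖ < 1) (a : ℂ) {m : ℤ} (hm : m ≤ 0) :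
    ‖a‖ ≤ ‖a * p ^ (2 * m)‖ := by
  rw [norm_mul, norm_zpow]
  exact le_mul_of_one_le_right (norm_nonneg _)
    (one_le_zpow_of_nonpos₀ (norm_pos_iff.2 hp) hp1.le (by omega))

theorem norm_mul_zpow_le_of_pos (hp : p ≠ 0) (hp1 : ‖p‖ < 1) (a : ℂ) {m : ℤ} (hm : 0 < m) :
    ‖a * p ^ (2 * m)‖ ≤ ‖a‖ * ‖p‖ ^ 2 := by
  rw [norm_mul, norm_zpow]
  gcongr
  exact_mod_cast zpow_le_zpow_right_of_le_one₀ (norm_pos_iff.2 hp) hp1.le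
    (show (2 : ℤ) ≤ 2 * m by omega)

theorem hasSum_signedIndicator_add (hp : p ≠ 0) (hp1 : ‖p‖ < 1) (ha : 1 < ‖a‖)
    (ha2 : ‖a‖ * ‖p‖ ^ 2 < 1) (m : ℤ) :
    HasSum (fun i => signedIndicator (m + i) i * (a * p ^ (2 * m)) ^ i)
      (1 / (1 - a * p ^ (2 * m))) := by
  rcases le_or_gt m 0 with hm | hm
  · simp_rw [signedIndicator_add_of_nonpos hm]
    exact hasSum_neg_geometric (ha.trans_le (norm_le_norm_mul_zpow_of_nonpos hp hp1 a hm))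
  · simp_rw [signedIndicator_add_of_pos hm]
    exact hasSum_nonneg_geometric ((norm_mul_zpow_le_of_pos hp hp1 a hm).trans_lt ha2)

theorem norm_signedIndicator_add_mul_le (hp : p ≠ 0) (hp1 : ‖p‖ < 1) (ha : 1 < ‖a‖) (m i : ℤ) :
    ‖signedIndicator (m + i) i * (a * p ^ (2 * m)) ^ i‖
      ≤ max ‖a‖⁻¹ (‖a‖ * ‖p‖ ^ 2) ^ i.natAbs := by
  have h0 : (0 : ℝ) ≤ max ‖a‖⁻¹ (‖a‖ * ‖p‖ ^ 2) :=
    (inv_nonneg.2 (norm_nonneg _)).trans (le_max_left _ _)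
  rcases le_or_gt m 0 with hm | hm
  · rw [signedIndicator_add_of_nonpos hm]
    split_ifs with hi
    · obtain ⟨k, rfl⟩ : ∃ k : ℕ, i = -k := ⟨i.natAbs, by omega⟩
      rw [Int.natAbs_neg, Int.natAbs_natCast, norm_mul, norm_neg, norm_one, one_mul, norm_zpow,
        zpow_neg, zpow_natCast, ← inv_pow]
      gcongr
      exact (inv_anti₀ (one_pos.trans ha) (norm_le_norm_mul_zpow_of_nonpos hp hp1 a hm)).trans
        (le_max_left _ _)
    · simp [pow_nonneg h0]
  · rw [signedIndicator_add_of_pos hm]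
    split_ifs with hi
    · lift i to ℕ using hi
      rw [Int.natAbs_natCast, norm_mul, norm_one, one_mul, norm_zpow, zpow_natCast]
      gcongr
      exact (norm_mul_zpow_le_of_pos hp hp1 a hm).trans (le_max_right _ _)
    · simp [pow_nonneg h0]

theorem summable_pow_natAbs {ρ : ℝ} (h0 : 0 ≤ ρ) (h1 : ρ < 1) :
    Summable fun i : ℤ => ρ ^ i.natAbs :=
  Summable.of_nat_of_neg (by simpa using summable_geometric_of_lt_one h0 h1)
    (by simpa using summable_geometric_of_lt_one h0 h1)

/-- The double series obtained from `lerch p z₀ a` by expanding every denominator geometrically,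
in the direction in which it converges. -/
noncomputable def lerchDouble (p a z₀ : ℂ) (x : ℤ × ℤ) : ℂ :=
  thetaTerm p z₀ x.1 * (signedIndicator (x.1 + x.2) x.2 * (a * p ^ (2 * x.1)) ^ x.2)

theorem summable_norm_lerchDouble (hp : p ≠ 0) (hp1 : ‖p‖ < 1) (ha : 1 < ‖a‖)
    (ha2 : ‖a‖ * ‖p‖ ^ 2 < 1) (hz₀ : z₀ ≠ 0) : Summable fun x => ‖lerchDouble p a z₀ x‖ := by
  have h0 : (0 : ℝ) ≤ max ‖a‖⁻¹ (‖a‖ * ‖p‖ ^ 2) :=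
    (inv_nonneg.2 (norm_nonneg _)).trans (le_max_left _ _)
  refine Summable.of_nonneg_of_le (fun _ => norm_nonneg _) (fun x => ?_)
    ((summable_norm_thetaTerm hp hp1 hz₀).mul_of_nonneg
      (summable_pow_natAbs h0 (max_lt (inv_lt_one_of_one_lt₀ ha) ha2))
      (fun _ => norm_nonneg _) fun _ => pow_nonneg h0 _)
  rw [lerchDouble, norm_mul]
  gcongr
  exact norm_signedIndicator_add_mul_le hp hp1 ha _ _

theorem tsum_lerchDouble (hp : p ≠ 0) (hp1 : ‖p‖ < 1) (ha : 1 < ‖a‖) (ha2 : ‖a‖ * ‖p‖ ^ 2 < 1)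
    (hz₀ : z₀ ≠ 0) : ∑' x, lerchDouble p a z₀ x = lerch p z₀ a := by
  rw [(summable_norm_lerchDouble hp hp1 ha ha2 hz₀).of_norm.tsum_prod]
  refine tsum_congr fun m => ?_
  simp only [lerchDouble]
  rw [tsum_mul_left, (hasSum_signedIndicator_add hp hp1 ha ha2 m).tsum_eq, mul_one_div]

/-- The triple series on both sides of the change of variable, summed over `i` and `s` first. -/
noncomputable def lerchTriple (p z₀ z₁ b : ℂ) (n s i : ℤ) : ℂ :=
  thetaTerm p z₁ n * (thetaTerm p z₀ s * (signedIndicator s i * (b * p ^ (2 * n)) ^ i))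

theorem lerchTriple_eq (hp : p ≠ 0) (hz₀ : z₀ ≠ 0) (hz₁ : z₁ ≠ 0) (hab : z₀ * b = z₁ * a)
    (n m i : ℤ) :
    lerchTriple p z₀ z₁ b n (m + i) i = lerchDouble p a z₀ (m, i) * thetaTerm p z₁ (n + i) := by
  have ha : a = -z₀ * b / -z₁ := by field_simp; linear_combination -hab
  have hz₀' : -z₀ ≠ 0 := neg_ne_zero.mpr hz₀
  have hz₁' : -z₁ ≠ 0 := neg_ne_zero.mpr hz₁
  have := zpow_ne_zero i hz₁'
  simp only [lerchTriple, lerchDouble, thetaTerm]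
  rw [show (n + i) * (n + i - 1) = n * (n - 1) + 2 * n * i + i * (i - 1) by ring, zpow_add₀ hp,
    zpow_add₀ hp, zpow_add₀ hz₁',
    show (m + i) * (m + i - 1) = m * (m - 1) + 2 * m * i + i * (i - 1) by ring, zpow_add₀ hp,
    zpow_add₀ hp, zpow_add₀ hz₀', mul_zpow, mul_zpow, ← zpow_mul, ← zpow_mul, ha, div_zpow,
    mul_zpow]
  field_simp

theorem hasSum_lerchTriple (hp : p ≠ 0) (hp1 : ‖p‖ < 1) (hz₀ : z₀ ≠ 0) (hz₁ : z₁ ≠ 0)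
    (ha : 1 < ‖a‖) (ha2 : ‖a‖ * ‖p‖ ^ 2 < 1) (hab : z₀ * b = z₁ * a) :
    HasSum (fun x : ℤ × (ℤ × ℤ) => lerchTriple p z₀ z₁ b x.1 x.2.1 x.2.2)
      (theta p z₁ * lerch p z₀ a) := by
  have hU := summable_norm_lerchDouble hp hp1 ha ha2 hz₀
  have hV := summable_norm_thetaTerm hp hp1 hz₁
  have hprod : HasSum (fun x : (ℤ × ℤ) × ℤ => lerchDouble p a z₀ x.1 * thetaTerm p z₁ x.2)
      (lerch p z₀ a * theta p z₁) := by
    have := (summable_mul_of_summable_norm hU hV).hasSum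
    rwa [← tsum_mul_tsum_of_summable_norm hU hV, tsum_lerchDouble hp hp1 ha ha2 hz₀] at this
  let e : ℤ × (ℤ × ℤ) ≃ (ℤ × ℤ) × ℤ :=
    { toFun := fun x => ((x.2.1 - x.2.2, x.2.2), x.1 + x.2.2)
      invFun := fun y => (y.2 - y.1.2, (y.1.1 + y.1.2, y.1.2))
      left_inv := fun x => by simp
      right_inv := fun y => by simp }
  rw [mul_comm, ← e.hasSum_iff] at hprod
  refine hprod.congr_fun fun ⟨n, s, i⟩ => ?_
  simpa [e] using lerchTriple_eq hp hz₀ hz₁ hab n (s - i) i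

theorem hasSum_thetaTerm_mul_tsum_intGeomSum (hp : p ≠ 0) (hp1 : ‖p‖ < 1) (hz₀ : z₀ ≠ 0)
    (hz₁ : z₁ ≠ 0) (hb : b ≠ 0) (ha : 1 < ‖a‖) (ha2 : ‖a‖ * ‖p‖ ^ 2 < 1)
    (hab : z₀ * b = z₁ * a) :
    HasSum (fun n => thetaTerm p z₁ n * ∑' s, thetaTerm p z₀ s * intGeomSum s (b * p ^ (2 * n)))
      (theta p z₁ * lerch p z₀ a) := by
  have h := hasSum_lerchTriple hp hp1 hz₀ hz₁ ha ha2 hab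
  refine h.prod_fiberwise fun n => ?_
  have hn : Summable fun x : ℤ × ℤ => lerchTriple p z₀ z₁ b n x.1 x.2 := h.summable.prod_factor n
  convert hn.hasSum using 1
  rw [hn.tsum_prod]
  simp only [lerchTriple, tsum_mul_left,
    (hasSum_signedIndicator _ (mul_ne_zero hb (zpow_ne_zero (2 * n) hp))).tsum_eq]

theorem tsum_thetaTerm_mul_intGeomSum (hp : p ≠ 0) (hp1 : ‖p‖ < 1) (hz₀ : z₀ ≠ 0) {y : ℂ}
    (hy0 : y ≠ 0) (hy : y ≠ 1) :
    ∑' s, thetaTerm p z₀ s * intGeomSum s y = (theta p z₀ - theta p (z₀ * y)) / (1 - y) := by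
  have hterm : ∀ s, thetaTerm p z₀ s * intGeomSum s y
      = (thetaTerm p z₀ s - thetaTerm p (z₀ * y) s) / (1 - y) := fun s => by
    rw [intGeomSum, if_neg hy, thetaTerm, thetaTerm, ← neg_mul, mul_zpow]
    ring
  simp_rw [hterm]
  rw [tsum_div_const, Summable.tsum_sub (summable_thetaTerm hp hp1 hz₀)
    (summable_thetaTerm hp hp1 (mul_ne_zero hz₀ hy0))]
  rfl

theorem thetaTerm_mul_tsum_intGeomSum (hp : p ≠ 0) (hp1 : ‖p‖ < 1) (hz₀ : z₀ ≠ 0) (hz₁ : z₁ ≠ 0)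
    (ha : a ≠ 0) (hb : b ≠ 0) (hab : z₀ * b = z₁ * a) {n : ℤ} (hbp : b * p ^ (2 * n) ≠ 1) :
    thetaTerm p z₁ n * ∑' s, thetaTerm p z₀ s * intGeomSum s (b * p ^ (2 * n))
      = theta p z₀ * (thetaTerm p z₁ n / (1 - b * p ^ (2 * n)))
        - theta p (z₁ * a) * (a⁻¹ ^ n / (1 - b * p ^ (2 * n))) := by
  have hshift : thetaTerm p z₁ n * (p ^ (-(n * (n - 1))) * (-(z₁ * a)) ^ (-n)) = a⁻¹ ^ n := by
    have := zpow_ne_zero (n * (n - 1)) hp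
    have := zpow_ne_zero n (neg_ne_zero.mpr hz₁)
    rw [thetaTerm, neg_mul_eq_neg_mul z₁ a, mul_zpow, zpow_neg, zpow_neg, zpow_neg, inv_zpow]
    field_simp
  rw [tsum_thetaTerm_mul_intGeomSum hp hp1 hz₀ (mul_ne_zero hb (zpow_ne_zero _ hp)) hbp,
    ← mul_assoc, hab, theta_mul_zpow hp (mul_ne_zero hz₁ ha), ← hshift]
  ring

theorem summable_kronecker_inv (hp : p ≠ 0) (hp1 : ‖p‖ < 1) (ha : 1 < ‖a‖)
    (ha2 : ‖a‖ * ‖p‖ ^ 2 < 1) (hb : b ≠ 0) :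
    Summable fun n : ℤ => a⁻¹ ^ n / (1 - b * p ^ (2 * n)) := by
  refine summable_kronecker hp hp1 ?_ ?_ hb
  · rw [norm_inv]; exact inv_lt_one_of_one_lt₀ ha
  · rwa [norm_inv, ← one_div, lt_div_iff₀ (one_pos.trans ha), mul_comm]

theorem theta_mul_lerch_sub (hp : p ≠ 0) (hp1 : ‖p‖ < 1) (hz₀ : z₀ ≠ 0) (hz₁ : z₁ ≠ 0)
    (hb : b ≠ 0) (ha : 1 < ‖a‖) (ha2 : ‖a‖ * ‖p‖ ^ 2 < 1) (hab : z₀ * b = z₁ * a)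
    (hbp : ∀ n : ℤ, b * p ^ (2 * n) ≠ 1) :
    theta p z₀ * lerch p z₁ b - theta p (z₁ * a) * kronecker p a⁻¹ b
      = theta p z₁ * lerch p z₀ a := by
  have ha0 : a ≠ 0 := norm_pos_iff.1 (one_pos.trans ha)
  rw [← (hasSum_thetaTerm_mul_tsum_intGeomSum hp hp1 hz₀ hz₁ hb ha ha2 hab).tsum_eq]
  simp_rw [fun n => thetaTerm_mul_tsum_intGeomSum hp hp1 hz₀ hz₁ ha0 hb hab (hbp n)]
  rw [Summable.tsum_sub ((summable_lerch hp hp1 hz₁ hb).mul_left _)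
    ((summable_kronecker_inv hp hp1 ha ha2 hb).mul_left _), tsum_mul_left, tsum_mul_left]
  rfl

-- For `b = 1` the term `n = 0` is the limit of the general one, whence the derivative of `θ`.
theorem theta_mul_lerch_one_sub (hp : p ≠ 0) (hp1 : ‖p‖ < 1) (hz₁ : z₁ ≠ 0) (ha : 1 < ‖a‖)
    (ha2 : ‖a‖ * ‖p‖ ^ 2 < 1) :
    theta p (z₁ * a) * lerch p z₁ 1 - theta p (z₁ * a) * kronecker p a⁻¹ 1
      + thetaDeriv p (z₁ * a) = theta p z₁ * lerch p (z₁ * a) a := by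
  have ha0 : a ≠ 0 := norm_pos_iff.1 (one_pos.trans ha)
  have hz₀ : z₁ * a ≠ 0 := mul_ne_zero hz₁ ha0
  have hab : z₁ * a * 1 = z₁ * a := mul_one _
  have hterm : ∀ n : ℤ,
      thetaTerm p z₁ n * ∑' s, thetaTerm p (z₁ * a) s * intGeomSum s (1 * p ^ (2 * n))
        = theta p (z₁ * a) * (thetaTerm p z₁ n / (1 - 1 * p ^ (2 * n)))
          - theta p (z₁ * a) * (a⁻¹ ^ n / (1 - 1 * p ^ (2 * n)))
          + if n = 0 then thetaDeriv p (z₁ * a) else 0 := by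
    intro n
    split_ifs with hn
    · subst hn
      simp [intGeomSum, thetaDeriv, thetaTerm, mul_comm]
    · rw [add_zero, thetaTerm_mul_tsum_intGeomSum hp hp1 hz₀ hz₁ ha0 one_ne_zero hab]
      rw [one_mul]
      exact zpow_ne_one_of_norm_lt_one hp1 (by omega)
  have hL := (summable_lerch hp hp1 hz₁ one_ne_zero).mul_left (theta p (z₁ * a))
  have hK := (summable_kronecker_inv hp hp1 ha ha2 one_ne_zero).mul_left (theta p (z₁ * a))
  have hD := hasSum_ite_eq (0 : ℤ) (thetaDeriv p (z₁ * a))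
  rw [← (hasSum_thetaTerm_mul_tsum_intGeomSum hp hp1 hz₀ hz₁ one_ne_zero ha ha2 hab).tsum_eq]
  simp_rw [hterm]
  rw [Summable.tsum_add (hL.sub hK) hD.summable, hL.tsum_sub hK, tsum_mul_left, tsum_mul_left,
    hD.tsum_eq]
  rfl

end ChangeOfVariable

/-! ### Modulus ten: the functions of the residues modulo 5 -/

/-- The general term `(-1)^r q^{5r(r-1)+kr}` of `θ(q^k; q^5)`. -/
noncomputable def thetaTerm₁₀ (q : ℂ) (k r : ℤ) : ℂ := (-1) ^ r * q ^ (5 * r * (r - 1) + k * r)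

/-- The theta function `θ(q^k; q^5)`, that is `(q^k, q^{10-k}, q^{10}; q^{10})_∞`. -/
noncomputable def theta₁₀ (q : ℂ) (k : ℤ) : ℂ := theta (q ^ 5) (q ^ k)

/-- The Euler derivative of the theta function at `q^k`, with nome `q^5`. -/
noncomputable def thetaDeriv₁₀ (q : ℂ) (k : ℤ) : ℂ := thetaDeriv (q ^ 5) (q ^ k)

/-- The Appell–Lerch sum `∑ (-1)^r q^{5r(r-1)+kr} / (1 - q^{s+10r})`, polar term removed. -/
noncomputable def lerch₁₀ (q : ℂ) (k s : ℤ) : ℂ := lerch (q ^ 5) (q ^ k) (q ^ s)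

/-- Kronecker's series `∑ q^{kn} / (1 - q^{s+10n})`, polar term removed. -/
noncomputable def kronecker₁₀ (q : ℂ) (k s : ℤ) : ℂ := kronecker (q ^ 5) (q ^ k) (q ^ s)

/-- The logarithmic Euler derivative of the theta function at `q^k`, with nome `q^5`. -/
noncomputable def thetaLogDeriv₁₀ (q : ℂ) (k : ℤ) : ℂ := thetaDeriv₁₀ q k / theta₁₀ q k

/-- The common value of `-L(0, -i) θ(q^i; q^5)` for `1 ≤ i ≤ 9`, see `lerch₁₀_zero_neg`; it equals
`(q^{10}; q^{10})_∞^3`. -/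
noncomputable def kappa (q : ℂ) : ℂ := -(lerch₁₀ q 0 (-1) * theta₁₀ q 1)

/-- A nonzero point of the unit disc at which the theta functions of modulus ten do not vanish. -/
structure IsRegular (q : ℂ) : Prop where
  ne_zero : q ≠ 0
  norm_lt_one : ‖q‖ < 1
  theta₁₀_ne_zero : ∀ k : ℤ, 1 ≤ k → k ≤ 9 → theta₁₀ q k ≠ 0

section Series

variable {q : ℂ}

theorem pow_five_zpow (q : ℂ) (m : ℤ) : (q ^ 5) ^ m = q ^ (5 * m) := by
  rw [zpow_mul]; norm_cast

theorem thetaTerm_pow_five (hq : q ≠ 0) (k r : ℤ) :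
    thetaTerm (q ^ 5) (q ^ k) r = thetaTerm₁₀ q k r := by
  rw [thetaTerm, thetaTerm₁₀, pow_five_zpow, neg_eq_neg_one_mul, mul_zpow, ← zpow_mul,
    zpow_add₀ hq, ← mul_assoc 5]
  ring

theorem zpow_mul_pow_five_zpow (hq : q ≠ 0) (s r : ℤ) :
    q ^ s * (q ^ 5) ^ (2 * r) = q ^ (s + 10 * r) := by
  rw [pow_five_zpow, zpow_add₀ hq]; congr 2; ring

theorem theta₁₀_eq_tsum (hq : q ≠ 0) (k : ℤ) : theta₁₀ q k = ∑' r : ℤ, thetaTerm₁₀ q k r := by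
  simp only [theta₁₀, theta, thetaTerm_pow_five hq]

theorem thetaDeriv₁₀_eq_tsum (hq : q ≠ 0) (k : ℤ) :
    thetaDeriv₁₀ q k = ∑' r : ℤ, (r : ℂ) * thetaTerm₁₀ q k r := by
  simp only [thetaDeriv₁₀, thetaDeriv, thetaTerm_pow_five hq]

theorem lerch₁₀_eq_tsum (hq : q ≠ 0) (k s : ℤ) :
    lerch₁₀ q k s = ∑' r : ℤ, thetaTerm₁₀ q k r / (1 - q ^ (s + 10 * r)) := by
  simp only [lerch₁₀, lerch, thetaTerm_pow_five hq, zpow_mul_pow_five_zpow hq]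

theorem norm_pow_five_lt_one (hq1 : ‖q‖ < 1) : ‖q ^ 5‖ < 1 := by
  rw [norm_pow]; exact pow_lt_one₀ (norm_nonneg _) hq1 (by norm_num)

theorem summable_thetaTerm₁₀ (hq : q ≠ 0) (hq1 : ‖q‖ < 1) (k : ℤ) :
    Summable fun r => thetaTerm₁₀ q k r :=
  (summable_thetaTerm (pow_ne_zero 5 hq) (norm_pow_five_lt_one hq1) (zpow_ne_zero k hq)).congr
    (thetaTerm_pow_five hq k)

theorem summable_mul_thetaTerm₁₀ (hq : q ≠ 0) (hq1 : ‖q‖ < 1) (k : ℤ) :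
    Summable fun r : ℤ => (r : ℂ) * thetaTerm₁₀ q k r := by
  simpa only [thetaTerm_pow_five hq] using
    summable_mul_thetaTerm (pow_ne_zero 5 hq) (norm_pow_five_lt_one hq1) (zpow_ne_zero k hq)

theorem summable_lerch₁₀ (hq : q ≠ 0) (hq1 : ‖q‖ < 1) (k s : ℤ) :
    Summable fun r => thetaTerm₁₀ q k r / (1 - q ^ (s + 10 * r)) := by
  simpa only [thetaTerm_pow_five hq, zpow_mul_pow_five_zpow hq] using
    summable_lerch (pow_ne_zero 5 hq) (norm_pow_five_lt_one hq1) (zpow_ne_zero k hq)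
      (zpow_ne_zero s hq)

theorem one_sub_zpow_ne_zero (hq1 : ‖q‖ < 1) {m : ℤ} (hm : m ≠ 0) : 1 - q ^ m ≠ 0 :=
  sub_ne_zero.2 (zpow_ne_one_of_norm_lt_one hq1 hm).symm

end Series

/-! ### Symmetries -/

section Symmetry

variable {q : ℂ}

theorem thetaTerm₁₀_sub_one (hq : q ≠ 0) (k r : ℤ) :
    thetaTerm₁₀ q k (r - 1) = -q ^ (10 - k) * thetaTerm₁₀ q (k - 10) r := by
  unfold thetaTerm₁₀
  rw [show 5 * (r - 1) * (r - 1 - 1) + k * (r - 1)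
      = (10 - k) + (5 * r * (r - 1) + (k - 10) * r) by ring,
    zpow_add₀ hq, zpow_sub_one₀ (neg_ne_zero.2 one_ne_zero), inv_neg_one]
  ring

theorem thetaTerm₁₀_neg_one_sub (hq : q ≠ 0) (k r : ℤ) :
    thetaTerm₁₀ q (-k) (1 - r) = -q ^ (-k) * thetaTerm₁₀ q k r := by
  unfold thetaTerm₁₀
  rw [show 5 * (1 - r) * (1 - r - 1) + -k * (1 - r) = -k + (5 * r * (r - 1) + k * r) by ring,
    zpow_add₀ hq, zpow_sub₀ (neg_ne_zero.2 one_ne_zero), zpow_one, div_eq_mul_inv, ← inv_zpow,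
    inv_neg_one]
  ring

theorem thetaTerm₁₀_neg (q : ℂ) (k r : ℤ) : thetaTerm₁₀ q k (-r) = thetaTerm₁₀ q (10 - k) r := by
  unfold thetaTerm₁₀
  rw [show 5 * (-r) * (-r - 1) + k * (-r) = 5 * r * (r - 1) + (10 - k) * r by ring, zpow_neg,
    ← inv_zpow, inv_neg_one]

theorem thetaTerm₁₀_add_ten (hq : q ≠ 0) (k r : ℤ) :
    thetaTerm₁₀ q (k + 10) r = q ^ (10 * r) * thetaTerm₁₀ q k r := by
  unfold thetaTerm₁₀
  rw [show 5 * r * (r - 1) + (k + 10) * r = 10 * r + (5 * r * (r - 1) + k * r) by ring,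
    zpow_add₀ hq]
  ring

theorem theta₁₀_neg (hq : q ≠ 0) (k : ℤ) : theta₁₀ q (-k) = -q ^ (-k) * theta₁₀ q k := by
  rw [theta₁₀_eq_tsum hq, theta₁₀_eq_tsum hq, ← (Equiv.subLeft (1 : ℤ)).tsum_eq, ← tsum_mul_left]
  exact tsum_congr (thetaTerm₁₀_neg_one_sub hq k)

theorem theta₁₀_ten_sub (hq : q ≠ 0) (k : ℤ) : theta₁₀ q (10 - k) = theta₁₀ q k := by
  rw [theta₁₀_eq_tsum hq, theta₁₀_eq_tsum hq, ← (Equiv.neg ℤ).tsum_eq (thetaTerm₁₀ q k)]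
  exact tsum_congr fun r => (thetaTerm₁₀_neg q k r).symm

theorem theta₁₀_zero (hq : q ≠ 0) : theta₁₀ q 0 = 0 :=
  self_eq_neg.1 (by simpa using theta₁₀_neg hq 0)

theorem thetaDeriv₁₀_neg (hq : q ≠ 0) (hq1 : ‖q‖ < 1) (k : ℤ) :
    thetaDeriv₁₀ q (-k) = -q ^ (-k) * (theta₁₀ q k - thetaDeriv₁₀ q k) := by
  rw [thetaDeriv₁₀_eq_tsum hq, thetaDeriv₁₀_eq_tsum hq, theta₁₀_eq_tsum hq,
    ← (summable_thetaTerm₁₀ hq hq1 k).tsum_sub (summable_mul_thetaTerm₁₀ hq hq1 k),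
    ← (Equiv.subLeft (1 : ℤ)).tsum_eq, ← tsum_mul_left]
  refine tsum_congr fun r => ?_
  rw [Equiv.subLeft_apply, thetaTerm₁₀_neg_one_sub hq]
  push_cast
  ring

theorem thetaDeriv₁₀_ten_sub (hq : q ≠ 0) (k : ℤ) :
    thetaDeriv₁₀ q (10 - k) = -thetaDeriv₁₀ q k := by
  rw [thetaDeriv₁₀_eq_tsum hq, thetaDeriv₁₀_eq_tsum hq, ← (Equiv.neg ℤ).tsum_eq, ← tsum_neg]
  refine tsum_congr fun r => ?_
  rw [Equiv.neg_apply, thetaTerm₁₀_neg, sub_sub_cancel]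
  push_cast
  ring

theorem lerch₁₀_add_ten (hq : q ≠ 0) (k s : ℤ) :
    lerch₁₀ q k (s + 10) = -q ^ (10 - k) * lerch₁₀ q (k - 10) s := by
  rw [lerch₁₀_eq_tsum hq, lerch₁₀_eq_tsum hq, ← (Equiv.subRight (1 : ℤ)).tsum_eq, ← tsum_mul_left]
  refine tsum_congr fun r => ?_
  rw [Equiv.subRight_apply, thetaTerm₁₀_sub_one hq,
    show s + 10 + 10 * (r - 1) = s + 10 * r by ring, mul_div_assoc]

theorem lerch₁₀_neg (hq : q ≠ 0) (k s : ℤ) :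
    lerch₁₀ q k s = -q ^ (-s) * lerch₁₀ q (20 - k) (-s) := by
  rw [lerch₁₀_eq_tsum hq, lerch₁₀_eq_tsum hq, ← (Equiv.neg ℤ).tsum_eq, ← tsum_mul_left]
  refine tsum_congr fun r => ?_
  have hden : 1 - q ^ (s + 10 * -r) = -q ^ (s - 10 * r) * (1 - q ^ (-s + 10 * r)) := by
    have := zpow_ne_zero (s - 10 * r) hq
    rw [show -s + 10 * r = -(s - 10 * r) by ring, zpow_neg,
      show s + 10 * -r = s - 10 * r by ring]
    field_simp
    ring
  have hpow : q ^ (s - 10 * r) = q ^ s / q ^ (10 * r) := zpow_sub₀ hq _ _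
  have := zpow_ne_zero s hq
  have := zpow_ne_zero (10 * r) hq
  rw [Equiv.neg_apply, thetaTerm₁₀_neg, hden, show 20 - k = 10 - k + 10 by ring,
    thetaTerm₁₀_add_ten hq, hpow, zpow_neg]
  rcases eq_or_ne (1 - q ^ (-s + 10 * r)) 0 with h | h
  · simp [h]
  · field_simp

theorem lerch₁₀_neg' (hq : q ≠ 0) (k s : ℤ) :
    lerch₁₀ q k (-s) = q ^ (s + k - 10) * lerch₁₀ q (10 - k) (s - 10) := by
  rw [lerch₁₀_neg hq, neg_neg, ← sub_add_cancel s 10, lerch₁₀_add_ten hq, ← mul_assoc,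
    neg_mul_neg, ← zpow_add₀ hq]
  congr 2 <;> ring_nf

theorem lerch₁₀_eq_theta₁₀_add (hq : q ≠ 0) (hq1 : ‖q‖ < 1) (k : ℤ) {s : ℤ} (hs : ¬10 ∣ s) :
    lerch₁₀ q k s = theta₁₀ q k + q ^ s * lerch₁₀ q (k + 10) s := by
  rw [lerch₁₀_eq_tsum hq, lerch₁₀_eq_tsum hq, theta₁₀_eq_tsum hq, ← tsum_mul_left,
    ← (summable_thetaTerm₁₀ hq hq1 k).tsum_add ((summable_lerch₁₀ hq hq1 (k + 10) s).mul_left _)]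
  refine tsum_congr fun r => ?_
  have := one_sub_zpow_ne_zero hq1 (m := s + 10 * r) (by omega)
  rw [thetaTerm₁₀_add_ten hq]
  field_simp
  rw [zpow_add₀ hq]
  ring

theorem lerch₁₀_zero_right_eq_theta₁₀_add (hq : q ≠ 0) (hq1 : ‖q‖ < 1) (k : ℤ) :
    lerch₁₀ q k 0 = theta₁₀ q k - 1 + lerch₁₀ q (k + 10) 0 := by
  have hθ := summable_thetaTerm₁₀ hq hq1 k
  have hδ := hasSum_ite_eq (0 : ℤ) (1 : ℂ)
  conv_rhs => rw [← hδ.tsum_eq]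
  rw [lerch₁₀_eq_tsum hq, lerch₁₀_eq_tsum hq, theta₁₀_eq_tsum hq, ← hθ.tsum_sub hδ.summable,
    ← (hθ.sub hδ.summable).tsum_add (summable_lerch₁₀ hq hq1 (k + 10) 0)]
  refine tsum_congr fun r => ?_
  rw [thetaTerm₁₀_add_ten hq]
  rcases eq_or_ne r 0 with rfl | hr
  · simp [thetaTerm₁₀]
  · have := one_sub_zpow_ne_zero hq1 (m := 10 * r) (by omega)
    simp only [hr, if_false, zero_add]
    field_simp
    ring

theorem lerch₁₀_zero_zero (hq : q ≠ 0) (hq1 : ‖q‖ < 1) : lerch₁₀ q 0 0 = -1 := by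
  have hten : lerch₁₀ q 10 0 = 0 := self_eq_neg.1 (by simpa using lerch₁₀_neg hq 10 0)
  have h := lerch₁₀_zero_right_eq_theta₁₀_add hq hq1 0
  rwa [theta₁₀_zero hq, zero_add, hten, zero_sub, add_zero] at h

end Symmetry

/-! ### Change of variable in modulus ten -/

section ChangeOfVariable

variable {q : ℂ}

theorem one_lt_norm_zpow_neg (hq : q ≠ 0) (hq1 : ‖q‖ < 1) {k : ℤ} (hk : 1 ≤ k) :
    1 < ‖q ^ (-k)‖ := by
  rw [norm_zpow]; exact one_lt_zpow_of_neg₀ (norm_pos_iff.2 hq) hq1 (by omega)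

theorem norm_zpow_neg_mul_lt_one (hq : q ≠ 0) (hq1 : ‖q‖ < 1) {k : ℤ} (hk : k ≤ 9) :
    ‖q ^ (-k)‖ * ‖q ^ 5‖ ^ 2 < 1 := by
  rw [← norm_pow, ← norm_mul, ← pow_mul, ← zpow_natCast q, ← zpow_add₀ hq, norm_zpow]
  exact zpow_lt_one₀ (norm_pos_iff.2 hq) hq1 (by push_cast; omega)

theorem theta₁₀_mul_lerch₁₀_sub (hq : q ≠ 0) (hq1 : ‖q‖ < 1) (b : ℤ) {i k : ℤ} (hk : 1 ≤ k)
    (hk9 : k ≤ 9) (hi : ¬10 ∣ i) :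
    theta₁₀ q (b - k + i) * lerch₁₀ q b (-i) - theta₁₀ q (b - k) * kronecker₁₀ q k (-i)
      = theta₁₀ q b * lerch₁₀ q (b - k + i) (-k) := by
  have hpole : ∀ n : ℤ, q ^ (-i) * (q ^ 5) ^ (2 * n) ≠ 1 := fun n => by
    rw [zpow_mul_pow_five_zpow hq]
    exact zpow_ne_one_of_norm_lt_one hq1 (by omega)
  have h := theta_mul_lerch_sub (pow_ne_zero 5 hq) (norm_pow_five_lt_one hq1)
    (zpow_ne_zero (b - k + i) hq) (zpow_ne_zero b hq) (zpow_ne_zero (-i) hq)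
    (one_lt_norm_zpow_neg hq hq1 hk) (norm_zpow_neg_mul_lt_one hq hq1 hk9)
    (by rw [← zpow_add₀ hq, ← zpow_add₀ hq]; congr 1; ring) hpole
  rwa [← zpow_add₀ hq, ← zpow_neg, neg_neg] at h

theorem theta₁₀_mul_lerch₁₀_zero_sub (hq : q ≠ 0) (hq1 : ‖q‖ < 1) (b : ℤ) {k : ℤ} (hk : 1 ≤ k)
    (hk9 : k ≤ 9) :
    theta₁₀ q (b - k) * lerch₁₀ q b 0 - theta₁₀ q (b - k) * kronecker₁₀ q k 0
      + thetaDeriv₁₀ q (b - k) = theta₁₀ q b * lerch₁₀ q (b - k) (-k) := by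
  have h := theta_mul_lerch_one_sub (pow_ne_zero 5 hq) (norm_pow_five_lt_one hq1)
    (zpow_ne_zero b hq) (one_lt_norm_zpow_neg hq hq1 hk) (norm_zpow_neg_mul_lt_one hq hq1 hk9)
  rwa [← zpow_add₀ hq, ← zpow_neg, neg_neg, ← zpow_zero q, ← sub_eq_add_neg] at h

namespace IsRegular

theorem theta₁₀_ne_zero' (h : IsRegular q) {k : ℤ} (hk : k ≠ 0) (hk1 : -9 ≤ k) (hk9 : k ≤ 9) :
    theta₁₀ q k ≠ 0 := by
  rcases hk.lt_or_gt with hneg | hpos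
  · rw [← neg_neg k, theta₁₀_neg h.ne_zero]
    exact mul_ne_zero (neg_ne_zero.mpr (zpow_ne_zero _ h.ne_zero))
      (h.theta₁₀_ne_zero _ (by omega) (by omega))
  · exact h.theta₁₀_ne_zero _ (by omega) hk9

theorem kronecker₁₀_antisymm (h : IsRegular q) {i k : ℤ} (hk : 1 ≤ k) (hk9 : k ≤ 9) (hi : 1 ≤ i)
    (hi9 : i ≤ 9) : kronecker₁₀ q k (-i) = -kronecker₁₀ q i (-k) := by
  have hki := theta₁₀_mul_lerch₁₀_sub h.ne_zero h.norm_lt_one (k + 1) (i := i) hk hk9 (by omega)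
  have hik := theta₁₀_mul_lerch₁₀_sub h.ne_zero h.norm_lt_one (i + 1) (i := k) hi hi9 (by omega)
  rw [show k + 1 - k + i = i + 1 by ring, show k + 1 - k = 1 by ring] at hki
  rw [show i + 1 - i + k = k + 1 by ring, show i + 1 - i = 1 by ring] at hik
  refine eq_neg_of_add_eq_zero_left ((mul_eq_zero.1 ?_).resolve_left
    (h.theta₁₀_ne_zero 1 le_rfl (by norm_num)))
  linear_combination -hki - hik

theorem kronecker₁₀_eq (h : IsRegular q) {i k : ℤ} (hk : 1 ≤ k) (hk9 : k ≤ 9) (hi : 1 ≤ i)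
    (hi9 : i ≤ 9) :
    kronecker₁₀ q k (-i) = -q ^ k * theta₁₀ q (i - k) * lerch₁₀ q 0 (-i) / theta₁₀ q k := by
  have hcv := theta₁₀_mul_lerch₁₀_sub h.ne_zero h.norm_lt_one 0 (i := i) hk hk9 (by omega)
  rw [theta₁₀_zero h.ne_zero, show 0 - k + i = i - k by ring, zero_sub, theta₁₀_neg h.ne_zero,
    zpow_neg] at hcv
  have := h.theta₁₀_ne_zero k hk hk9
  have := zpow_ne_zero k h.ne_zero
  field_simp at hcv ⊢
  linear_combination hcv

theorem lerch₁₀_zero_neg (h : IsRegular q) {i : ℤ} (hi : 1 ≤ i) (hi9 : i ≤ 9) :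
    lerch₁₀ q 0 (-i) = -kappa q / theta₁₀ q i := by
  have hq := h.ne_zero
  have hθ1 := h.theta₁₀_ne_zero 1 le_rfl (by norm_num)
  rcases hi.eq_or_lt with rfl | hlt
  · unfold kappa; field_simp
  have hanti := h.kronecker₁₀_antisymm le_rfl (by norm_num : (1 : ℤ) ≤ 9) hi hi9
  rw [h.kronecker₁₀_eq le_rfl (by norm_num) hi hi9, h.kronecker₁₀_eq hi hi9 le_rfl (by norm_num),
    ← neg_sub i 1, theta₁₀_neg hq, neg_sub, zpow_sub₀ hq, zpow_one] at hanti
  have := h.theta₁₀_ne_zero i hi hi9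
  have := h.theta₁₀_ne_zero (i - 1) (by omega) (by omega)
  have := zpow_ne_zero i hq
  unfold kappa
  field_simp at hanti ⊢
  linear_combination -hanti

theorem lerch₁₀_ten_neg (h : IsRegular q) {i : ℤ} (hi : 1 ≤ i) (hi9 : i ≤ 9) :
    lerch₁₀ q 10 (-i) = -q ^ i * kappa q / theta₁₀ q i := by
  have hgeom := lerch₁₀_eq_theta₁₀_add h.ne_zero h.norm_lt_one 0 (s := -i) (by omega)
  rw [theta₁₀_zero h.ne_zero, h.lerch₁₀_zero_neg hi hi9, zpow_neg, zero_add, zero_add] at hgeom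
  have := h.theta₁₀_ne_zero i hi hi9
  have := zpow_ne_zero i h.ne_zero
  field_simp at hgeom ⊢
  linear_combination -hgeom

theorem theta₁₀_mul_lerch₁₀_sub_comm (h : IsRegular q) (b : ℤ) {i k : ℤ} (hk : 1 ≤ k)
    (hk9 : k ≤ 9) (hi : 1 ≤ i) (hi9 : i ≤ 9) :
    theta₁₀ q (b - k + i) * lerch₁₀ q b (-i) - theta₁₀ q b * lerch₁₀ q (b - k + i) (-k)
      = kappa q * q ^ k * theta₁₀ q (b - k) * theta₁₀ q (i - k)
        / (theta₁₀ q i * theta₁₀ q k) := by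
  have hcv := theta₁₀_mul_lerch₁₀_sub h.ne_zero h.norm_lt_one b (i := i) hk hk9 (by omega)
  rw [h.kronecker₁₀_eq hk hk9 hi hi9, h.lerch₁₀_zero_neg hi hi9] at hcv
  have := h.theta₁₀_ne_zero i hi hi9
  have := h.theta₁₀_ne_zero k hk hk9
  field_simp at hcv ⊢
  linear_combination hcv

theorem thetaLogDeriv₁₀_neg (h : IsRegular q) {k : ℤ} (hk : 1 ≤ k) (hk9 : k ≤ 9) :
    thetaLogDeriv₁₀ q (-k) = 1 - thetaLogDeriv₁₀ q k := by
  have := h.theta₁₀_ne_zero k hk hk9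
  have := zpow_ne_zero (-k) h.ne_zero
  rw [thetaLogDeriv₁₀, thetaLogDeriv₁₀, thetaDeriv₁₀_neg h.ne_zero h.norm_lt_one,
    theta₁₀_neg h.ne_zero]
  field_simp

theorem thetaLogDeriv₁₀_ten_sub (h : IsRegular q) (k : ℤ) :
    thetaLogDeriv₁₀ q (10 - k) = -thetaLogDeriv₁₀ q k := by
  rw [thetaLogDeriv₁₀, thetaLogDeriv₁₀, thetaDeriv₁₀_ten_sub h.ne_zero, theta₁₀_ten_sub h.ne_zero,
    neg_div]

theorem kronecker₁₀_zero (h : IsRegular q) {k : ℤ} (hk : 1 ≤ k) (hk9 : k ≤ 9) :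
    kronecker₁₀ q k 0 = -thetaLogDeriv₁₀ q k := by
  have hcv := theta₁₀_mul_lerch₁₀_zero_sub h.ne_zero h.norm_lt_one 0 hk hk9
  rw [lerch₁₀_zero_zero h.ne_zero h.norm_lt_one, theta₁₀_zero h.ne_zero, zero_sub] at hcv
  have := h.theta₁₀_ne_zero' (k := -k) (by omega) (by omega) (by omega)
  have hsub : kronecker₁₀ q k 0 = thetaLogDeriv₁₀ q (-k) - 1 := by
    unfold thetaLogDeriv₁₀
    field_simp
    linear_combination -hcv
  rw [hsub, h.thetaLogDeriv₁₀_neg hk hk9]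
  ring

theorem lerch₁₀_zero_right (h : IsRegular q) {b k : ℤ} (hk : 1 ≤ k) (hk9 : k ≤ 9) (hb : b ≠ k)
    (hb1 : -9 ≤ b - k) (hb9 : b - k ≤ 9) :
    lerch₁₀ q b 0 = theta₁₀ q b * lerch₁₀ q (b - k) (-k) / theta₁₀ q (b - k)
      - thetaLogDeriv₁₀ q k - thetaLogDeriv₁₀ q (b - k) := by
  have hcv := theta₁₀_mul_lerch₁₀_zero_sub h.ne_zero h.norm_lt_one b hk hk9
  rw [h.kronecker₁₀_zero hk hk9] at hcv
  have := h.theta₁₀_ne_zero' (k := b - k) (by omega) hb1 hb9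
  have := h.theta₁₀_ne_zero k hk hk9
  unfold thetaLogDeriv₁₀ at hcv ⊢
  field_simp at hcv ⊢
  linear_combination hcv

end IsRegular

end ChangeOfVariable

/-! ### The linear system for the 5-dissection -/

section Components

variable (q : ℂ)

/-- The component `∑ (N̄(0,5,5m) - N̄(2,5,5m)) q^m` of the rank difference, in closed form. -/
noncomputable def rankDiff₀ : ℂ :=
  kappa q * (1 / (theta₁₀ q 1 * theta₁₀ q 2) - q / (theta₁₀ q 3 * theta₁₀ q 4))

/-- The component `∑ (N̄(0,5,5m+1) - N̄(2,5,5m+1)) q^m` of the rank difference, in closed form. The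
component of the residue `2` vanishes. -/
noncomputable def rankDiff₁ : ℂ :=
  -2 / q * (lerch₁₀ q 1 (-8) / theta₁₀ q 1 + lerch₁₀ q 2 (-7) / theta₁₀ q 2)

/-- The component `∑ (N̄(0,5,5m+3) - N̄(2,5,5m+3)) q^m` of the rank difference, in closed form. -/
noncomputable def rankDiff₃ : ℂ := 2 * kappa q / (theta₁₀ q 2 * theta₁₀ q 3)

/-- The component `∑ (N̄(0,5,5m+4) - N̄(2,5,5m+4)) q^m` of the rank difference, in closed form. -/
noncomputable def rankDiff₄ : ℂ := 2 / q * lerch₁₀ q 3 (-4) / theta₁₀ q 3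

/-- The component of the residue `0` in the 5-dissection of the Lambert series
`1 + 4 S(1) - 2 S(2)`, where `S(b) = ∑_{n ≠ 0} (-1)^n x^{n²+bn} / (1 - x^{5n})` and `q = x^5`. -/
noncomputable def lambert₀ : ℂ :=
  1 + 4 * (lerch₁₀ q 6 0 + lerch₁₀ q 11 0 - lerch₁₀ q 4 (-2) - lerch₁₀ q 9 (-2) / q)
    - 2 * (lerch₁₀ q 7 0 + lerch₁₀ q 12 0 + lerch₁₀ q 3 (-4) + lerch₁₀ q 8 (-4) / q ^ 2)

/-- The component of the residue `1` in the 5-dissection of `1 + 4 S(1) - 2 S(2)`. -/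
noncomputable def lambert₁ : ℂ := 4 * q * (lerch₁₀ q 10 4 + q ^ 2 * lerch₁₀ q 15 4)

/-- The component of the residue `2` in the 5-dissection of `1 + 4 S(1) - 2 S(2)`. -/
noncomputable def lambert₂ : ℂ :=
  4 * (-lerch₁₀ q 8 2 - q * lerch₁₀ q 13 2 + lerch₁₀ q 2 (-4) + lerch₁₀ q 7 (-4) / q ^ 2)

/-- The component of the residue `3` in the 5-dissection of `1 + 4 S(1) - 2 S(2)`. -/
noncomputable def lambert₃ : ℂ :=
  2 * (lerch₁₀ q 9 2 + q * lerch₁₀ q 14 2 + lerch₁₀ q 1 (-6) + lerch₁₀ q 6 (-6) / q ^ 3)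

/-- The component of the residue `4` in the 5-dissection of `1 + 4 S(1) - 2 S(2)`. -/
noncomputable def lambert₄ : ℂ := 2 / q * (lerch₁₀ q 5 (-2) + lerch₁₀ q 10 (-2) / q)

end Components

namespace IsRegular

variable {q : ℂ}

local notation "θ" => theta₁₀ q
local notation "𝓛" => lerch₁₀ q
local notation "ℓ" => thetaLogDeriv₁₀ q
local notation "κ" => kappa q

theorem theta₁₀_one_to_five_ne_zero (h : IsRegular q) :
    θ 1 ≠ 0 ∧ θ 2 ≠ 0 ∧ θ 3 ≠ 0 ∧ θ 4 ≠ 0 ∧ θ 5 ≠ 0 := by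
  refine ⟨?_, ?_, ?_, ?_, ?_⟩ <;> exact h.theta₁₀_ne_zero _ (by norm_num) (by norm_num)

theorem theta₁₀_six (h : IsRegular q) : θ 6 = θ 4 := theta₁₀_ten_sub h.ne_zero 4
theorem theta₁₀_seven (h : IsRegular q) : θ 7 = θ 3 := theta₁₀_ten_sub h.ne_zero 3
theorem theta₁₀_eight (h : IsRegular q) : θ 8 = θ 2 := theta₁₀_ten_sub h.ne_zero 2
theorem theta₁₀_nine (h : IsRegular q) : θ 9 = θ 1 := theta₁₀_ten_sub h.ne_zero 1

theorem lerch₁₀_one_neg_eight_eq_five (h : IsRegular q) :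
    𝓛 1 (-8) = θ 1 / θ 5 * 𝓛 5 (-4) - κ * q * θ 3 / (θ 2 * θ 5) := by
  have hcv := h.theta₁₀_mul_lerch₁₀_sub_comm 1 (i := 8) (k := 4) (by norm_num) (by norm_num)
    (by norm_num) (by norm_num)
  norm_num [h.theta₁₀_eight, theta₁₀_neg h.ne_zero, zpow_ofNat, zpow_neg] at hcv
  obtain ⟨_, _, _, _, _⟩ := h.theta₁₀_one_to_five_ne_zero
  have := h.ne_zero
  field_simp at hcv ⊢
  linear_combination hcv

theorem lerch₁₀_two_neg_seven_eq_five (h : IsRegular q) :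
    𝓛 2 (-7) = θ 2 / θ 5 * 𝓛 5 (-4) - κ * q ^ 2 * θ 2 / (θ 4 * θ 5) := by
  have hcv := h.theta₁₀_mul_lerch₁₀_sub_comm 2 (i := 7) (k := 4) (by norm_num) (by norm_num)
    (by norm_num) (by norm_num)
  norm_num [h.theta₁₀_seven, theta₁₀_neg h.ne_zero, zpow_ofNat, zpow_neg] at hcv
  obtain ⟨_, _, _, _, _⟩ := h.theta₁₀_one_to_five_ne_zero
  have := h.ne_zero
  field_simp at hcv ⊢
  linear_combination hcv

theorem lerch₁₀_three_neg_four_eq_five (h : IsRegular q) :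
    𝓛 3 (-4) = θ 3 / θ 5 * 𝓛 5 (-2) + κ * q ^ 2 * θ 1 / (θ 4 * θ 5) := by
  have hcv := h.theta₁₀_mul_lerch₁₀_sub_comm 3 (i := 4) (k := 2) (by norm_num) (by norm_num)
    (by norm_num) (by norm_num)
  norm_num [zpow_ofNat] at hcv
  obtain ⟨_, _, _, _, _⟩ := h.theta₁₀_one_to_five_ne_zero
  field_simp at hcv ⊢
  linear_combination hcv

theorem lerch₁₀_three_neg_four_eq_neg_one (h : IsRegular q) :
    𝓛 3 (-4) = -q * θ 3 / θ 1 * 𝓛 (-1) (-8) - κ * θ 5 / (θ 2 * θ 1) := by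
  have hcv := h.theta₁₀_mul_lerch₁₀_sub_comm (-1) (i := 8) (k := 4) (by norm_num) (by norm_num)
    (by norm_num) (by norm_num)
  norm_num [h.theta₁₀_eight, theta₁₀_neg h.ne_zero, zpow_ofNat, zpow_neg] at hcv
  obtain ⟨_, _, _, _, _⟩ := h.theta₁₀_one_to_five_ne_zero
  have := h.ne_zero
  field_simp at hcv ⊢
  linear_combination hcv

theorem lerch₁₀_four_neg_four_eq_six (h : IsRegular q) :
    𝓛 4 (-4) = 𝓛 6 (-2) + κ * q ^ 2 * θ 2 / θ 4 ^ 2 := by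
  have hcv := h.theta₁₀_mul_lerch₁₀_sub_comm 4 (i := 4) (k := 2) (by norm_num) (by norm_num)
    (by norm_num) (by norm_num)
  norm_num [h.theta₁₀_six, zpow_ofNat] at hcv
  obtain ⟨_, _, _, _, _⟩ := h.theta₁₀_one_to_five_ne_zero
  field_simp at hcv ⊢
  linear_combination hcv

theorem lerch₁₀_one_neg_six_eq_neg_one (h : IsRegular q) :
    𝓛 1 (-6) = -q * 𝓛 (-1) (-8) - κ * θ 3 / (θ 1 * θ 4) := by
  have hcv := h.theta₁₀_mul_lerch₁₀_sub_comm (-1) (i := 8) (k := 6) (by norm_num) (by norm_num)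
    (by norm_num) (by norm_num)
  norm_num [h.theta₁₀_six, h.theta₁₀_seven, h.theta₁₀_eight, theta₁₀_neg h.ne_zero, zpow_ofNat,
    zpow_neg] at hcv
  obtain ⟨_, _, _, _, _⟩ := h.theta₁₀_one_to_five_ne_zero
  have := h.ne_zero
  field_simp at hcv ⊢
  linear_combination hcv

theorem lerch₁₀_two_neg_two_eq_neg_two (h : IsRegular q) :
    𝓛 2 (-2) = -q ^ 2 * 𝓛 (-2) (-6) - κ * θ 4 / θ 2 ^ 2 := by
  have hcv := h.theta₁₀_mul_lerch₁₀_sub_comm 2 (i := 2) (k := 6) (by norm_num) (by norm_num)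
    (by norm_num) (by norm_num)
  norm_num [h.theta₁₀_six, theta₁₀_neg h.ne_zero, zpow_ofNat, zpow_neg] at hcv
  obtain ⟨_, _, _, _, _⟩ := h.theta₁₀_one_to_five_ne_zero
  have := h.ne_zero
  field_simp at hcv ⊢
  linear_combination -hcv

theorem lerch₁₀_seven_neg_two_eq_three (h : IsRegular q) :
    𝓛 7 (-2) = 𝓛 3 (-6) - κ * q ^ 2 * θ 1 / (θ 2 * θ 3) := by
  have hcv := h.theta₁₀_mul_lerch₁₀_sub_comm 7 (i := 2) (k := 6) (by norm_num) (by norm_num)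
    (by norm_num) (by norm_num)
  norm_num [h.theta₁₀_six, h.theta₁₀_seven, theta₁₀_neg h.ne_zero, zpow_ofNat, zpow_neg] at hcv
  obtain ⟨_, _, _, _, _⟩ := h.theta₁₀_one_to_five_ne_zero
  have := h.ne_zero
  field_simp at hcv ⊢
  linear_combination hcv

theorem lerch₁₀_one_neg_eight_eq_three (h : IsRegular q) :
    𝓛 1 (-8) = θ 1 / θ 3 * 𝓛 3 (-6) - κ * q * θ 5 / (θ 3 * θ 4) := by
  have hcv := h.theta₁₀_mul_lerch₁₀_sub_comm 1 (i := 8) (k := 6) (by norm_num) (by norm_num)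
    (by norm_num) (by norm_num)
  norm_num [h.theta₁₀_six, h.theta₁₀_eight, theta₁₀_neg h.ne_zero, zpow_ofNat, zpow_neg] at hcv
  obtain ⟨_, _, _, _, _⟩ := h.theta₁₀_one_to_five_ne_zero
  have := h.ne_zero
  field_simp at hcv ⊢
  linear_combination hcv

theorem lerch₁₀_two_neg_seven_eq_three (h : IsRegular q) :
    𝓛 2 (-7) = θ 2 / θ 3 * 𝓛 3 (-6) - κ * q ^ 2 * θ 1 / θ 3 ^ 2 := by
  have hcv := h.theta₁₀_mul_lerch₁₀_sub_comm 2 (i := 7) (k := 6) (by norm_num) (by norm_num)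
    (by norm_num) (by norm_num)
  norm_num [h.theta₁₀_six, h.theta₁₀_seven, theta₁₀_neg h.ne_zero, zpow_ofNat, zpow_neg] at hcv
  obtain ⟨_, _, _, _, _⟩ := h.theta₁₀_one_to_five_ne_zero
  have := h.ne_zero
  field_simp at hcv ⊢
  linear_combination hcv

theorem lerch₁₀_four_neg_one_eq_two (h : IsRegular q) :
    𝓛 4 (-1) = θ 4 / θ 2 * 𝓛 2 (-3) - κ * q / θ 3 := by
  have hcv := h.theta₁₀_mul_lerch₁₀_sub_comm 4 (i := 1) (k := 3) (by norm_num) (by norm_num)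
    (by norm_num) (by norm_num)
  norm_num [theta₁₀_neg h.ne_zero, zpow_ofNat, zpow_neg] at hcv
  obtain ⟨_, _, _, _, _⟩ := h.theta₁₀_one_to_five_ne_zero
  have := h.ne_zero
  field_simp at hcv ⊢
  linear_combination hcv

theorem lerch₁₀_four_neg_one_eq_neg_two (h : IsRegular q) :
    𝓛 4 (-1) = -q ^ 2 * θ 4 / θ 2 * 𝓛 (-2) (-7) - κ * θ 4 / (θ 1 * θ 2) := by
  have hcv := h.theta₁₀_mul_lerch₁₀_sub_comm 4 (i := 1) (k := 7) (by norm_num) (by norm_num)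
    (by norm_num) (by norm_num)
  norm_num [h.theta₁₀_six, h.theta₁₀_seven, theta₁₀_neg h.ne_zero, zpow_ofNat, zpow_neg] at hcv
  obtain ⟨_, _, _, _, _⟩ := h.theta₁₀_one_to_five_ne_zero
  have := h.ne_zero
  field_simp at hcv ⊢
  linear_combination -hcv

-- This relation and the next express one Appell–Lerch sum in two ways: the sums cancel.
theorem kappa_mul_theta₁₀_relation_three_four (h : IsRegular q) :
    κ * (θ 1 * θ 4 ^ 2 * θ 5 + q * θ 1 * θ 2 ^ 2 * θ 3) = κ * (θ 2 * θ 3 ^ 2 * θ 4) := by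
  have hcv := h.theta₁₀_mul_lerch₁₀_sub_comm 1 (i := 6) (k := 4) (by norm_num) (by norm_num)
    (by norm_num) (by norm_num)
  norm_num [h.theta₁₀_six, theta₁₀_neg h.ne_zero, zpow_ofNat, zpow_neg,
    h.lerch₁₀_one_neg_six_eq_neg_one, h.lerch₁₀_three_neg_four_eq_neg_one] at hcv
  obtain ⟨_, _, _, _, _⟩ := h.theta₁₀_one_to_five_ne_zero
  have := h.ne_zero
  field_simp at hcv
  linear_combination hcv

theorem kappa_mul_theta₁₀_relation_two_five (h : IsRegular q) :
    κ * (θ 1 * θ 3 * θ 4 ^ 2 + q * θ 1 ^ 2 * θ 2 * θ 4) = κ * (θ 2 ^ 2 * θ 3 * θ 5) := by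
  have hcv := h.theta₁₀_mul_lerch₁₀_sub_comm 1 (i := 8) (k := 7) (by norm_num) (by norm_num)
    (by norm_num) (by norm_num)
  norm_num [h.theta₁₀_six, h.theta₁₀_seven, h.theta₁₀_eight, theta₁₀_neg h.ne_zero, zpow_ofNat,
    zpow_neg, h.lerch₁₀_one_neg_eight_eq_three, h.lerch₁₀_two_neg_seven_eq_three] at hcv
  obtain ⟨_, _, _, _, _⟩ := h.theta₁₀_one_to_five_ne_zero
  have := h.ne_zero
  field_simp at hcv
  refine mul_left_cancel₀ h.ne_zero ?_
  linear_combination hcv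

theorem thetaLogDeriv₁₀_relation_sub (h : IsRegular q) :
    ℓ 1 + ℓ 4 - ℓ 3 - ℓ 2 = -κ * q * θ 5 / (θ 3 * θ 4) := by
  have hone := h.lerch₁₀_zero_right (b := 5) (k := 1) (by norm_num) (by norm_num) (by norm_num)
    (by norm_num) (by norm_num)
  have hthree := h.lerch₁₀_zero_right (b := 5) (k := 3) (by norm_num) (by norm_num) (by norm_num)
    (by norm_num) (by norm_num)
  norm_num [h.lerch₁₀_four_neg_one_eq_two] at hone hthree
  obtain ⟨_, _, _, _, _⟩ := h.theta₁₀_one_to_five_ne_zero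
  have hexpand : θ 5 * (θ 4 / θ 2 * 𝓛 2 (-3) - κ * q / θ 3) / θ 4
      = θ 5 * 𝓛 2 (-3) / θ 2 - κ * q * θ 5 / (θ 3 * θ 4) := by field_simp
  linear_combination hone - hthree + hexpand

theorem thetaLogDeriv₁₀_relation_add (h : IsRegular q) :
    ℓ 1 + ℓ 4 + ℓ 3 + ℓ 2 - 1 = -κ * θ 5 / (θ 1 * θ 2) := by
  have hone := h.lerch₁₀_zero_right (b := 5) (k := 1) (by norm_num) (by norm_num) (by norm_num)
    (by norm_num) (by norm_num)
  have hseven := h.lerch₁₀_zero_right (b := 5) (k := 7) (by norm_num) (by norm_num) (by norm_num)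
    (by norm_num) (by norm_num)
  have hℓ7 : ℓ 7 = -ℓ 3 := h.thetaLogDeriv₁₀_ten_sub 3
  have hℓ2 : ℓ (-2) = 1 - ℓ 2 := h.thetaLogDeriv₁₀_neg (by norm_num) (by norm_num)
  norm_num [h.lerch₁₀_four_neg_one_eq_neg_two, theta₁₀_neg h.ne_zero, zpow_ofNat, zpow_neg, hℓ7,
    hℓ2] at hone hseven
  obtain ⟨_, _, _, _, _⟩ := h.theta₁₀_one_to_five_ne_zero
  have := h.ne_zero
  have hexpand : θ 5 * (-(q ^ 2 * θ 4) / θ 2 * 𝓛 (-2) (-7) - κ * θ 4 / (θ 1 * θ 2)) / θ 4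
      = θ 5 * 𝓛 (-2) (-7) / -((q ^ 2)⁻¹ * θ 2) - κ * θ 5 / (θ 1 * θ 2) := by
    field_simp
  linear_combination hone - hseven + hexpand

theorem theta₁₀_mul_rankDiff₀ (h : IsRegular q) : θ 5 * rankDiff₀ q = 1 - 2 * ℓ 2 - 2 * ℓ 3 := by
  unfold rankDiff₀
  linear_combination h.thetaLogDeriv₁₀_relation_add - h.thetaLogDeriv₁₀_relation_sub

theorem lambert₀_eq (h : IsRegular q) :
    θ 5 * rankDiff₀ q - 2 * q * θ 3 * rankDiff₄ q + 2 * q * θ 1 * rankDiff₁ q = lambert₀ q := by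
  have f1 := lerch₁₀_neg h.ne_zero 11 0
  have f2 := lerch₁₀_neg h.ne_zero 12 0
  have f3 := lerch₁₀_neg' h.ne_zero 9 2
  have f4 := lerch₁₀_neg' h.ne_zero 8 4
  have l6 := h.lerch₁₀_zero_right (b := 6) (k := 2) (by norm_num) (by norm_num) (by norm_num)
    (by norm_num) (by norm_num)
  have l7 := h.lerch₁₀_zero_right (b := 7) (k := 4) (by norm_num) (by norm_num) (by norm_num)
    (by norm_num) (by norm_num)
  have l8 := h.lerch₁₀_zero_right (b := 8) (k := 6) (by norm_num) (by norm_num) (by norm_num)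
    (by norm_num) (by norm_num)
  have l9 := h.lerch₁₀_zero_right (b := 9) (k := 7) (by norm_num) (by norm_num) (by norm_num)
    (by norm_num) (by norm_num)
  have hℓ6 : ℓ 6 = -ℓ 4 := h.thetaLogDeriv₁₀_ten_sub 4
  have hℓ7 : ℓ 7 = -ℓ 3 := h.thetaLogDeriv₁₀_ten_sub 3
  norm_num [h.theta₁₀_six, h.theta₁₀_seven, h.theta₁₀_eight, h.theta₁₀_nine, zpow_ofNat, zpow_neg,
    hℓ6, hℓ7] at f1 f2 f3 f4 l6 l7 l8 l9
  obtain ⟨_, _, _, _, _⟩ := h.theta₁₀_one_to_five_ne_zero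
  have := h.ne_zero
  rw [h.theta₁₀_mul_rankDiff₀, rankDiff₄, rankDiff₁, lambert₀, f1, f2, f3, f4, l7, l6, l9, l8]
  field_simp
  ring

theorem lambert₁_eq (h : IsRegular q) :
    θ 5 * rankDiff₁ q - 2 * θ 3 * rankDiff₀ q = lambert₁ q := by
  have f1 := lerch₁₀_neg h.ne_zero 10 4
  have f2 := lerch₁₀_neg h.ne_zero 15 4
  have f3 := h.lerch₁₀_ten_neg (i := 4) (by norm_num) (by norm_num)
  norm_num [zpow_ofNat, zpow_neg] at f1 f2 f3
  rw [rankDiff₁, rankDiff₀, lambert₁, f1, f2, f3, h.lerch₁₀_one_neg_eight_eq_five,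
    h.lerch₁₀_two_neg_seven_eq_five]
  obtain ⟨_, _, _, _, _⟩ := h.theta₁₀_one_to_five_ne_zero
  have := h.ne_zero
  field_simp
  ring

theorem lambert₂_eq (h : IsRegular q) :
    -2 * θ 3 * rankDiff₁ q + 2 * q * θ 1 * rankDiff₃ q = lambert₂ q := by
  have f1 := lerch₁₀_neg h.ne_zero 8 2
  have f2 := lerch₁₀_eq_theta₁₀_add h.ne_zero h.norm_lt_one 2 (s := -2) (by norm_num)
  have f3 := lerch₁₀_eq_theta₁₀_add h.ne_zero h.norm_lt_one 2 (s := -4) (by norm_num)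
  have f4 := lerch₁₀_neg h.ne_zero 13 2
  have f5 := lerch₁₀_neg' h.ne_zero 7 4
  have f6 := lerch₁₀_neg' h.ne_zero 12 4
  norm_num [zpow_ofNat, zpow_neg] at f1 f2 f3 f4 f5 f6
  obtain ⟨_, _, _, _, _⟩ := h.theta₁₀_one_to_five_ne_zero
  have := h.ne_zero
  have f7 : 𝓛 12 (-2) = q ^ 2 * (𝓛 2 (-2) - θ 2) := by rw [f2]; field_simp; ring
  rw [rankDiff₁, rankDiff₃, lambert₂, f1, f7, h.lerch₁₀_two_neg_two_eq_neg_two, f3, f6, f4, f5,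
    h.lerch₁₀_seven_neg_two_eq_three, h.lerch₁₀_one_neg_eight_eq_three,
    h.lerch₁₀_two_neg_seven_eq_three]
  field_simp
  linear_combination 4 * q * h.kappa_mul_theta₁₀_relation_two_five

theorem lambert₃_eq (h : IsRegular q) :
    θ 5 * rankDiff₃ q + 2 * q * θ 1 * rankDiff₄ q = lambert₃ q := by
  have f1 := lerch₁₀_neg h.ne_zero 9 2
  have f2 := lerch₁₀_neg' h.ne_zero 11 2
  have f3 := lerch₁₀_neg h.ne_zero 14 2
  have f4 := lerch₁₀_neg' h.ne_zero 6 6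
  norm_num [zpow_ofNat, zpow_neg] at f1 f2 f3 f4
  rw [rankDiff₃, rankDiff₄, lambert₃, f1, f3, f4, f2, h.lerch₁₀_four_neg_four_eq_six,
    h.lerch₁₀_one_neg_six_eq_neg_one, h.lerch₁₀_three_neg_four_eq_neg_one]
  obtain ⟨_, _, _, _, _⟩ := h.theta₁₀_one_to_five_ne_zero
  have := h.ne_zero
  field_simp
  linear_combination -q * h.kappa_mul_theta₁₀_relation_three_four

theorem lambert₄_eq (h : IsRegular q) :
    θ 5 * rankDiff₄ q - 2 * θ 3 * rankDiff₃ q + 2 * θ 1 * rankDiff₀ q = lambert₄ q := by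
  have f1 := h.lerch₁₀_ten_neg (i := 2) (by norm_num) (by norm_num)
  norm_num [zpow_ofNat] at f1
  rw [rankDiff₄, rankDiff₃, rankDiff₀, lambert₄, f1, h.lerch₁₀_three_neg_four_eq_five]
  obtain ⟨_, _, _, _, _⟩ := h.theta₁₀_one_to_five_ne_zero
  have := h.ne_zero
  field_simp
  ring

end IsRegular

/-! ### The 5-dissection -/

theorem hasSum_of_forall_residue {α : Type*} [AddCommMonoid α] [TopologicalSpace α]
    [ContinuousAdd α] {N : ℕ} [NeZero N] {f : ℤ → α} {a : Fin N → α}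
    (h : ∀ j : Fin N, HasSum (fun m : ℤ => f (N * m + j)) (a j)) : HasSum f (∑ j, a j) := by
  classical
  have hresidue (j : Fin N) :
      HasSum (fun n => if (Int.divModEquiv N n).2 = j then f n else 0) (a j) := by
    have hinj : Function.Injective fun m : ℤ => (Int.divModEquiv N).symm (m, j) :=
      (Int.divModEquiv N).symm.injective.comp fun _ _ h => (Prod.mk.inj h).1
    rw [← hinj.hasSum_iff]
    · simp_rw [Function.comp_def, Equiv.apply_symm_apply, if_true]
      simpa [mul_comm] using h j
    · intro n hn
      refine if_neg fun hj => hn ⟨(Int.divModEquiv N n).1, ?_⟩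
      rw [← hj]
      exact (Int.divModEquiv N).symm_apply_apply n
  simpa using hasSum_sum fun j (_ : j ∈ Finset.univ) => hresidue j

/-- The theta function `φ(-x) = ∑ (-1)^n x^{n²}`. -/
noncomputable def phi (x : ℂ) : ℂ := ∑' n : ℤ, (-1) ^ n * x ^ (n * n)

/-- The general term of the Lambert series `S(b)`; the term `n = 0` is `1 / 0 = 0`. -/
noncomputable def lambertTerm (x : ℂ) (b n : ℤ) : ℂ :=
  (-1) ^ n * x ^ (n * n + b * n) / (1 - x ^ (5 * n))

/-- The Lambert series `S(b) = ∑_{n ≠ 0} (-1)^n x^{n²+bn} / (1 - x^{5n})`. -/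
noncomputable def lambert (x : ℂ) (b : ℤ) : ℂ := ∑' n, lambertTerm x b n

/-- The generating function `∑ (N̄(0,5,n) - N̄(2,5,n)) x^n`, assembled from its five components. -/
noncomputable def rankDiff (x : ℂ) : ℂ :=
  rankDiff₀ (x ^ 5) + x * rankDiff₁ (x ^ 5) + x ^ 3 * rankDiff₃ (x ^ 5) + x ^ 4 * rankDiff₄ (x ^ 5)

section Dissection

variable {x : ℂ}

theorem zpow_residue_five (hx : x ≠ 0) (b j m : ℤ) :
    (-1) ^ (5 * m + j) * x ^ ((5 * m + j) * (5 * m + j) + b * (5 * m + j))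
      = (-1) ^ j * x ^ (j * j + b * j) * thetaTerm₁₀ (x ^ 5) (5 + 2 * j + b) m := by
  rw [thetaTerm₁₀, pow_five_zpow, zpow_add₀ (by norm_num),
    show (5 * m + j) * (5 * m + j) + b * (5 * m + j)
      = (j * j + b * j) + 5 * (5 * m * (m - 1) + (5 + 2 * j + b) * m) by ring,
    zpow_add₀ hx, zpow_mul (-1) 5 m]
  norm_num
  ring

theorem hasSum_phi (hx : x ≠ 0) (hx1 : ‖x‖ < 1) :
    HasSum (fun n : ℤ => (-1) ^ n * x ^ (n * n))
      (theta₁₀ (x ^ 5) 5 - 2 * x * theta₁₀ (x ^ 5) 3 + 2 * x ^ 4 * theta₁₀ (x ^ 5) 1) := by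
  have hq := pow_ne_zero 5 hx
  have hq1 := norm_pow_five_lt_one hx1
  have hresidue (j : Fin 5) :
      HasSum (fun m : ℤ => (-1) ^ (5 * m + j) * x ^ ((5 * m + (j : ℤ)) * (5 * m + j)))
        ((-1) ^ (j : ℤ) * x ^ ((j : ℤ) * j) * theta₁₀ (x ^ 5) (5 + 2 * j)) := by
    have hterm (m : ℤ) := zpow_residue_five hx 0 j m
    simp only [zero_mul, add_zero] at hterm
    simp_rw [hterm, theta₁₀_eq_tsum hq]
    exact (summable_thetaTerm₁₀ hq hq1 _).hasSum.mul_left _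
  convert hasSum_of_forall_residue (f := fun n : ℤ => (-1) ^ n * x ^ (n * n)) hresidue using 1
  have h7 : theta₁₀ (x ^ 5) 7 = theta₁₀ (x ^ 5) 3 := theta₁₀_ten_sub hq 3
  have h9 : theta₁₀ (x ^ 5) 9 = theta₁₀ (x ^ 5) 1 := theta₁₀_ten_sub hq 1
  have h11 := theta₁₀_ten_sub hq (-1)
  have h13 := theta₁₀_ten_sub hq (-3)
  norm_num [theta₁₀_neg hq, zpow_neg, zpow_ofNat] at h11 h13
  simp only [Fin.sum_univ_five]
  norm_num [zpow_ofNat, h7, h9, h11, h13]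
  field_simp
  ring

theorem phi_eq (hx : x ≠ 0) (hx1 : ‖x‖ < 1) :
    phi x = theta₁₀ (x ^ 5) 5 - 2 * x * theta₁₀ (x ^ 5) 3 + 2 * x ^ 4 * theta₁₀ (x ^ 5) 1 :=
  (hasSum_phi hx hx1).tsum_eq

theorem div_one_sub_zpow (hx : x ≠ 0) (hx1 : ‖x‖ < 1) (c : ℂ) (n : ℤ) :
    c / (1 - x ^ n) = c / (1 - x ^ (2 * n)) + x ^ n * c / (1 - x ^ (2 * n)) := by
  rcases eq_or_ne n 0 with rfl | hn
  · simp
  have h1 := one_sub_zpow_ne_zero hx1 hn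
  have h2 := one_sub_zpow_ne_zero hx1 (m := 2 * n) (by omega)
  field_simp
  rw [two_mul, zpow_add₀ hx]
  ring

theorem lambertTerm_residue_five (hx : x ≠ 0) (hx1 : ‖x‖ < 1) (b j m : ℤ) :
    lambertTerm x b (5 * m + j) = (-1) ^ j * x ^ (j * j + b * j) *
      (thetaTerm₁₀ (x ^ 5) (5 + 2 * j + b) m / (1 - (x ^ 5) ^ (2 * j + 10 * m))
        + (x ^ 5) ^ j * (thetaTerm₁₀ (x ^ 5) (10 + 2 * j + b) m
          / (1 - (x ^ 5) ^ (2 * j + 10 * m)))) := by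
  have hq := pow_ne_zero 5 hx
  have hshift : thetaTerm₁₀ (x ^ 5) (10 + 2 * j + b) m
      = (x ^ 5) ^ (5 * m) * thetaTerm₁₀ (x ^ 5) (5 + 2 * j + b) m := by
    rw [thetaTerm₁₀, thetaTerm₁₀, show 5 * m * (m - 1) + (10 + 2 * j + b) * m
      = 5 * m + (5 * m * (m - 1) + (5 + 2 * j + b) * m) by ring, zpow_add₀ hq]
    ring
  rw [lambertTerm, zpow_residue_five hx, ← pow_five_zpow x (5 * m + j),
    div_one_sub_zpow hq (norm_pow_five_lt_one hx1), show 2 * (5 * m + j) = 2 * j + 10 * m by ring,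
    hshift, zpow_add₀ hq (5 * m)]
  ring

theorem hasSum_lambertTerm (hx : x ≠ 0) (hx1 : ‖x‖ < 1) (b : ℤ) :
    HasSum (lambertTerm x b) (∑ j : Fin 5, (-1) ^ (j : ℤ) * x ^ ((j : ℤ) * j + b * j) *
      (lerch₁₀ (x ^ 5) (5 + 2 * j + b) (2 * j)
        + (x ^ 5) ^ (j : ℤ) * lerch₁₀ (x ^ 5) (10 + 2 * j + b) (2 * j))) := by
  have hq := pow_ne_zero 5 hx
  have hlerch (k s : ℤ) : HasSum (fun r => thetaTerm₁₀ (x ^ 5) k r / (1 - (x ^ 5) ^ (s + 10 * r)))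
      (lerch₁₀ (x ^ 5) k s) := by
    rw [lerch₁₀_eq_tsum hq]
    exact (summable_lerch₁₀ hq (norm_pow_five_lt_one hx1) k s).hasSum
  refine hasSum_of_forall_residue fun j => ?_
  simp_rw [Nat.cast_ofNat, lambertTerm_residue_five hx hx1]
  exact ((hlerch _ _).add ((hlerch _ _).mul_left _)).mul_left _

theorem lambert_dissection (hx : x ≠ 0) (hx1 : ‖x‖ < 1) :
    1 + 4 * lambert x 1 - 2 * lambert x 2 = lambert₀ (x ^ 5) + x * lambert₁ (x ^ 5)
      + x ^ 2 * lambert₂ (x ^ 5) + x ^ 3 * lambert₃ (x ^ 5) + x ^ 4 * lambert₄ (x ^ 5) := by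
  have hq := pow_ne_zero 5 hx
  rw [lambert, lambert, (hasSum_lambertTerm hx hx1 1).tsum_eq,
    (hasSum_lambertTerm hx hx1 2).tsum_eq, Fin.sum_univ_five, Fin.sum_univ_five]
  have c1 := lerch₁₀_add_ten hq 14 (-2)
  have c2 := lerch₁₀_add_ten hq 19 (-2)
  have c3 := lerch₁₀_add_ten hq 12 (-4)
  have c4 := lerch₁₀_add_ten hq 17 (-4)
  have d1 := lerch₁₀_add_ten hq 11 (-6)
  have d2 := lerch₁₀_add_ten hq 16 (-6)
  have d3 := lerch₁₀_add_ten hq 13 (-4)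
  have d4 := lerch₁₀_add_ten hq 18 (-4)
  have d5 := lerch₁₀_add_ten hq 15 (-2)
  have d6 := lerch₁₀_add_ten hq 20 (-2)
  norm_num [zpow_neg, zpow_ofNat] at c1 c2 c3 c4 d1 d2 d3 d4 d5 d6
  norm_num [zpow_ofNat, c1, c2, c3, c4, d1, d2, d3, d4, d5, d6]
  unfold lambert₀ lambert₁ lambert₂ lambert₃ lambert₄
  field_simp
  ring

theorem phi_mul_rankDiff (hx : x ≠ 0) (hx1 : ‖x‖ < 1) (h : IsRegular (x ^ 5)) :
    phi x * rankDiff x = 1 + 4 * lambert x 1 - 2 * lambert x 2 := by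
  rw [lambert_dissection hx hx1, phi_eq hx hx1, ← h.lambert₀_eq, ← h.lambert₁_eq, ← h.lambert₂_eq,
    ← h.lambert₃_eq, ← h.lambert₄_eq, rankDiff]
  ring

end Dissection

/-! ### Generating functions of overpartitions -/

open Finset PowerSeries
open scoped PowerSeries.WithPiTopology

/-- The generating function of overpartitions, each counted with the weight `f l k` where `l` is its
largest part and `k` its number of parts. -/
noncomputable def genFun : (ℕ → ℕ → ℤ) →+ ℤ⟦X⟧ where
  toFun f := .mk fun n =>
    ∑ P : n.Partition, 2 ^ P.parts.toFinset.card * f P.parts.sup P.parts.card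
  map_add' f g := by ext n; simp [mul_add, sum_add_distrib]
  map_zero' := by ext n; simp

theorem coeff_genFun (n : ℕ) (f : ℕ → ℕ → ℤ) : coeff n (genFun f)
    = ∑ P : n.Partition, 2 ^ P.parts.toFinset.card * f P.parts.sup P.parts.card := by
  simp [genFun]

theorem continuous_genFun : Continuous genFun := by
  rw [continuous_iff_continuousAt]
  refine fun f => (WithPiTopology.tendsto_iff_coeff_tendsto _ _ _ _).2 fun n => ?_
  simp_rw [coeff_genFun]
  exact tendsto_finsetSum _ fun P _ =>
    (((continuous_apply _).comp (continuous_apply _)).tendsto f).const_mul _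

theorem hasSum_genFun {ι : Type*} {f : ι → ℕ → ℕ → ℤ} {g : ℕ → ℕ → ℤ}
    (h : ∀ l k, HasSum (fun i => f i l k) (g l k)) : HasSum (fun i => genFun (f i)) (genFun g) :=
  (Pi.hasSum.2 fun l => Pi.hasSum.2 (h l)).map genFun continuous_genFun

theorem sup_parts_eq_zero_iff {n : ℕ} (P : n.Partition) :
    P.parts.sup = 0 ↔ P.parts.card = 0 := by
  rw [Multiset.card_eq_zero]
  refine ⟨fun h => Multiset.eq_zero_of_forall_notMem fun a ha => ?_, fun h => by simp [h]⟩
  exact (P.parts_pos ha).ne' (Nat.le_zero.1 (h ▸ Multiset.le_sup ha))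

theorem genFun_congr {f g : ℕ → ℕ → ℤ} (h : ∀ l k, (l = 0 ↔ k = 0) → f l k = g l k) :
    genFun f = genFun g := by
  ext n
  simp_rw [coeff_genFun, h _ _ (sup_parts_eq_zero_iff _)]

theorem card_overpartition_eq_coeff (n : ℕ) (p : ℕ → ℕ → Prop) [DecidableRel p] :
    (Nat.card {P : Overpartition n // p P.1.1.parts.sup P.1.1.parts.card} : ℤ)
      = coeff n (genFun fun l k => if p l k then 1 else 0) := by
  let e : {P : Overpartition n // p P.1.1.parts.sup P.1.1.parts.card} ≃
      Σ P : {P : n.Partition // p P.parts.sup P.parts.card}, P.1.parts.toFinset.powerset :=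
    { toFun P := ⟨⟨P.1.1.1, P.2⟩, P.1.1.2, mem_powerset.2 P.1.2⟩
      invFun S := ⟨⟨(S.1.1, S.2.1), mem_powerset.1 S.2.2⟩, S.1.2⟩
      left_inv _ := rfl
      right_inv _ := rfl }
  rw [Nat.card_congr e, Nat.card_eq_fintype_card, Fintype.card_sigma, coeff_genFun]
  simp_rw [Fintype.card_coe, card_powerset, mul_ite, mul_one, mul_zero, ← sum_filter]
  push_cast
  exact (sum_subtype _ (by simp) fun P : n.Partition => (2 : ℤ) ^ P.parts.toFinset.card).symm

theorem sup_parts_mem {n : ℕ} {P : n.Partition} (h : P.parts.sup ≠ 0) :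
    P.parts.sup ∈ P.parts := by
  by_contra hmem
  have hle : P.parts.sup ≤ P.parts.sup - 1 := Multiset.sup_le.2 fun b hb =>
    Nat.le_sub_one_of_lt ((Multiset.le_sup hb).lt_of_ne fun e => hmem (e ▸ hb))
  omega

theorem genFun_ite_eq_succ (l : ℕ) (f : ℕ → ℤ) :
    genFun (fun a b => if a = l + 1 then f b else 0)
      = X ^ (l + 1) * (genFun (fun a b => if a ≤ l + 1 then f (b + 1) else 0)
        + genFun (fun a b => if a ≤ l then f (b + 1) else 0)) := by
  ext n
  have hmem {m : ℕ} {P : m.Partition} (h : P.parts.sup = l + 1) : l + 1 ∈ P.parts :=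
    h ▸ sup_parts_mem (by omega)
  rw [coeff_X_pow_mul']
  simp_rw [map_add, coeff_genFun, mul_ite, mul_zero]
  split_ifs with hn
  swap
  · exact sum_eq_zero fun P _ => if_neg fun h => hn (Nat.Partition.le_of_mem_parts (hmem h))
  rw [← sum_filter_of_ne (p := fun P : n.Partition => l + 1 ∈ P.parts)
      fun P _ hP => hmem (ite_ne_right_iff.1 hP).1,
    sum_subtype _ (p := fun P : n.Partition => l + 1 ∈ P.parts) (by simp),
    ← (Nat.Partition.partitionWithPartEquiv (Nat.succ_pos l) hn).symm.sum_comp,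
    ← sum_add_distrib]
  refine sum_congr rfl fun P _ => ?_
  simp only [Nat.Partition.partitionWithPartEquiv_symm_apply_parts, Multiset.sup_cons,
    Multiset.card_cons, Multiset.toFinset_cons, sup_eq_left]
  by_cases hP : l + 1 ∈ P.parts
  · have hsup := Multiset.le_sup hP
    rw [insert_eq_of_mem (Multiset.mem_toFinset.2 hP), if_neg (by omega : ¬P.parts.sup ≤ l),
      add_zero]
  · have hsup : P.parts.sup ≤ l + 1 ↔ P.parts.sup ≤ l :=
      ⟨fun h => Nat.le_of_lt_succ (h.lt_of_ne fun e => hP (hmem e)), fun h => h.trans l.le_succ⟩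
    rw [card_insert_of_notMem (by simpa using hP), pow_succ]
    simp only [hsup]
    split_ifs <;> ring

theorem genFun_ite_card_eq_zero : genFun (fun _ b => if b = 0 then 1 else 0) = 1 := by
  ext n
  rw [coeff_genFun, coeff_one]
  rcases n with _ | n
  · simp
  · refine (sum_eq_zero fun P _ => ?_).trans (if_neg n.succ_ne_zero).symm
    have hparts : P.parts ≠ 0 := fun h =>
      n.succ_ne_zero (P.parts_sum.symm.trans (by rw [h, Multiset.sum_zero]))
    simp [hparts]

/-- The generating function of overpartitions with largest part at most `l` and at most `k`
parts. -/
noncomputable def boxGenFun (l k : ℕ) : ℤ⟦X⟧ := genFun fun a b => if a ≤ l ∧ b ≤ k then 1 else 0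

theorem boxGenFun_zero_left (k : ℕ) : boxGenFun 0 k = 1 := by
  rw [boxGenFun, ← genFun_ite_card_eq_zero]
  exact genFun_congr fun a b h => if_congr (by omega) rfl rfl

theorem boxGenFun_zero_right (l : ℕ) : boxGenFun l 0 = 1 := by
  rw [boxGenFun, ← genFun_ite_card_eq_zero]
  exact genFun_congr fun a b h => if_congr (by omega) rfl rfl

theorem boxGenFun_succ_succ (l k : ℕ) : boxGenFun (l + 1) (k + 1)
    = boxGenFun l (k + 1) + X ^ (l + 1) * (boxGenFun (l + 1) k + boxGenFun l k) := by
  have h := genFun_ite_eq_succ l fun b => if b ≤ k + 1 then 1 else 0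
  simp only [add_le_add_iff_right, ← ite_and] at h
  rw [boxGenFun, boxGenFun, boxGenFun, boxGenFun, ← h, ← map_add]
  congr 1
  ext a b
  rw [Pi.add_apply, Pi.add_apply]
  split_ifs <;> omega

theorem boxGenFun_succ_succ' (l k : ℕ) : boxGenFun (l + 1) (k + 1)
    = boxGenFun (l + 1) k + X ^ (k + 1) * (boxGenFun l (k + 1) + boxGenFun l k) := by
  induction l generalizing k with
  | zero =>
    induction k with
    | zero => rw [boxGenFun_succ_succ]; simp only [boxGenFun_zero_left, boxGenFun_zero_right]
    | succ k ihk =>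
      have h := boxGenFun_succ_succ 0 k
      simp only [boxGenFun_zero_left, zero_add] at h ihk
      rw [boxGenFun_succ_succ]
      simp only [boxGenFun_zero_left, zero_add]
      linear_combination X * ihk - h
  | succ l ihl =>
    induction k with
    | zero =>
      have h := boxGenFun_succ_succ (l + 1) 0
      have h' := boxGenFun_succ_succ l 0
      have ih := ihl 0
      simp only [boxGenFun_zero_right, zero_add] at h h' ih ⊢
      linear_combination h + ih - X * h'
    | succ k ihk =>
      linear_combination boxGenFun_succ_succ (l + 1) (k + 1) - boxGenFun_succ_succ (l + 1) k
        + ihl (k + 1) + X ^ (l + 2) * (ihk + ihl k)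
        - X ^ (k + 2) * (boxGenFun_succ_succ l (k + 1) + boxGenFun_succ_succ l k)

theorem boxGenFun_comm (l k : ℕ) : boxGenFun l k = boxGenFun k l := by
  induction l generalizing k with
  | zero => rw [boxGenFun_zero_left, boxGenFun_zero_right]
  | succ l ihl =>
    induction k with
    | zero => rw [boxGenFun_zero_left, boxGenFun_zero_right]
    | succ k ihk => rw [boxGenFun_succ_succ, boxGenFun_succ_succ', ihl, ihl, ihk]

theorem genFun_ite_and_comm (l k : ℕ) : genFun (fun a b => if a = l ∧ b = k then 1 else 0)
    = genFun (fun a b => if a = k ∧ b = l then 1 else 0) := by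
  have hbox (l k : ℕ) : genFun (fun a b => if a = l + 1 ∧ b = k + 1 then 1 else 0)
      = boxGenFun (l + 1) (k + 1) - boxGenFun l (k + 1)
        - (boxGenFun (l + 1) k - boxGenFun l k) := by
    simp only [boxGenFun, ← map_sub]
    congr 1
    ext a b
    simp only [Pi.sub_apply]
    split_ifs <;> omega
  by_cases h0 : l = 0 ∨ k = 0
  · exact genFun_congr fun a b hab => if_congr (by omega) rfl rfl
  · obtain ⟨l, rfl⟩ := Nat.exists_eq_succ_of_ne_zero fun h => h0 (.inl h)
    obtain ⟨k, rfl⟩ := Nat.exists_eq_succ_of_ne_zero fun h => h0 (.inr h)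
    rw [Nat.succ_eq_add_one, Nat.succ_eq_add_one, hbox, hbox, boxGenFun_comm (k + 1) (l + 1),
      boxGenFun_comm k (l + 1), boxGenFun_comm (k + 1) l, boxGenFun_comm k l]
    ring

theorem hasSum_smul_genFun_ite (f : ℕ → ℕ → ℤ) : HasSum
    (fun i : ℕ × ℕ => f i.1 i.2 • genFun fun a b => if a = i.1 ∧ b = i.2 then 1 else 0)
    (genFun f) := by
  have h (l k : ℕ) :
      HasSum (fun i : ℕ × ℕ => if l = i.1 ∧ k = i.2 then f i.1 i.2 else 0) (f l k) := by
    convert hasSum_single (f := fun i : ℕ × ℕ => if l = i.1 ∧ k = i.2 then f i.1 i.2 else 0) (l, k)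
      fun i hi => if_neg fun h => hi (Prod.ext h.1.symm h.2.symm) using 1
    simp
  refine (hasSum_genFun h).congr_fun fun i => ?_
  rw [← map_zsmul]
  congr 1
  ext a b
  simp

/-- Conjugation of overpartitions. -/
theorem genFun_swap (f : ℕ → ℕ → ℤ) : genFun (fun l k => f k l) = genFun f := by
  have h := (Equiv.prodComm ℕ ℕ).hasSum_iff.2 (hasSum_smul_genFun_ite f)
  refine (hasSum_smul_genFun_ite fun l k => f k l).unique (h.congr_fun fun i => ?_)
  exact congrArg _ (genFun_ite_and_comm _ _)

theorem summable_of_X_pow_dvd {ι : Type*} {f : ι → ℤ⟦X⟧} {e : ι → ℕ} (he : Tendsto e cofinite atTop)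
    (h : ∀ i, X ^ e i ∣ f i) : Summable f := by
  refine (WithPiTopology.summable_iff_summable_coeff ℤ).2 fun n => ?_
  refine summable_of_hasFiniteSupport <| (eventually_cofinite.1 (he.eventually_gt_atTop n)).subset
    fun i hi hlt => hi (X_pow_dvd_iff.1 (h i) n hlt)

/-- The sum `∑ X ^ i * B(m + i, i)` over `i`, where `B(l, k)` counts overpartitions in an `l` by `k`
box. Both the generating function of all overpartitions and those of overpartitions with rank at
least `m` are combinations of these diagonal sums. -/
noncomputable def diagGenFun (m : ℕ) : ℤ⟦X⟧ := ∑' i, X ^ i * boxGenFun (m + i) i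

theorem hasSum_diagGenFun (m : ℕ) :
    HasSum (fun i => X ^ i * boxGenFun (m + i) i) (diagGenFun m) :=
  (summable_of_X_pow_dvd (Nat.cofinite_eq_atTop ▸ tendsto_id) fun _ => dvd_mul_right _ _).hasSum

theorem tendsto_boxGenFun {ι : Type*} {F : Filter ι} {l k : ι → ℕ} (hl : Tendsto l F atTop)
    (hk : Tendsto k F atTop) :
    Tendsto (fun i => boxGenFun (l i) (k i)) F (𝓝 (genFun fun _ _ => 1)) := by
  refine (continuous_genFun.tendsto _).comp
    (tendsto_pi_nhds.2 fun a => tendsto_pi_nhds.2 fun b => ?_)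
  refine tendsto_const_nhds.congr' ?_
  filter_upwards [hl.eventually_ge_atTop a, hk.eventually_ge_atTop b] with i ha hb
  exact (if_pos ⟨ha, hb⟩).symm

theorem boxGenFun_eq_sum_range (m n : ℕ) : boxGenFun (n + m + 2) (n + 1)
    = ∑ i ∈ range (n + 2), X ^ i * boxGenFun (m + i) i
      + X * ∑ i ∈ range (n + 1), X ^ i * boxGenFun (m + 1 + i) i
      + X ^ (m + 3) * (∑ i ∈ range n, X ^ i * boxGenFun (m + 3 + i) i
        + ∑ i ∈ range n, X ^ i * boxGenFun (m + 2 + i) i) := by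
  induction n with
  | zero =>
    have h := boxGenFun_succ_succ' (m + 1) 0
    simp only [sum_range_succ, sum_range_zero, boxGenFun_zero_right, zero_add] at h ⊢
    linear_combination h
  | succ n ih =>
    have h := boxGenFun_succ_succ' (n + m + 2) (n + 1)
    have h' := boxGenFun_succ_succ (n + m + 2) n
    rw [sum_range_succ _ (n + 2), sum_range_succ (fun i => X ^ i * boxGenFun (m + 1 + i) i) (n + 1),
      sum_range_succ (fun i => X ^ i * boxGenFun (m + 3 + i) i),
      sum_range_succ (fun i => X ^ i * boxGenFun (m + 2 + i) i),
      show n + 1 + m + 2 = n + m + 2 + 1 by ring, show m + (n + 2) = n + m + 2 by ring,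
      show m + 1 + (n + 1) = n + m + 2 by ring, show m + 3 + n = n + m + 2 + 1 by ring,
      show m + 2 + n = n + m + 2 by ring]
    linear_combination h + h' + ih

theorem genFun_one_eq (m : ℕ) : genFun (fun _ _ => 1) = diagGenFun m + X * diagGenFun (m + 1)
    + X ^ (m + 3) * (diagGenFun (m + 3) + diagGenFun (m + 2)) := by
  have hlim (c d : ℕ) : Tendsto (fun n => ∑ i ∈ range (n + d), X ^ i * boxGenFun (c + i) i) atTop
      (𝓝 (diagGenFun c)) :=
    (hasSum_diagGenFun c).tendsto_sum_nat.comp (tendsto_add_atTop_nat d)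
  have hbox := tendsto_boxGenFun
    (tendsto_atTop_mono (fun n : ℕ => (by omega : n ≤ n + m + 2)) tendsto_id)
    (tendsto_add_atTop_nat 1) (l := fun n => n + m + 2)
  simp only [boxGenFun_eq_sum_range] at hbox
  exact tendsto_nhds_unique hbox <| ((hlim m 2).add ((hlim (m + 1) 1).const_mul X)).add
    (((hlim (m + 3) 0).add (hlim (m + 2) 0)).const_mul _)

/-- The generating function of nonempty overpartitions with rank at least `m`. -/
noncomputable def rankGenFun (m : ℕ) : ℤ⟦X⟧ := genFun fun l k => if 1 ≤ k ∧ k + m ≤ l then 1 else 0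

theorem rankGenFun_eq (m : ℕ) :
    rankGenFun m = X ^ (m + 1) * (diagGenFun (m + 1) + diagGenFun m) := by
  have hpt (l k : ℕ) :
      HasSum (fun i => (if l ≤ m + i + 1 ∧ k ≤ i + 1 then 1 else 0)
        - if l ≤ m + i ∧ k ≤ i + 1 then 1 else 0) (if m < l ∧ k + m ≤ l then (1 : ℤ) else 0) := by
    convert hasSum_single (l - m - 1) ?_ using 1
    · split_ifs <;> omega
    · intro i hi
      split_ifs <;> omega
  have hstep (i : ℕ) : boxGenFun (m + i + 1) (i + 1) - boxGenFun (m + i) (i + 1)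
      = X ^ (m + 1) * (X ^ i * boxGenFun (m + 1 + i) i + X ^ i * boxGenFun (m + i) i) := by
    rw [boxGenFun_succ_succ, show m + 1 + i = m + i + 1 by ring]
    ring
  have hsum := (((hasSum_diagGenFun (m + 1)).add (hasSum_diagGenFun m)).mul_left (X ^ (m + 1)))
  refine HasSum.unique ?_ hsum
  have hrank : rankGenFun m = genFun fun l k => if m < l ∧ k + m ≤ l then 1 else 0 :=
    genFun_congr fun l k h => if_congr (by omega) rfl rfl
  refine hrank ▸ (hasSum_genFun hpt).congr_fun fun i => ?_
  rw [← hstep, boxGenFun, boxGenFun, ← map_sub]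
  rfl

/-- The generating function of nonempty overpartitions, counted once for having rank at least `m`
and once more for having rank at least `m + 1`. -/
noncomputable def rankGenFun₂ (m : ℕ) : ℤ⟦X⟧ := rankGenFun m + rankGenFun (m + 1)

theorem rankGenFun₂_add (m : ℕ) : rankGenFun₂ m + X ^ (m + 1) * rankGenFun₂ (m + 2)
    = 2 * X ^ (m + 1) * genFun fun _ _ => 1 := by
  simp only [rankGenFun₂, rankGenFun_eq]
  linear_combination -X ^ (m + 1) * (genFun_one_eq m + genFun_one_eq (m + 1))

theorem genFun_one_eq_one_add : genFun (fun _ _ => 1) = 1 + rankGenFun₂ 0 := by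
  have hswap : rankGenFun 1 = genFun fun l k => if l < k ∧ 1 ≤ l then 1 else 0 :=
    (genFun_swap _).symm.trans (genFun_congr fun l k _ => if_congr (by omega) rfl rfl)
  rw [rankGenFun₂, zero_add, hswap, rankGenFun, ← genFun_ite_card_eq_zero, ← map_add, ← map_add]
  refine genFun_congr fun l k h => ?_
  simp only [Pi.add_apply]
  split_ifs <;> omega

/-- The false theta series by which twice the generating function of all overpartitions is
multiplied to give `rankGenFun₂ m`. -/
noncomputable def rankTheta (m : ℕ) : ℤ⟦X⟧ :=
  ∑' n : ℕ, (-1) ^ n * X ^ ((n + 1) ^ 2 + m * (n + 1))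

theorem hasSum_rankTheta (m : ℕ) :
    HasSum (fun n : ℕ => (-1) ^ n * X ^ ((n + 1) ^ 2 + m * (n + 1))) (rankTheta m) := by
  have hid : Tendsto id cofinite atTop := Nat.cofinite_eq_atTop.le
  refine (summable_of_X_pow_dvd hid fun n => (pow_dvd_pow X ?_).mul_left _).hasSum
  rw [id]
  nlinarith

theorem rankTheta_add (m : ℕ) : rankTheta m + X ^ (m + 1) * rankTheta (m + 2) = X ^ (m + 1) := by
  have h := (hasSum_nat_add_iff' 1).2 (hasSum_rankTheta m)
  have h' := (hasSum_rankTheta (m + 2)).mul_left (-X ^ (m + 1))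
  have key := h.unique (h'.congr_fun fun n => by ring)
  simp only [sum_range_one] at key
  linear_combination key

theorem rankGenFun₂_eq (m : ℕ) : rankGenFun₂ m = 2 * genFun (fun _ _ => 1) * rankTheta m := by
  set E : ℕ → ℤ⟦X⟧ := fun m => rankGenFun₂ m - 2 * genFun (fun _ _ => 1) * rankTheta m
  have hrec (m : ℕ) : E m = -X ^ (m + 1) * E (m + 2) := by
    linear_combination rankGenFun₂_add m - 2 * genFun (fun _ _ => 1) * rankTheta_add m
  have hdvd (N : ℕ) : ∀ m, X ^ N ∣ E m := by
    induction N with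
    | zero => simp
    | succ N ih =>
      intro m
      rw [hrec, neg_mul, dvd_neg, pow_succ']
      exact mul_dvd_mul (dvd_pow_self X m.succ_ne_zero) (ih _)
  refine sub_eq_zero.1 (PowerSeries.ext fun n => ?_)
  exact X_pow_dvd_iff.1 (hdvd (n + 1) m) n n.lt_succ_self

theorem genFun_one_mul : genFun (fun _ _ => 1) * (1 - 2 * rankTheta 0) = 1 := by
  linear_combination genFun_one_eq_one_add + rankGenFun₂_eq 0

/-- The generating function of `nbar 0 5 n - nbar 2 5 n`. -/
noncomputable def rankDiffGenFun : ℤ⟦X⟧ := .mk fun n => nbar 0 5 n - nbar 2 5 n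

theorem rankDiffGenFun_eq : rankDiffGenFun = genFun fun l k =>
    (if (l : ℤ) - k ≡ 0 [ZMOD 5] then 1 else 0) - if (l : ℤ) - k ≡ 2 [ZMOD 5] then 1 else 0 := by
  have hnbar (a : ℤ) (n : ℕ) : (nbar a 5 n : ℤ)
      = coeff n (genFun fun l k => if (l : ℤ) - k ≡ a [ZMOD 5] then 1 else 0) :=
    card_overpartition_eq_coeff n fun l k => (l : ℤ) - k ≡ a [ZMOD 5]
  ext n
  rw [rankDiffGenFun, coeff_mk, hnbar, hnbar, ← map_sub, ← map_sub]
  rfl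

/-- `rankWeight r` is the multiplicity with which overpartitions of rank `r` are counted in
`∑ (2 H (5 * j + 1) - H (5 * j + 2) + H (5 * j + 3) - 2 H (5 * j + 4))`, where `H = rankGenFun₂`. -/
def rankWeight (r : ℕ) : ℤ := if r % 5 = 0 then 0 else if r % 5 = 1 ∨ r % 5 = 4 then 2 else 3

theorem hasSum_rankWeight (r : ℕ) :
    HasSum (fun j : ℕ => 2 * (if 5 * j + 1 ≤ r then 1 else 0) + (if 5 * j + 2 ≤ r then 1 else 0)
      - (if 5 * j + 4 ≤ r then 1 else 0) - 2 * (if 5 * j + 5 ≤ r then 1 else 0))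
      (rankWeight r) := by
  rw [rankWeight]
  convert hasSum_single (r / 5) ?_ using 1
  · split_ifs <;> omega
  · intro j hj
    split_ifs <;> omega

theorem genFun_eq_of_add_swap {f g : ℕ → ℕ → ℤ} (h : ∀ l k, f l k + f k l = g l k + g k l) :
    genFun f = genFun g := by
  have hdouble (f : ℕ → ℕ → ℤ) : genFun f + genFun f = genFun fun l k => f l k + f k l := by
    nth_rw 2 [← genFun_swap f]
    exact (map_add _ _ _).symm
  have hfg : genFun f + genFun f = genFun g + genFun g := by simp only [hdouble, h]
  ext n
  have hn := congrArg (coeff n) hfg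
  rw [map_add, map_add] at hn
  omega

theorem genFun_rankWeight : genFun (fun l k => rankWeight (l - k))
    = genFun (fun _ _ => 1) - rankDiffGenFun := by
  rw [rankDiffGenFun_eq, ← map_sub]
  refine genFun_eq_of_add_swap fun l k => ?_
  simp only [rankWeight, Pi.sub_apply, Int.ModEq]
  split_ifs <;> omega

theorem rankGenFun_of_pos {m : ℕ} (hm : 0 < m) :
    rankGenFun m = genFun fun l k => if m ≤ l - k then 1 else 0 :=
  genFun_congr fun l k h => if_congr (by omega) rfl rfl

theorem hasSum_rankGenFun₂ : HasSum (fun j => 2 * rankGenFun₂ (5 * j + 1) - rankGenFun₂ (5 * j + 2)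
      + rankGenFun₂ (5 * j + 3) - 2 * rankGenFun₂ (5 * j + 4))
    (genFun (fun _ _ => 1) - rankDiffGenFun) := by
  rw [← genFun_rankWeight]
  refine (hasSum_genFun fun l k => hasSum_rankWeight (l - k)).congr_fun fun j => ?_
  rw [rankGenFun₂, rankGenFun₂, rankGenFun₂, rankGenFun₂]
  simp only [rankGenFun_of_pos (Nat.succ_pos _), two_mul, ← map_sub, ← map_add]
  congr 1
  ext l k
  simp only [Pi.add_apply, Pi.sub_apply]
  ring

theorem hasSum_rankTheta_mod_five : HasSum (fun j => 2 * (2 * rankTheta (5 * j + 1)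
      - rankTheta (5 * j + 2) + rankTheta (5 * j + 3) - 2 * rankTheta (5 * j + 4)))
    (1 - (1 - 2 * rankTheta 0) * rankDiffGenFun) := by
  have hsum := hasSum_rankGenFun₂.mul_left (1 - 2 * rankTheta 0)
  rw [mul_sub, mul_comm _ (genFun _), genFun_one_mul] at hsum
  refine hsum.congr_fun fun j => ?_
  simp only [rankGenFun₂_eq]
  linear_combination (-2) * (2 * rankTheta (5 * j + 1) - rankTheta (5 * j + 2)
    + rankTheta (5 * j + 3) - 2 * rankTheta (5 * j + 4)) * genFun_one_mul

/-! ### Expansions at the origin -/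

/-- The integral power series `f` converges to `F` on a punctured neighbourhood of the origin. The
origin is left out because of the negative powers in the functions expanded below. -/
def HasExpansion (f : ℤ⟦X⟧) (F : ℂ → ℂ) : Prop :=
  ∀ᶠ q in 𝓝[≠] 0, HasSum (fun n => ((coeff n f : ℤ) : ℂ) * q ^ n) (F q)

theorem hasExpansion_of_hasSum {ι : Type*} {c : ι → ℤ} {e : ι → ℕ} {f : ℤ⟦X⟧} {F : ℂ → ℂ}
    (hf : HasSum (fun i => (c i : ℤ⟦X⟧) * X ^ e i) f)
    (hF : ∀ᶠ q in 𝓝[≠] 0, HasSum (fun i => (c i : ℂ) * q ^ e i) (F q)) : HasExpansion f F := by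
  filter_upwards [hF] with q hq
  refine ((Equiv.sigmaFiberEquiv e).hasSum_iff.2 hq).sigma fun n => ?_
  have hn : HasSum (fun i => coeff n ((c i : ℤ⟦X⟧) * X ^ e i)) (coeff n f) :=
    hf.map (coeff n) (WithPiTopology.continuous_coeff ℤ n)
  have hn' := (hn.map (Int.castRingHom ℂ) continuous_of_discreteTopology).mul_right (q ^ n)
  refine (hasSum_subtype_iff_indicator (s := {i | e i = n})
    (f := fun i => (c i : ℂ) * q ^ e i)).2 (hn'.congr_fun fun i => ?_)
  rw [Function.comp_apply, ← map_intCast (C : ℤ →+* ℤ⟦X⟧), coeff_C_mul, coeff_X_pow]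
  by_cases h : e i = n
  · simp [h]
  · simp [h, Ne.symm h]

theorem hasExpansion_intCast (c : ℤ) : HasExpansion c fun _ => c :=
  hasExpansion_of_hasSum (ι := Unit) (c := fun _ => c) (e := fun _ => 0) (by simp)
    (.of_forall fun q => by simp)

theorem hasExpansion_X : HasExpansion X id :=
  hasExpansion_of_hasSum (ι := Unit) (c := fun _ => 1) (e := fun _ => 1) (by simp)
    (.of_forall fun q => by simp)

section

variable {f g : ℤ⟦X⟧} {F G : ℂ → ℂ}

theorem HasExpansion.congr (hf : HasExpansion f F) (h : ∀ᶠ q in 𝓝[≠] 0, F q = G q) :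
    HasExpansion f G := by
  filter_upwards [hf, h] with q hq hFG using hFG ▸ hq

theorem HasExpansion.add (hf : HasExpansion f F) (hg : HasExpansion g G) :
    HasExpansion (f + g) fun q => F q + G q := by
  filter_upwards [hf, hg] with q hf hg
  exact (hf.add hg).congr_fun fun n => by push_cast [map_add]; ring

theorem HasExpansion.mul (hf : HasExpansion f F) (hg : HasExpansion g G) :
    HasExpansion (f * g) fun q => F q * G q := by
  filter_upwards [hf, hg] with q hf hg
  have hf' := hf.summable.norm
  have hg' := hg.summable.norm
  have hprod := (summable_norm_sum_mul_antidiagonal_of_summable_norm hf' hg').of_norm.hasSum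
  rw [← tsum_mul_tsum_eq_tsum_sum_antidiagonal_of_summable_norm hf' hg', hf.tsum_eq,
    hg.tsum_eq] at hprod
  refine hprod.congr_fun fun n => ?_
  rw [coeff_mul, Int.cast_sum, sum_mul]
  refine sum_congr rfl fun i hi => ?_
  rw [← mem_antidiagonal.1 hi]
  push_cast
  ring

theorem HasExpansion.sub (hf : HasExpansion f F) (hg : HasExpansion g G) :
    HasExpansion (f - g) fun q => F q - G q := by
  filter_upwards [hf, hg] with q hf hg
  exact (hf.sub hg).congr_fun fun n => by push_cast [map_sub]; ring

theorem HasExpansion.hasFPowerSeriesAt (hf : HasExpansion f F) :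
    HasFPowerSeriesAt (fun q => ∑' n, ((coeff n f : ℤ) : ℂ) * q ^ n)
      (.ofScalars ℂ fun n => ((coeff n f : ℤ) : ℂ)) 0 := by
  have hcoeff : ∀ᶠ q in 𝓝[≠] 0, Summable fun n => ((coeff n f : ℤ) : ℂ) * q ^ n :=
    hf.mono fun q hq => hq.summable
  rw [hasFPowerSeriesAt_iff]
  filter_upwards [eventually_nhdsWithin_iff.1 hcoeff] with q hq
  rw [zero_add]
  have hsum : Summable fun n => ((coeff n f : ℤ) : ℂ) * q ^ n := by
    rcases eq_or_ne q 0 with rfl | hq0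
    · exact summable_of_ne_finset_zero (s := {0}) fun n hn => by simp [notMem_singleton.1 hn]
    · exact hq hq0
  refine hsum.hasSum.congr_fun fun n => ?_
  rw [FormalMultilinearSeries.coeff_ofScalars, smul_eq_mul, mul_comm]

theorem HasExpansion.tendsto (hf : HasExpansion f F) :
    Tendsto F (𝓝[≠] 0) (𝓝 ((coeff 0 f : ℤ) : ℂ)) := by
  have h := hf.hasFPowerSeriesAt.continuousAt.tendsto.mono_left (nhdsWithin_le_nhds (s := {0}ᶜ))
  rw [tsum_eq_single 0 fun n hn => by simp [hn], pow_zero, mul_one] at h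
  exact h.congr' (hf.mono fun q hq => hq.tsum_eq)

theorem HasExpansion.eventually_ne_zero (hf : HasExpansion f F) (h : coeff 0 f ≠ 0) :
    ∀ᶠ q in 𝓝[≠] 0, F q ≠ 0 :=
  hf.tendsto.eventually_ne (Int.cast_ne_zero.2 h)

theorem HasExpansion.unique (hf : HasExpansion f F) (hg : HasExpansion g F) : f = g := by
  have h0 := hf.sub hg
  have hzero : ∀ᶠ q in 𝓝[≠] 0, ∑' n, ((coeff n (f - g) : ℤ) : ℂ) * q ^ n = 0 :=
    h0.mono fun q hq => hq.tsum_eq.trans (sub_self _)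
  have han := h0.hasFPowerSeriesAt
  have hp := han.eq_zero_of_eventually
    (han.analyticAt.frequently_zero_iff_eventually_zero.1 hzero.frequently)
  refine sub_eq_zero.1 (PowerSeries.ext fun n => ?_)
  have hn := congrArg (FormalMultilinearSeries.coeff · n) hp
  simp only [FormalMultilinearSeries.coeff_ofScalars] at hn
  exact Int.cast_eq_zero.1 hn

end

theorem eq_of_forall_pow_eq_of_sum_mul_eq {N : ℕ} [NeZero N] {q : ℂ} (hq : q ≠ 0)
    {a b : ZMod N → ℂ}
    (h : ∀ x, x ^ N = q → ∑ j, x ^ j.val * a j = ∑ j, x ^ j.val * b j) : a = b := by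
  let p : Polynomial ℂ := ∑ j, Polynomial.monomial j.val (a j - b j)
  have hroots := Complex.isPrimitiveRoot_exp N (NeZero.ne N)
  have hp : p = 0 := by
    refine Polynomial.eq_zero_of_natDegree_lt_card_of_eval_eq_zero' p
      (Polynomial.nthRoots N q).toFinset (fun x hx => ?_) ?_
    · have hxq := (Polynomial.mem_nthRoots (NeZero.pos N)).1 (Multiset.mem_toFinset.1 hx)
      simp only [p, Polynomial.eval_finsetSum, Polynomial.eval_monomial, sub_mul, sum_sub_distrib,
        mul_comm (a _), mul_comm (b _), h x hxq, sub_self]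
    · rw [Multiset.toFinset_card_of_nodup (hroots.nthRoots_nodup hq), hroots.card_nthRoots,
        if_pos (IsAlgClosed.exists_pow_nat_eq q (NeZero.pos N))]
      refine (Polynomial.natDegree_sum_le _ _).trans_lt ((Finset.fold_max_lt _).2 ?_)
      exact ⟨NeZero.pos N, fun j _ => (Polynomial.natDegree_monomial_le _).trans_lt j.val_lt⟩
  ext j
  have hj := congrArg (Polynomial.coeff · j.val) hp
  simpa [p, Polynomial.finsetSum_coeff, Polynomial.coeff_monomial, (ZMod.val_injective N).eq_iff,
    sub_eq_zero] using hj

theorem HasExpansion.multisection {N : ℕ} [NeZero N] {f : ℤ⟦X⟧} {F : ZMod N → ℂ → ℂ}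
    (hf : HasExpansion f fun x => ∑ j, x ^ j.val * F j (x ^ N)) (j : ZMod N) :
    HasExpansion (mk fun m => coeff (j.val + N * m) f) (F j) := by
  have hroots : ∀ᶠ q in 𝓝[≠] (0 : ℂ), ∀ x, x ^ N = q →
      HasSum (fun n => ((coeff n f : ℤ) : ℂ) * x ^ n) (∑ j, x ^ j.val * F j q) := by
    obtain ⟨ε, hε, hball⟩ := Metric.mem_nhdsWithin_iff.1 hf
    filter_upwards [self_mem_nhdsWithin,
      nhdsWithin_le_nhds (Metric.ball_mem_nhds 0 (pow_pos hε N))] with q hq0 hq x hx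
    have hx0 : x ≠ 0 := fun h => hq0 (by simp [← hx, h, NeZero.ne N])
    have hxε : x ∈ Metric.ball 0 ε := by
      rw [mem_ball_zero_iff, ← hx, norm_pow] at hq
      exact mem_ball_zero_iff.2 (lt_of_pow_lt_pow_left₀ N hε.le hq)
    simpa only [Set.mem_ofPred_eq, hx] using hball ⟨hxε, hx0⟩
  filter_upwards [hroots, self_mem_nhdsWithin] with q hq hq0
  have hterm {x : ℂ} (hx : x ^ N = q) (j : ZMod N) (m : ℕ) :
      ((coeff (j.val + N * m) f : ℤ) : ℂ) * x ^ (j.val + N * m)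
        = x ^ j.val * (((coeff (j.val + N * m) f : ℤ) : ℂ) * q ^ m) := by
    rw [pow_add, pow_mul, hx]
    ring
  have hsum (j : ZMod N) : Summable fun m => ((coeff (j.val + N * m) f : ℤ) : ℂ) * q ^ m := by
    obtain ⟨x, hx⟩ := IsAlgClosed.exists_pow_nat_eq q (NeZero.pos N)
    have hx0 : x ^ j.val ≠ 0 := pow_ne_zero _ fun h => hq0 (by simp [← hx, h, NeZero.ne N])
    have hinj : Function.Injective fun m => j.val + N * m :=
      (add_right_injective _).comp (mul_right_injective₀ (NeZero.ne N))
    have h := (hq x hx).summable.comp_injective hinj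
    simp only [Function.comp_def, hterm hx] at h
    exact (summable_mul_left_iff hx0).1 h
  have hF := eq_of_forall_pow_eq_of_sum_mul_eq (a := fun j => F j q)
    (b := fun j => ∑' m, ((coeff (j.val + N * m) f : ℤ) : ℂ) * q ^ m) hq0 fun x hx => by
      rw [← (hq x hx).tsum_eq, Nat.sumByResidueClasses (hq x hx).summable N]
      simp only [hterm hx, tsum_mul_left]
  simp only [congrFun hF j, coeff_mk]
  exact (hsum j).hasSum

theorem eventually_norm_lt_one : ∀ᶠ q : ℂ in 𝓝[≠] 0, ‖q‖ < 1 :=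
  nhdsWithin_le_nhds (mem_of_superset (Metric.ball_mem_nhds 0 one_pos) fun _ => mem_ball_zero_iff.1)

theorem hasExpansion_tsum {ι : Type*} {c : ι → ℤ} {e : ι → ℕ} (he : Tendsto e cofinite atTop)
    (hc : ∀ q : ℂ, ‖q‖ < 1 → Summable fun i => (c i : ℂ) * q ^ e i) :
    HasExpansion (∑' i, (c i : ℤ⟦X⟧) * X ^ e i) fun q => ∑' i, (c i : ℂ) * q ^ e i :=
  hasExpansion_of_hasSum (summable_of_X_pow_dvd he fun _ => dvd_mul_left _ _).hasSum
    (eventually_norm_lt_one.mono fun q hq => (hc q hq).hasSum)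

section AltLambert

variable {u d : ℕ → ℕ} {q : ℂ}

/-- The alternating Lambert series `∑ (-1)^n X^(u n) / (1 - X^(d n))`, expanded into monomials. -/
noncomputable def altLambert (u d : ℕ → ℕ) : ℤ⟦X⟧ :=
  ∑' p : ℕ × ℕ, (-1) ^ p.1 * X ^ (u p.1 + d p.1 * p.2)

/-- The analytic function near the origin with expansion `altLambert u d`. -/
noncomputable def altLambertFun (u d : ℕ → ℕ) (q : ℂ) : ℂ :=
  ∑' n, (-1) ^ n * q ^ u n / (1 - q ^ d n)

theorem tendsto_exponent_altLambert (hu : ∀ n, n ≤ u n) (hd : ∀ n, 0 < d n) :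
    Tendsto (fun p : ℕ × ℕ => u p.1 + d p.1 * p.2) cofinite atTop := by
  refine tendsto_atTop.2 fun N => eventually_cofinite.2 ?_
  refine (range N ×ˢ range N).finite_toSet.subset fun p hp => ?_
  have hp1 := hu p.1
  have hp2 := Nat.le_mul_of_pos_left p.2 (hd p.1)
  simp only [Set.mem_ofPred_eq, not_le] at hp
  simp only [coe_product, coe_range, Set.mem_prod, Set.mem_Iio]
  omega

theorem hasSum_altLambert (hu : ∀ n, n ≤ u n) (hd : ∀ n, 0 < d n) :
    HasSum (fun p : ℕ × ℕ => (-1) ^ p.1 * X ^ (u p.1 + d p.1 * p.2)) (altLambert u d) :=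
  (summable_of_X_pow_dvd (tendsto_exponent_altLambert hu hd) fun _ => dvd_mul_left _ _).hasSum

theorem summable_altLambert_apply (hu : ∀ n, n ≤ u n) (hd : ∀ n, 0 < d n) (hq : ‖q‖ < 1) :
    Summable fun p : ℕ × ℕ => (-1) ^ p.1 * q ^ (u p.1 + d p.1 * p.2) := by
  have hgeom := summable_geometric_of_lt_one (norm_nonneg q) hq
  refine (hgeom.mul_of_nonneg hgeom (fun _ => by positivity) fun _ => by positivity).of_norm_bounded
    fun p => ?_
  rw [norm_mul, norm_pow, norm_neg, norm_one, one_pow, one_mul, norm_pow, ← pow_add]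
  exact pow_le_pow_of_le_one (norm_nonneg q) hq.le
    (add_le_add (hu _) (Nat.le_mul_of_pos_left _ (hd _)))

theorem hasSum_altLambertFun_tsum (hu : ∀ n, n ≤ u n) (hd : ∀ n, 0 < d n) (hq : ‖q‖ < 1) :
    HasSum (fun n => (-1) ^ n * q ^ u n / (1 - q ^ d n))
      (∑' p : ℕ × ℕ, (-1) ^ p.1 * q ^ (u p.1 + d p.1 * p.2)) := by
  refine (summable_altLambert_apply hu hd hq).hasSum.prod_fiberwise fun n => ?_
  have hqd : ‖q ^ d n‖ < 1 := by
    rw [norm_pow]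
    exact pow_lt_one₀ (norm_nonneg q) hq (hd n).ne'
  simpa only [pow_add, pow_mul, mul_assoc, div_eq_mul_inv] using
    (hasSum_geometric_of_norm_lt_one hqd).mul_left ((-1) ^ n * q ^ u n)

theorem hasSum_altLambertFun (hu : ∀ n, n ≤ u n) (hd : ∀ n, 0 < d n) (hq : ‖q‖ < 1) :
    HasSum (fun n => (-1) ^ n * q ^ u n / (1 - q ^ d n)) (altLambertFun u d q) :=
  (hasSum_altLambertFun_tsum hu hd hq).summable.hasSum

theorem hasExpansion_altLambert (hu : ∀ n, n ≤ u n) (hd : ∀ n, 0 < d n) :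
    HasExpansion (altLambert u d) (altLambertFun u d) := by
  have h := hasExpansion_tsum (c := fun p => (-1) ^ p.1) (tendsto_exponent_altLambert hu hd)
    fun q hq => by simpa using summable_altLambert_apply hu hd hq
  push_cast at h
  exact h.congr (eventually_norm_lt_one.mono fun q hq =>
    (hasSum_altLambertFun_tsum hu hd hq).tsum_eq.symm)

end AltLambert

/-- The Lambert series `∑ (-1)^n X^((n+1)² + j(n+1)) / (1 - X^(5(n+1)))`, as an alternating Lambert
series with these exponents. -/
noncomputable def rankLambert (j : ℕ) : ℤ⟦X⟧ :=
  altLambert (fun n => (n + 1) ^ 2 + j * (n + 1)) fun n => 5 * (n + 1)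

/-- The analytic function near the origin with expansion `rankLambert j`. -/
noncomputable def rankLambertFun (j : ℕ) : ℂ → ℂ :=
  altLambertFun (fun n => (n + 1) ^ 2 + j * (n + 1)) fun n => 5 * (n + 1)

theorem le_exponent_rankLambert (j n : ℕ) : n ≤ (n + 1) ^ 2 + j * (n + 1) := by
  nlinarith

theorem hasExpansion_rankLambert (j : ℕ) : HasExpansion (rankLambert j) (rankLambertFun j) :=
  hasExpansion_altLambert (le_exponent_rankLambert j) fun _ => Nat.succ_pos _

theorem hasSum_rankTheta_rankLambert (j : ℕ) :
    HasSum (fun k => rankTheta (5 * k + j)) (rankLambert j) := by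
  have h := hasSum_altLambert (d := fun n => 5 * (n + 1)) (le_exponent_rankLambert j)
    fun _ => Nat.succ_pos _
  refine ((Equiv.prodComm ℕ ℕ).hasSum_iff.2 h).prod_fiberwise fun k => ?_
  refine (hasSum_rankTheta (5 * k + j)).congr_fun fun n => ?_
  simp only [Function.comp_apply, Equiv.prodComm_apply, Prod.swap_prod_mk]
  ring

theorem one_sub_rankTheta_mul_rankDiffGenFun : (1 - 2 * rankTheta 0) * rankDiffGenFun
    = 1 - 2 * (2 * rankLambert 1 - rankLambert 2 + rankLambert 3 - 2 * rankLambert 4) := by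
  have hr := hasSum_rankTheta_rankLambert
  have h := ((((hr 1).mul_left 2).sub (hr 2)).add (hr 3)).sub ((hr 4).mul_left 2)
  linear_combination -hasSum_rankTheta_mod_five.unique (h.mul_left 2)

theorem neg_one_zpow_neg (m : ℤ) : (-1 : ℂ) ^ (-m) = (-1) ^ m := by
  rw [zpow_neg, ← inv_zpow, inv_neg, inv_one]

theorem neg_one_zpow_natCast_add_one (n : ℕ) : (-1 : ℂ) ^ ((n : ℤ) + 1) = -(-1) ^ n := by
  rw [zpow_add_one₀ (by simp), zpow_natCast, mul_neg_one]

theorem div_one_sub_inv {y : ℂ} (hy : y ≠ 0) (c : ℂ) : c / (1 - y⁻¹) = -(c * y / (1 - y)) := by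
  rw [show 1 - y⁻¹ = -((1 - y) / y) by field_simp; ring, div_neg, div_div_eq_mul_div]

theorem lambertTerm_neg {x : ℂ} (hx : x ≠ 0) (b n : ℤ) :
    lambertTerm x b (-n) = -lambertTerm x (5 - b) n := by
  rw [lambertTerm, mul_neg 5, zpow_neg x, div_one_sub_inv (zpow_ne_zero _ hx), neg_one_zpow_neg,
    mul_assoc, ← zpow_add₀ hx, lambertTerm]
  ring_nf

theorem lambertTerm_natCast_add_one (x : ℂ) (b n : ℕ) : lambertTerm x b ((n : ℤ) + 1)
    = -((-1) ^ n * x ^ ((n + 1) ^ 2 + b * (n + 1)) / (1 - x ^ (5 * (n + 1)))) := by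
  rw [lambertTerm, neg_one_zpow_natCast_add_one, ← zpow_natCast x, ← zpow_natCast x]
  push_cast
  ring_nf

theorem lambert_eq_rankLambertFun {x : ℂ} (hx : x ≠ 0) (hx1 : ‖x‖ < 1) {b c : ℕ} (hbc : b + c = 5) :
    lambert x b = rankLambertFun c x - rankLambertFun b x := by
  have hsum (j : ℕ) := hasSum_altLambertFun (d := fun n => 5 * (n + 1)) (le_exponent_rankLambert j)
    (fun _ => Nat.succ_pos _) hx1
  have hc : (5 : ℤ) - b = c := by omega
  have h := HasSum.of_add_one_of_neg_add_one (f := lambertTerm x b)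
    ((hsum b).neg.congr_fun fun n => lambertTerm_natCast_add_one x b n)
    ((hsum c).congr_fun fun n => by
      rw [lambertTerm_neg hx, hc, lambertTerm_natCast_add_one, neg_neg])
  have h0 : lambertTerm x b 0 = 0 := by simp [lambertTerm]
  rw [lambert, h.tsum_eq, h0, add_zero, neg_add_eq_sub, rankLambertFun, rankLambertFun]

theorem hasSum_phi_of_hasSum {q s : ℂ} (h : HasSum (fun n : ℕ => (-1) ^ n * q ^ (n + 1) ^ 2) s) :
    HasSum (fun n : ℤ => (-1) ^ n * q ^ (n * n)) (1 - 2 * s) := by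
  have hterm (n : ℕ) : (-1 : ℂ) ^ ((n : ℤ) + 1) * q ^ (((n : ℤ) + 1) * (n + 1))
      = -((-1) ^ n * q ^ (n + 1) ^ 2) := by
    rw [neg_one_zpow_natCast_add_one, ← zpow_natCast q]
    push_cast
    ring_nf
  convert HasSum.of_add_one_of_neg_add_one (f := fun n : ℤ => (-1 : ℂ) ^ n * q ^ (n * n))
    (h.neg.congr_fun hterm) (h.neg.congr_fun fun n => ?_) using 1
  · rw [zpow_zero, mul_zero, zpow_zero]
    ring
  · rw [neg_mul_neg, neg_one_zpow_neg, hterm]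

theorem summable_neg_one_pow_mul_pow_sq {q : ℂ} (hq : ‖q‖ < 1) :
    Summable fun n : ℕ => (-1) ^ n * q ^ (n + 1) ^ 2 := by
  refine (summable_geometric_of_lt_one (norm_nonneg q) hq).of_norm_bounded fun n => ?_
  rw [norm_mul, norm_pow, norm_neg, norm_one, one_pow, one_mul, norm_pow]
  exact pow_le_pow_of_le_one (norm_nonneg q) hq.le (by nlinarith)

theorem hasExpansion_phi : HasExpansion (1 - 2 * rankTheta 0) phi := by
  have hexp : Tendsto (fun n : ℕ => (n + 1) ^ 2) cofinite atTop :=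
    tendsto_atTop_mono (fun n => by nlinarith) Nat.cofinite_eq_atTop.le
  have h := hasExpansion_tsum (c := fun n : ℕ => (-1) ^ n) hexp fun q hq => by
    simpa using summable_neg_one_pow_mul_pow_sq hq
  push_cast at h
  rw [show ∑' n : ℕ, (-1) ^ n * X ^ (n + 1) ^ 2 = rankTheta 0 by simp [rankTheta]] at h
  have h' := (hasExpansion_intCast 1).sub ((hasExpansion_intCast 2).mul h)
  rw [Int.cast_one, Int.cast_ofNat] at h'
  refine h'.congr (eventually_norm_lt_one.mono fun q hq => ?_)
  rw [phi, (hasSum_phi_of_hasSum (summable_neg_one_pow_mul_pow_sq hq).hasSum).tsum_eq]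
  push_cast
  rfl

theorem hasExpansion_one_sub_rankTheta_mul_rankDiffGenFun :
    HasExpansion ((1 - 2 * rankTheta 0) * rankDiffGenFun)
      fun x => 1 + 4 * lambert x 1 - 2 * lambert x 2 := by
  have hr := hasExpansion_rankLambert
  have h2 := hasExpansion_intCast 2
  have h := (hasExpansion_intCast 1).sub
    (h2.mul ((((h2.mul (hr 1)).sub (hr 2)).add (hr 3)).sub (h2.mul (hr 4))))
  rw [Int.cast_one, Int.cast_ofNat] at h
  rw [one_sub_rankTheta_mul_rankDiffGenFun]
  refine h.congr ?_
  filter_upwards [self_mem_nhdsWithin, eventually_norm_lt_one] with x hx hx1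
  have h14 := lambert_eq_rankLambertFun hx hx1 (b := 1) (c := 4) rfl
  have h23 := lambert_eq_rankLambertFun hx hx1 (b := 2) (c := 3) rfl
  push_cast at h14 h23 ⊢
  rw [h14, h23]
  ring

theorem coeff_genFun_mono {f g : ℕ → ℕ → ℤ} (h : ∀ l k, f l k ≤ g l k) (n : ℕ) :
    coeff n (genFun f) ≤ coeff n (genFun g) := by
  simp only [coeff_genFun]
  exact sum_le_sum fun P _ => mul_le_mul_of_nonneg_left (h _ _) (by positivity)

theorem coeff_rankGenFun₂_nonneg (m n : ℕ) : 0 ≤ coeff n (rankGenFun₂ m) := by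
  rw [rankGenFun₂, rankGenFun, rankGenFun, ← map_add]
  refine le_of_eq_of_le (by rw [map_zero, map_zero]) (coeff_genFun_mono (f := 0) (fun l k => ?_) n)
  simp only [Pi.zero_apply, Pi.add_apply]
  split_ifs <;> norm_num

theorem coeff_genFun_one_le (n : ℕ) : coeff n (genFun fun _ _ => 1) ≤ 2 ^ n := by
  induction n with
  | zero => simp [coeff_genFun, Finset.sum_const]
  | succ n ih =>
    have hrec := congrArg (coeff (n + 1)) (rankGenFun₂_add 0)
    have hone := congrArg (coeff (n + 1)) genFun_one_eq_one_add
    have hnonneg := coeff_rankGenFun₂_nonneg (0 + 2) n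
    rw [zero_add, pow_one, mul_right_comm, map_add, coeff_succ_X_mul, coeff_succ_mul_X,
      two_mul, map_add] at hrec
    rw [map_add, coeff_one, if_neg n.succ_ne_zero] at hone
    rw [pow_succ]
    linarith

theorem hasExpansion_rankDiffGenFun :
    HasExpansion rankDiffGenFun fun q => ∑' n, ((coeff n rankDiffGenFun : ℤ) : ℂ) * q ^ n := by
  have hbound (n : ℕ) : |coeff n rankDiffGenFun| ≤ 2 ^ n := by
    refine abs_le.2 ⟨?_, ?_⟩
    · refine (neg_le_neg (coeff_genFun_one_le n)).trans ?_
      rw [← map_neg, ← map_neg, rankDiffGenFun_eq]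
      exact coeff_genFun_mono (fun l k => by
        simp only [Pi.neg_apply]
        split_ifs <;> norm_num) n
    · refine le_trans ?_ (coeff_genFun_one_le n)
      rw [rankDiffGenFun_eq]
      exact coeff_genFun_mono (fun l k => by split_ifs <;> norm_num) n
  have hball : Metric.ball (0 : ℂ) 2⁻¹ ∈ 𝓝[≠] 0 :=
    nhdsWithin_le_nhds (Metric.ball_mem_nhds 0 (by norm_num))
  filter_upwards [hball] with q hq
  have hq2 : 2 * ‖q‖ < 1 := by linarith [mem_ball_zero_iff.1 hq]
  refine (Summable.of_norm_bounded (summable_geometric_of_lt_one (by positivity) hq2)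
    fun n => ?_).hasSum
  rw [norm_mul, norm_pow, mul_pow, Complex.norm_intCast]
  refine mul_le_mul_of_nonneg_right ?_ (by positivity)
  exact_mod_cast hbound n

/-- The term `thetaTerm₁₀ q k r` as a power series in `q`, for `1 ≤ k ≤ 9`; other values of `k` can
make the exponent negative, and it is then truncated. -/
noncomputable def thetaGenFunTerm (k r : ℤ) : ℤ⟦X⟧ :=
  ((Int.negOnePow r : ℤ) : ℤ⟦X⟧) * X ^ (5 * r * (r - 1) + k * r).toNat

/-- The theta function `theta₁₀ q k` as a power series in `q`, for `1 ≤ k ≤ 9`. -/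
noncomputable def thetaGenFun (k : ℤ) : ℤ⟦X⟧ :=
  ∑' r : ℤ, thetaGenFunTerm k r

section

variable {k : ℤ}

theorem natAbs_le_exponent_thetaGenFun (hk : 1 ≤ k) (hk9 : k ≤ 9) (r : ℤ) :
    (r.natAbs : ℤ) ≤ 5 * r * (r - 1) + k * r := by
  rw [Int.natCast_natAbs]
  rcases lt_trichotomy r 0 with hr | rfl | hr
  · rw [abs_of_neg hr]
    nlinarith
  · simp
  · rw [abs_of_pos hr]
    nlinarith

theorem tendsto_exponent_thetaGenFun (hk : 1 ≤ k) (hk9 : k ≤ 9) :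
    Tendsto (fun r : ℤ => (5 * r * (r - 1) + k * r).toNat) cofinite atTop := by
  refine tendsto_atTop.2 fun N => eventually_cofinite.2 ?_
  refine (Set.finite_Icc (-N : ℤ) N).subset fun r hr => ?_
  have hle := natAbs_le_exponent_thetaGenFun hk hk9 r
  simp only [Set.mem_ofPred_eq, not_le] at hr
  simp only [Set.mem_Icc]
  omega

theorem hasSum_thetaGenFun (hk : 1 ≤ k) (hk9 : k ≤ 9) :
    HasSum (thetaGenFunTerm k) (thetaGenFun k) :=
  (summable_of_X_pow_dvd (tendsto_exponent_thetaGenFun hk hk9) fun _ => dvd_mul_left _ _).hasSum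

theorem coeff_zero_thetaGenFun (hk : 1 ≤ k) (hk9 : k ≤ 9) : coeff 0 (thetaGenFun k) = 1 := by
  have h := (hasSum_thetaGenFun hk hk9).map (coeff 0) (WithPiTopology.continuous_coeff ℤ 0)
  refine h.unique ?_
  convert hasSum_single (0 : ℤ) fun r hr => ?_
  · simp [thetaGenFunTerm]
  · have hle := natAbs_le_exponent_thetaGenFun hk hk9 r
    rw [Function.comp_apply, thetaGenFunTerm, coeff_mul_X_pow', if_neg (by omega)]

theorem hasExpansion_thetaGenFun (hk : 1 ≤ k) (hk9 : k ≤ 9) :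
    HasExpansion (thetaGenFun k) (theta₁₀ · k) := by
  refine hasExpansion_of_hasSum (c := fun r => Int.negOnePow r) (hasSum_thetaGenFun hk hk9) ?_
  filter_upwards [self_mem_nhdsWithin, eventually_norm_lt_one] with q hq hq1
  rw [theta₁₀_eq_tsum hq]
  refine (summable_thetaTerm₁₀ hq hq1 k).hasSum.congr_fun fun r => ?_
  have hle := natAbs_le_exponent_thetaGenFun hk hk9 r
  rw [thetaTerm₁₀, Int.cast_negOnePow, ← zpow_natCast q, Int.toNat_of_nonneg (by omega)]

end

theorem eventually_isRegular : ∀ᶠ q in 𝓝[≠] 0, IsRegular q := by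
  have htheta : ∀ᶠ q in 𝓝[≠] 0, ∀ k ∈ Set.Icc (1 : ℤ) 9, theta₁₀ q k ≠ 0 :=
    (Set.finite_Icc _ _).eventually_all.2 fun k hk =>
      (hasExpansion_thetaGenFun hk.1 hk.2).eventually_ne_zero
        (by rw [coeff_zero_thetaGenFun hk.1 hk.2]; exact one_ne_zero)
  filter_upwards [self_mem_nhdsWithin, eventually_norm_lt_one, htheta] with q hq hq1 hθ
  exact ⟨hq, hq1, fun k hk hk9 => hθ k ⟨hk, hk9⟩⟩

theorem hasExpansion_rankDiff : HasExpansion rankDiffGenFun rankDiff := by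
  have hpow : Tendsto (fun x : ℂ => x ^ 5) (𝓝[≠] 0) (𝓝[≠] 0) := by
    refine tendsto_nhdsWithin_iff.2 ⟨?_, ?_⟩
    · exact ((continuous_pow 5).tendsto' 0 0 (by simp)).mono_left nhdsWithin_le_nhds
    · exact eventually_mem_nhdsWithin.mono fun x hx => pow_ne_zero 5 hx
  have hphi : ∀ᶠ x in 𝓝[≠] 0, phi x ≠ 0 := hasExpansion_phi.eventually_ne_zero fun h => by
    have hone := congrArg (coeff 0) genFun_one_mul
    rw [coeff_mul, Finset.Nat.antidiagonal_zero, sum_singleton, h, mul_zero, coeff_zero_one] at hone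
    exact zero_ne_one hone
  have hmul := hasExpansion_phi.mul hasExpansion_rankDiffGenFun
  refine hasExpansion_rankDiffGenFun.congr ?_
  filter_upwards [hphi, hmul, hasExpansion_one_sub_rankTheta_mul_rankDiffGenFun,
    hpow.eventually eventually_isRegular, self_mem_nhdsWithin, eventually_norm_lt_one]
    with x hphi hmul hD hreg hx hx1
  exact mul_left_cancel₀ hphi ((hmul.unique hD).trans (phi_mul_rankDiff hx hx1 hreg).symm)

theorem hasExpansion_rankDiff₄ :
    HasExpansion (mk fun m => coeff (4 + 5 * m) rankDiffGenFun) rankDiff₄ := by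
  refine HasExpansion.multisection (N := 5) (F := ![rankDiff₀, rankDiff₁, 0, rankDiff₃, rankDiff₄])
    (hasExpansion_rankDiff.congr (.of_forall fun x => ?_)) 4
  refine (Eq.trans (Fin.sum_univ_five _) ?_).symm
  simp [ZMod.val, rankDiff]

/-- The alternating Lambert series `∑ (-1)^s X^(5s² + as + b) / (1 - X^(10s + d))`. The two
halves of the bilateral series `lerch₁₀ q 3 (-4)` are of this form. -/
noncomputable def lerchLambert (a b d : ℕ) : ℤ⟦X⟧ :=
  altLambert (fun s => 5 * s ^ 2 + a * s + b) fun s => 10 * s + d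

theorem le_exponent_lerchLambert (a b s : ℕ) : s ≤ 5 * s ^ 2 + a * s + b := by
  nlinarith

theorem lerch₁₀_three_neg_four {q : ℂ} (hq : q ≠ 0) (hq1 : ‖q‖ < 1) :
    lerch₁₀ q 3 (-4) = -(altLambertFun (fun s => 5 * s ^ 2 + 12 * s + 4) (fun s => 10 * s + 4) q
      + altLambertFun (fun s => 5 * s ^ 2 + 8 * s + 3) (fun s => 10 * s + 6) q) := by
  have h₁ := hasSum_altLambertFun (le_exponent_lerchLambert 12 4)
    (fun s => (10 * s + 3).succ_pos) hq1
  have h₂ := hasSum_altLambertFun (le_exponent_lerchLambert 8 3)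
    (fun s => (10 * s + 5).succ_pos) hq1
  have hneg := (Equiv.neg ℤ).hasSum_iff.2 (summable_lerch₁₀ hq hq1 3 (-4)).hasSum
  rw [← lerch₁₀_eq_tsum hq] at hneg
  rw [neg_add]
  refine hneg.unique (HasSum.of_nat_of_neg_add_one (h₁.neg.congr_fun fun n => ?_)
    (h₂.neg.congr_fun fun n => ?_))
  · rw [Function.comp_apply, Equiv.neg_apply, thetaTerm₁₀, neg_one_zpow_neg, zpow_natCast,
      show (-4 : ℤ) + 10 * -n = -(10 * n + 4 : ℕ) by push_cast; ring, zpow_neg,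
      div_one_sub_inv (zpow_ne_zero _ hq), mul_assoc, ← zpow_add₀ hq, ← zpow_natCast q,
      ← zpow_natCast q]
    push_cast
    ring_nf
  · rw [Function.comp_apply, Equiv.neg_apply, neg_neg, thetaTerm₁₀, neg_one_zpow_natCast_add_one,
      ← zpow_natCast q, ← zpow_natCast q]
    push_cast
    ring_nf

theorem X_mul_mk_coeff_rankDiffGenFun_mul_thetaGenFun :
    X * PowerSeries.mk (fun m => coeff (4 + 5 * m) rankDiffGenFun) * thetaGenFun 3
      = -2 * (lerchLambert 12 4 4 + lerchLambert 8 3 6) := by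
  have hlhs := (hasExpansion_X.mul hasExpansion_rankDiff₄).mul
    (hasExpansion_thetaGenFun (k := 3) (by norm_num) (by norm_num))
  have h₁ := hasExpansion_altLambert (le_exponent_lerchLambert 12 4) fun s => (10 * s + 3).succ_pos
  have h₂ := hasExpansion_altLambert (le_exponent_lerchLambert 8 3) fun s => (10 * s + 5).succ_pos
  have hrhs := (hasExpansion_intCast (-2)).mul (h₁.add h₂)
  rw [show ((-2 : ℤ) : ℤ⟦X⟧) = -2 by norm_num] at hrhs
  refine hlhs.unique (hrhs.congr ?_)
  filter_upwards [eventually_isRegular] with q hreg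
  have hθ := hreg.theta₁₀_ne_zero 3 (by norm_num) (by norm_num)
  have hq := hreg.ne_zero
  rw [id, rankDiff₄, lerch₁₀_three_neg_four hq hreg.norm_lt_one]
  field_simp
  push_cast
  ring

/-! ### Gaussian binomial coefficients -/

section

variable {R : Type*} [CommRing R] (q : R)

/-- The Gaussian binomial coefficient `[n, k]` at `q`, by its Pascal recurrence. -/
def gaussBinom : ℕ → ℕ → R
  | _, 0 => 1
  | 0, _ + 1 => 0
  | n + 1, k + 1 => gaussBinom n k + q ^ (k + 1) * gaussBinom n (k + 1)

/-- The `q`-Pochhammer symbol `(q; q)_n`. -/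
def qPochhammer (n : ℕ) : R :=
  ∏ i ∈ range n, (1 - q ^ (i + 1))

theorem gaussBinom_zero_right (n : ℕ) : gaussBinom q n 0 = 1 := by
  cases n <;> rfl

theorem gaussBinom_succ_succ (n k : ℕ) : gaussBinom q (n + 1) (k + 1)
    = gaussBinom q n k + q ^ (k + 1) * gaussBinom q n (k + 1) :=
  rfl

theorem gaussBinom_eq_zero_of_lt {n k : ℕ} (h : n < k) : gaussBinom q n k = 0 := by
  induction n generalizing k with
  | zero => obtain ⟨k, rfl⟩ := Nat.exists_eq_succ_of_ne_zero h.ne'; rfl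
  | succ n ih =>
    obtain ⟨k, rfl⟩ := Nat.exists_eq_succ_of_ne_zero (Nat.ne_zero_of_lt h)
    rw [gaussBinom_succ_succ, ih (by omega), ih (by omega), mul_zero, add_zero]

theorem qPochhammer_succ (n : ℕ) :
    qPochhammer q (n + 1) = qPochhammer q n * (1 - q ^ (n + 1)) :=
  prod_range_succ _ _

theorem gaussBinom_mul_qPochhammer_mul_qPochhammer (k l : ℕ) :
    gaussBinom q (k + l) k * qPochhammer q k * qPochhammer q l = qPochhammer q (k + l) := by
  induction hn : k + l generalizing k l with
  | zero =>
    obtain ⟨rfl, rfl⟩ : k = 0 ∧ l = 0 := by omega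
    simp [gaussBinom_zero_right, qPochhammer]
  | succ n ih =>
    rcases k with - | k
    · obtain rfl : l = n + 1 := by omega
      simp [gaussBinom_zero_right, qPochhammer]
    rcases l with - | l
    · obtain rfl : k = n := by omega
      rw [gaussBinom_succ_succ, gaussBinom_eq_zero_of_lt q k.lt_succ_self, qPochhammer_succ]
      linear_combination (1 - q ^ (k + 1)) * ih k 0 rfl
    · have hk := ih k (l + 1) (by omega)
      have hl := ih (k + 1) l (by omega)
      have hpow : q ^ (n + 1) = q ^ (k + 1) * q ^ (l + 1) := by rw [← pow_add]; congr 1; omega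
      rw [qPochhammer_succ] at hk hl
      rw [gaussBinom_succ_succ, qPochhammer_succ q k, qPochhammer_succ q l, qPochhammer_succ q n,
        hpow]
      linear_combination (1 - q ^ (k + 1)) * hk + q ^ (k + 1) * (1 - q ^ (l + 1)) * hl

/-- Rothe's `q`-binomial theorem. -/
theorem prod_add_mul_pow_eq_sum_gaussBinom (a b : R) (n : ℕ) :
    ∏ i ∈ range n, (a + b * q ^ i)
      = ∑ k ∈ range (n + 1), gaussBinom q n k * q ^ k.choose 2 * b ^ k * a ^ (n - k) := by
  induction n generalizing b with
  | zero => simp [gaussBinom_zero_right]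
  | succ n ih =>
    have hprod : ∏ i ∈ range (n + 1), (a + b * q ^ i)
        = (∏ i ∈ range n, (a + b * q * q ^ i)) * (a + b) := by
      rw [prod_range_succ', pow_zero, mul_one]
      simp only [pow_succ', mul_assoc]
    have hsum : ∑ k ∈ range (n + 1),
          gaussBinom q n k * q ^ k.choose 2 * (b * q) ^ k * a ^ (n - k) * a
        = (∑ k ∈ range (n + 1), q ^ (k + 1) * gaussBinom q n (k + 1) * q ^ (k + 1).choose 2
          * b ^ (k + 1) * a ^ (n - k)) + a ^ (n + 1) := by
      have htop : gaussBinom q n (n + 1) = 0 := gaussBinom_eq_zero_of_lt q n.lt_succ_self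
      rw [sum_range_succ', sum_range_succ _ n, htop]
      simp only [gaussBinom_zero_right, Nat.choose_zero_succ, pow_zero, one_mul, mul_zero, zero_mul,
        add_zero, Nat.sub_zero, pow_succ a n]
      refine congrArg (· + _) (sum_congr rfl fun k hk => ?_)
      rw [show n - k = n - (k + 1) + 1 by have := mem_range.1 hk; omega]
      ring
    rw [hprod, ih, mul_add, sum_mul, sum_mul, hsum, sum_range_succ' _ (n + 1), add_right_comm,
      ← sum_add_distrib]
    simp only [gaussBinom_zero_right, Nat.choose_zero_succ, pow_zero, one_mul, Nat.sub_zero]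
    refine congrArg (· + _) (sum_congr rfl fun k _ => ?_)
    rw [gaussBinom_succ_succ, Nat.choose_succ_succ' k 1, Nat.choose_one_right, pow_add q k,
      Nat.add_sub_add_right]
    ring

theorem isCoprime_pow_qPochhammer (m n : ℕ) : IsCoprime (q ^ m) (qPochhammer q n) :=
  IsCoprime.pow_left <| IsCoprime.prod_right fun i _ => ⟨q ^ i, 1, by ring⟩

theorem pow_dvd_qPochhammer_sub {m n : ℕ} (h : m ≤ n) :
    q ^ (m + 1) ∣ qPochhammer q n - qPochhammer q m := by
  induction n, h using Nat.le_induction with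
  | base => rw [sub_self]; exact dvd_zero _
  | succ n hn ih =>
    have hpow : q ^ (m + 1) ∣ q ^ (n + 1) := pow_dvd_pow _ (by omega)
    convert dvd_sub ih (hpow.mul_left (qPochhammer q n)) using 1
    rw [qPochhammer_succ]
    ring

theorem pow_dvd_qPochhammer_mul_gaussBinom_sub_one {k l m n : ℕ} (hk : m ≤ k) (hl : m ≤ l)
    (hn : m ≤ n) : q ^ (m + 1) ∣ qPochhammer q n * gaussBinom q (k + l) k - 1 := by
  refine ((isCoprime_pow_qPochhammer q _ k).mul_right
    (isCoprime_pow_qPochhammer q _ l)).dvd_of_dvd_mul_right ?_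
  obtain ⟨x, hx⟩ := pow_dvd_qPochhammer_sub q hk
  obtain ⟨y, hy⟩ := pow_dvd_qPochhammer_sub q hl
  obtain ⟨z, hz⟩ := pow_dvd_qPochhammer_sub q hn
  obtain ⟨w, hw⟩ := pow_dvd_qPochhammer_sub q (hk.trans (k.le_add_right l))
  refine ⟨z * qPochhammer q (k + l) + qPochhammer q m * w - x * qPochhammer q l
    - qPochhammer q m * y, ?_⟩
  linear_combination qPochhammer q n * gaussBinom_mul_qPochhammer_mul_qPochhammer q k l
    + qPochhammer q (k + l) * hz + qPochhammer q m * hw - qPochhammer q l * hx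
    - qPochhammer q m * hy

end

/-! ### The triple product -/

section

variable {R : Type*} [CommRing R]

theorem prod_mul_pow_range (b q : R) (n : ℕ) :
    ∏ i ∈ range n, b * q ^ i = b ^ n * q ^ n.choose 2 := by
  rw [prod_mul_distrib, prod_const, card_range, prod_pow_eq_pow_sum, sum_range_id,
    Nat.choose_two_right]

/-- The finite Jacobi triple product, multiplied by a monomial that clears the denominators. It is
the `q`-binomial theorem for `∏ (q ^ N + x * q ^ i)`, whose factors are `q ^ N * (1 + x * q ^ j)`
for `i = N + j` and `x * q ^ i * (1 + y * q ^ (N - 1 - i))` for `i < N`. -/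
theorem finite_jacobi_triple_product {x y q : R} (hq : x * y = q) (N : ℕ) :
    x ^ N * q ^ (N.choose 2 + N * N) * ∏ i ∈ range N, (1 + x * q ^ i) * (1 + y * q ^ i)
      = ∑ j ∈ range (N + N + 1),
        gaussBinom q (N + N) j * q ^ (j.choose 2 + N * (N + N - j)) * x ^ j := by
  have hlow : ∏ i ∈ range N, (q ^ N + x * q ^ i)
      = x ^ N * q ^ N.choose 2 * ∏ i ∈ range N, (1 + y * q ^ i) := by
    rw [← prod_mul_pow_range, ← prod_range_reflect (fun i => 1 + y * q ^ i), ← prod_mul_distrib]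
    refine prod_congr rfl fun i hi => ?_
    have hN : q ^ N = x * q ^ i * (y * q ^ (N - 1 - i)) := by
      rw [mul_mul_mul_comm, hq, ← pow_add, ← pow_succ']
      congr 1
      have := mem_range.1 hi
      omega
    rw [hN]
    ring
  have hhigh : ∏ i ∈ range N, (q ^ N + x * q ^ (N + i))
      = q ^ (N * N) * ∏ i ∈ range N, (1 + x * q ^ i) := by
    rw [pow_mul, pow_eq_prod_const (q ^ N) N, ← prod_mul_distrib]
    exact prod_congr rfl fun i _ => by ring
  have hrothe := prod_add_mul_pow_eq_sum_gaussBinom q (q ^ N) x (N + N)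
  rw [prod_range_add, hlow, hhigh] at hrothe
  rw [prod_mul_distrib]
  refine Eq.trans (by ring) (hrothe.trans (sum_congr rfl fun j _ => ?_))
  ring

end

/-- The finite triple product `∏ (1 - X^(10i + k)) (1 - X^(10i + l)) (1 - X^(10i + 10))` over
`i < N`, for `k + l = 10` a partial product of `thetaGenFun k`. -/
noncomputable def tripleProduct (k l N : ℕ) : ℤ⟦X⟧ :=
  ∏ i ∈ range N, (1 - X ^ (10 * i + k)) * (1 - X ^ (10 * i + l)) * (1 - X ^ (10 * i + 10))

theorem X_pow_dvd_sub_sum_of_hasSum {ι : Type*} {f : ι → ℤ⟦X⟧} {g : ℤ⟦X⟧} (hf : HasSum f g)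
    {s : Finset ι} {N : ℕ} (h : ∀ i ∉ s, X ^ N ∣ f i) : X ^ N ∣ g - ∑ i ∈ s, f i := by
  refine X_pow_dvd_iff.2 fun m hm => ?_
  have hsum := hf.map (coeff m) (WithPiTopology.continuous_coeff ℤ m)
  rw [map_sub, map_sum, sub_eq_zero]
  exact hsum.unique (hasSum_sum_of_ne_finset_zero fun i hi => X_pow_dvd_iff.1 (h i hi) m hm)

section

variable {k l : ℕ}

theorem pow_mul_neg_pow_eq_thetaGenFunTerm (hk : 1 ≤ k) (hk9 : k ≤ 9) {N j : ℕ} (hj : j ≤ N + N) :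
    (X ^ 10 : ℤ⟦X⟧) ^ (j.choose 2 + N * (N + N - j)) * (-X ^ k) ^ j
      = (-X ^ k) ^ N * (X ^ 10) ^ (N.choose 2 + N * N) * thetaGenFunTerm k (j - N) := by
  have hsign : ((Int.negOnePow (j - N) : ℤ) : ℤ⟦X⟧) * (-1) ^ N = (-1) ^ j := by
    have hunit : (Int.negOnePow (j - N) : ℤ) * (-1) ^ N = (-1) ^ j := by
      rw [← Int.coe_negOnePow_natCast, ← Int.coe_negOnePow_natCast, ← Units.val_mul,
        ← Int.negOnePow_add, sub_add_cancel]
    exact_mod_cast congrArg (Int.cast : ℤ → ℤ⟦X⟧) hunit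
  have hexp : 10 * (j.choose 2 + N * (N + N - j)) + k * j = k * N + 10 * (N.choose 2 + N * N)
      + (5 * ((j : ℤ) - N) * ((j : ℤ) - N - 1) + k * ((j : ℤ) - N)).toNat := by
    have hle := natAbs_le_exponent_thetaGenFun (k := k) (by omega) (by omega) (j - N)
    have hchoose (n : ℕ) : 2 * (n.choose 2 : ℤ) = n * (n - 1) := by
      qify
      rw [Nat.cast_choose_two]
      ring
    zify [hj]
    rw [Int.toNat_of_nonneg (by omega)]
    linear_combination 5 * hchoose j - 5 * hchoose N
  have hpow := congrArg ((X : ℤ⟦X⟧) ^ ·) hexp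
  simp only [pow_add _ (_ + _), pow_add _ (k * N), pow_add _ (10 * _), pow_mul] at hpow
  rw [neg_pow, neg_pow _ N, ← hsign, thetaGenFunTerm]
  linear_combination ((Int.negOnePow (j - N) : ℤ) : ℤ⟦X⟧) * (-1) ^ N * hpow

theorem tripleProduct_eq_sum (hk : 0 < k) (hl : 0 < l) (hkl : k + l = 10) (N : ℕ) :
    tripleProduct k l N = ∑ j ∈ range (N + N + 1),
      qPochhammer (X ^ 10) N * gaussBinom (X ^ 10) (N + N) j *
        thetaGenFunTerm k (j - N) := by
  have hq : (-X ^ k : ℤ⟦X⟧) * -X ^ l = X ^ 10 := by rw [neg_mul_neg, ← pow_add, hkl]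
  have hne : (-X ^ k : ℤ⟦X⟧) ^ N * (X ^ 10) ^ (N.choose 2 + N * N) ≠ 0 :=
    mul_ne_zero (pow_ne_zero _ (neg_ne_zero.2 (pow_ne_zero _ X_ne_zero)))
      (pow_ne_zero _ (pow_ne_zero _ X_ne_zero))
  refine mul_left_cancel₀ hne ?_
  have hprod : tripleProduct k l N = qPochhammer (X ^ 10) N
      * ∏ i ∈ range N, (1 + -X ^ k * (X ^ 10) ^ i) * (1 + -X ^ l * (X ^ 10) ^ i) := by
    rw [tripleProduct, qPochhammer, ← prod_mul_distrib]
    exact prod_congr rfl fun i _ => by ring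
  rw [hprod, mul_left_comm, finite_jacobi_triple_product hq, mul_sum, mul_sum]
  refine sum_congr rfl fun j hj => ?_
  rw [mul_assoc (gaussBinom _ _ _), pow_mul_neg_pow_eq_thetaGenFunTerm hk (by omega)
    (mem_range_succ_iff.1 hj)]
  ring

theorem X_pow_dvd_thetaGenFun_sub_sum (hk : 1 ≤ k) (hk9 : k ≤ 9) (N : ℕ) :
    X ^ N ∣ thetaGenFun k - ∑ j ∈ range (N + N + 1), thetaGenFunTerm k (j - N) := by
  let shift : ℕ ↪ ℤ := ⟨fun j => j - N, fun i j h => by simpa using h⟩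
  have h := X_pow_dvd_sub_sum_of_hasSum (s := (range (N + N + 1)).map shift) (N := N)
    (hasSum_thetaGenFun (k := k) (by omega) (by omega)) fun r hr => ?_
  · rwa [sum_map] at h
  have hr' : N ≤ r.natAbs := by
    by_contra! hlt
    refine hr (mem_map.2 ⟨(r + N).toNat, mem_range.2 (by omega), ?_⟩)
    change ((r + N).toNat : ℤ) - N = r
    omega
  have hexp := natAbs_le_exponent_thetaGenFun (k := k) (by omega) (by omega) r
  exact (pow_dvd_pow X (by omega)).mul_left _

theorem X_pow_dvd_thetaGenFun_sub_tripleProduct (hk : 0 < k) (hl : 0 < l) (hkl : k + l = 10)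
    (N : ℕ) : X ^ N ∣ thetaGenFun k - tripleProduct k l N := by
  rw [← sub_add_sub_cancel _ (∑ j ∈ range (N + N + 1), thetaGenFunTerm k (j - N))]
  refine (X_pow_dvd_thetaGenFun_sub_sum (by omega) (by omega) N).add ?_
  rw [tripleProduct_eq_sum hk hl hkl, ← sum_sub_distrib]
  refine dvd_sum fun j hj => ?_
  have hj' := mem_range.1 hj
  have hbinom : (X ^ 10 : ℤ⟦X⟧) ^ (min j (N + N - j) + 1)
      ∣ 1 - qPochhammer (X ^ 10) N * gaussBinom (X ^ 10) (N + N) j := by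
    have h := pow_dvd_qPochhammer_mul_gaussBinom_sub_one (X ^ 10 : ℤ⟦X⟧)
      (min_le_left j (N + N - j)) (min_le_right j (N + N - j)) (n := N) (by omega)
    rwa [Nat.add_sub_of_le (by omega), dvd_sub_comm] at h
  rw [← one_sub_mul]
  refine dvd_trans ?_ (mul_dvd_mul hbinom (dvd_mul_left _ _))
  rw [← pow_mul, ← pow_add]
  refine pow_dvd_pow X ?_
  have hexp := natAbs_le_exponent_thetaGenFun (k := k) (by omega) (by omega) (j - N)
  omega

end

/-! ### Positivity -/

/-- The integral power series with nonnegative coefficients. -/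
def nonnegCoeffs : Subsemiring ℤ⟦X⟧ where
  carrier := {f | ∀ n, 0 ≤ coeff n f}
  zero_mem' _ := by rw [map_zero]
  one_mem' n := by rw [coeff_one]; split_ifs <;> norm_num
  add_mem' hf hg n := by rw [map_add]; exact add_nonneg (hf n) (hg n)
  mul_mem' hf hg n := by rw [coeff_mul]; exact sum_nonneg fun p _ => mul_nonneg (hf p.1) (hg p.2)

theorem X_mem_nonnegCoeffs : X ∈ nonnegCoeffs := fun n => by
  rw [coeff_X]; split_ifs <;> norm_num

theorem coeff_add_mul_pos {f g : ℤ⟦X⟧} (hf : f ∈ nonnegCoeffs) (hg : g ∈ nonnegCoeffs) {m n : ℕ}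
    (hm : 0 < coeff m f) (hn : 0 < coeff n g) : 0 < coeff (m + n) (f * g) := by
  rw [coeff_mul]
  refine (mul_pos hm hn).trans_le ?_
  exact single_le_sum (f := fun p : ℕ × ℕ => coeff p.1 f * coeff p.2 g)
    (fun p _ => mul_nonneg (hf p.1) (hg p.2))
    (mem_antidiagonal.2 (rfl : (m, n).1 + (m, n).2 = m + n))

/-- The geometric series `1 / (1 - X^d)`, for `0 < d`. -/
def geomSeries (d : ℕ) : ℤ⟦X⟧ :=
  .mk fun n => if d ∣ n then 1 else 0

theorem geomSeries_mem_nonnegCoeffs (d : ℕ) : geomSeries d ∈ nonnegCoeffs := fun n => by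
  rw [geomSeries, coeff_mk]; split_ifs <;> norm_num

theorem coeff_mul_geomSeries (d n : ℕ) : coeff (d * n) (geomSeries d) = 1 := by
  rw [geomSeries, coeff_mk, if_pos (dvd_mul_right d n)]

theorem coeff_zero_geomSeries (d : ℕ) : coeff 0 (geomSeries d) = 1 :=
  coeff_mul_geomSeries d 0

theorem one_sub_X_pow_mul_geomSeries {d : ℕ} (hd : 0 < d) : (1 - X ^ d) * geomSeries d = 1 := by
  ext n
  rw [sub_mul, one_mul, map_sub, coeff_X_pow_mul', geomSeries, coeff_mk, coeff_mk, coeff_one]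
  rcases le_or_gt d n with h | h
  · obtain ⟨m, rfl⟩ := Nat.exists_eq_add_of_le h
    simp [hd.ne']
  · rcases Nat.eq_zero_or_pos n with rfl | hn
    · simp [hd.ne']
    · rw [if_neg h.not_ge, if_neg (Nat.not_dvd_of_pos_of_lt hn h), if_neg hn.ne', sub_zero]

/-- The inverse of `tripleProduct k l N` as a product of geometric series. -/
noncomputable def tripleProductInv (k l N : ℕ) : ℤ⟦X⟧ :=
  ∏ i ∈ range N, geomSeries (10 * i + k) * geomSeries (10 * i + l) * geomSeries (10 * i + 10)

section

variable {k l : ℕ}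

theorem tripleProduct_mul_tripleProductInv (hk : 0 < k) (hl : 0 < l) (N : ℕ) :
    tripleProduct k l N * tripleProductInv k l N = 1 := by
  rw [tripleProduct, tripleProductInv, ← prod_mul_distrib]
  refine prod_eq_one fun i _ => ?_
  rw [mul_mul_mul_comm, mul_mul_mul_comm (1 - X ^ (10 * i + k)),
    one_sub_X_pow_mul_geomSeries (by omega), one_sub_X_pow_mul_geomSeries (by omega),
    one_sub_X_pow_mul_geomSeries (by omega), one_mul, one_mul]

theorem coeff_mul_eq_of_thetaGenFun_mul_eq_one (hk : 0 < k) (hl : 0 < l) (hkl : k + l = 10)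
    {P : ℤ⟦X⟧} (hP : thetaGenFun k * P = 1) (f : ℤ⟦X⟧) (n : ℕ) :
    coeff n (f * P) = coeff n (f * tripleProductInv k l (n + 1)) := by
  have hinv := tripleProduct_mul_tripleProductInv hk hl (n + 1)
  have hsub : f * P - f * tripleProductInv k l (n + 1)
      = (thetaGenFun k - tripleProduct k l (n + 1)) * -(f * P * tripleProductInv k l (n + 1)) := by
    linear_combination f * tripleProductInv k l (n + 1) * hP - f * P * hinv
  have hdvd := (X_pow_dvd_thetaGenFun_sub_tripleProduct hk hl hkl (n + 1)).mul_right
    (-(f * P * tripleProductInv k l (n + 1)))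
  rw [← hsub] at hdvd
  rw [← sub_eq_zero, ← map_sub]
  exact X_pow_dvd_iff.1 hdvd n n.lt_succ_self

theorem one_sub_X_pow_mul_geomSeries_eq_sum (hk : 0 < k) (a : ℕ) :
    (1 - X ^ (k * a)) * geomSeries k = ∑ i ∈ range a, (X ^ k) ^ i := by
  rw [pow_mul, ← mul_neg_geom_sum, mul_right_comm, one_sub_X_pow_mul_geomSeries hk, one_mul]

theorem one_sub_X_pow_mul_geomSeries_mul_geomSeries (hk : 0 < k) (hl : 0 < l) (a b : ℕ) :
    (1 - X ^ (k * a + l * b)) * (geomSeries k * geomSeries l)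
      = (∑ i ∈ range a, (X ^ k) ^ i) * geomSeries l
        + (X ^ (k * a) * geomSeries k) * ∑ i ∈ range b, (X ^ l) ^ i := by
  rw [← one_sub_X_pow_mul_geomSeries_eq_sum hk, ← one_sub_X_pow_mul_geomSeries_eq_sum hl]
  ring

end

theorem sum_X_pow_pow_mem_nonnegCoeffs (d a : ℕ) :
    ∑ i ∈ range a, (X ^ d) ^ i ∈ nonnegCoeffs :=
  sum_mem fun i _ => pow_mem (pow_mem X_mem_nonnegCoeffs d) i

theorem coeff_sum_X_pow_pow_pos (d : ℕ) {a i : ℕ} (hi : i < a) :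
    0 < coeff (d * i) (∑ i ∈ range a, (X ^ d) ^ i : ℤ⟦X⟧) := by
  rw [map_sum]
  refine one_pos.trans_le (le_of_eq_of_le ?_ (single_le_sum (fun j _ =>
    pow_mem (pow_mem X_mem_nonnegCoeffs d) j (d * i)) (mem_range.2 hi)))
  rw [← pow_mul, coeff_X_pow_self]

section

variable {k l b : ℕ}

theorem one_sub_X_pow_mul_geomSeries_mem_nonnegCoeffs (hk : 0 < k) (hl : 0 < l) (a b : ℕ) :
    (1 - X ^ (k * a + l * b)) * (geomSeries k * geomSeries l) ∈ nonnegCoeffs := by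
  rw [one_sub_X_pow_mul_geomSeries_mul_geomSeries hk hl]
  exact add_mem (mul_mem (sum_X_pow_pow_mem_nonnegCoeffs k a) (geomSeries_mem_nonnegCoeffs l))
    (mul_mem (mul_mem (pow_mem X_mem_nonnegCoeffs _) (geomSeries_mem_nonnegCoeffs k))
      (sum_X_pow_pow_mem_nonnegCoeffs l b))

theorem coeff_one_sub_X_pow_mul_geomSeries_pos (hk : 0 < k) (hl : 0 < l) (a : ℕ) (hb : 0 < b)
    (i : ℕ) : 0 < coeff (k * i) ((1 - X ^ (k * a + l * b)) * (geomSeries k * geomSeries l)) := by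
  have hA := mul_mem (sum_X_pow_pow_mem_nonnegCoeffs k a) (geomSeries_mem_nonnegCoeffs l)
  have hX := mul_mem (pow_mem X_mem_nonnegCoeffs (k * a)) (geomSeries_mem_nonnegCoeffs k)
  have hB := mul_mem hX (sum_X_pow_pow_mem_nonnegCoeffs l b)
  rw [one_sub_X_pow_mul_geomSeries_mul_geomSeries hk hl, map_add]
  rcases lt_or_ge i a with hi | hi
  · refine add_pos_of_pos_of_nonneg ?_ (hB _)
    exact coeff_add_mul_pos (n := 0) (sum_X_pow_pow_mem_nonnegCoeffs k a)
      (geomSeries_mem_nonnegCoeffs l) (coeff_sum_X_pow_pow_pos k hi)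
      (one_pos.trans_eq (coeff_zero_geomSeries l).symm)
  · refine add_pos_of_nonneg_of_pos (hA _) ?_
    refine coeff_add_mul_pos (n := 0) hX (sum_X_pow_pow_mem_nonnegCoeffs l b) ?_
      (coeff_sum_X_pow_pow_pos l hb)
    obtain ⟨j, rfl⟩ := Nat.exists_eq_add_of_le hi
    rw [Nat.mul_eq, mul_add, add_comm, coeff_X_pow_mul, coeff_mul_geomSeries]
    exact one_pos

end

theorem exists_tripleProductInv_succ_eq (k l N : ℕ) : ∃ R ∈ nonnegCoeffs, 0 < coeff 0 R ∧
    tripleProductInv k l (N + 1) = geomSeries k * geomSeries l * (geomSeries 10 * R) := by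
  refine ⟨∏ i ∈ range N, geomSeries (10 * (i + 1) + k) * geomSeries (10 * (i + 1) + l)
    * geomSeries (10 * (i + 1) + 10), prod_mem fun i _ => mul_mem (mul_mem
    (geomSeries_mem_nonnegCoeffs _) (geomSeries_mem_nonnegCoeffs _))
    (geomSeries_mem_nonnegCoeffs _), ?_, ?_⟩
  · simp only [coeff_zero_eq_constantCoeff, map_prod, map_mul, ← coeff_zero_eq_constantCoeff_apply,
      coeff_zero_geomSeries, one_mul, prod_const_one, zero_lt_one]
  · rw [tripleProductInv, prod_range_succ']
    simp only [mul_zero, zero_add]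
    ring

section

variable {k l b : ℕ} {P : ℤ⟦X⟧}

theorem one_sub_X_pow_mul_mem_nonnegCoeffs (hk : 0 < k) (hl : 0 < l) (hkl : k + l = 10)
    (hP : thetaGenFun k * P = 1) (a b : ℕ) : (1 - X ^ (k * a + l * b)) * P ∈ nonnegCoeffs := by
  intro n
  obtain ⟨R, hR, -, hinv⟩ := exists_tripleProductInv_succ_eq k l n
  rw [coeff_mul_eq_of_thetaGenFun_mul_eq_one hk hl hkl hP, hinv, ← mul_assoc]
  exact mul_mem (one_sub_X_pow_mul_geomSeries_mem_nonnegCoeffs hk hl a b)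
    (mul_mem (geomSeries_mem_nonnegCoeffs 10) hR) n

theorem coeff_mul_one_sub_X_pow_mul_pos (hk : 0 < k) (hl : 0 < l) (hkl : k + l = 10)
    (hP : thetaGenFun k * P = 1) (a : ℕ) (hb : 0 < b) (i : ℕ) :
    0 < coeff (k * i) ((1 - X ^ (k * a + l * b)) * P) := by
  obtain ⟨R, hR, hR0, hinv⟩ := exists_tripleProductInv_succ_eq k l (k * i)
  rw [coeff_mul_eq_of_thetaGenFun_mul_eq_one hk hl hkl hP, hinv, ← mul_assoc]
  refine coeff_add_mul_pos (n := 0) (one_sub_X_pow_mul_geomSeries_mem_nonnegCoeffs hk hl a b)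
    (mul_mem (geomSeries_mem_nonnegCoeffs 10) hR)
    (coeff_one_sub_X_pow_mul_geomSeries_pos hk hl a hb i) ?_
  exact coeff_add_mul_pos (m := 0) (n := 0) (geomSeries_mem_nonnegCoeffs 10) hR
    (one_pos.trans_eq (coeff_zero_geomSeries 10).symm) hR0

end

theorem hasSum_even_add_odd_fst {M : Type*} [AddCommMonoid M] [TopologicalSpace M]
    [ContinuousAdd M] [RegularSpace M] {f : ℕ × ℕ → M} {S : M} (hf : HasSum f S) :
    HasSum (fun p : ℕ × ℕ => f (2 * p.1, p.2) + f (2 * p.1 + 1, p.2)) S := by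
  let swap : (ℕ × ℕ) × Fin 2 ≃ (ℕ × Fin 2) × ℕ :=
    ⟨fun p => ((p.1.1, p.2), p.1.2), fun p => ((p.1.1, p.2), p.1.2), fun _ => rfl, fun _ => rfl⟩
  let e : (ℕ × ℕ) × Fin 2 ≃ ℕ × ℕ :=
    swap.trans ((Nat.divModEquiv 2).symm.prodCongr (Equiv.refl ℕ))
  refine (e.hasSum_iff.2 hf).prod_fiberwise fun p => ?_
  convert hasSum_fintype _ using 1
  rw [Fin.sum_univ_two, mul_comm]
  rfl

section

variable {a b c d e k l : ℕ} {P : ℤ⟦X⟧}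

theorem hasSum_lerchLambert (a b : ℕ) (hd : 0 < d) : HasSum (fun p : ℕ × ℕ =>
      X ^ (20 * p.1 ^ 2 + 2 * a * p.1 + b + (20 * p.1 + d) * p.2)
        * (1 - X ^ (20 * p.1 + 10 * p.2 + a + 5))) (lerchLambert a b d) := by
  have hd' (n : ℕ) : 0 < 10 * n + d := by omega
  refine (hasSum_even_add_odd_fst
    (hasSum_altLambert (le_exponent_lerchLambert a b) hd')).congr_fun fun p => ?_
  rw [Even.neg_one_pow ⟨p.1, two_mul _⟩, Odd.neg_one_pow ⟨p.1, rfl⟩]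
  ring

theorem hasSum_coeff_lerchLambert_mul (a b : ℕ) (hd : 0 < d) (P : ℤ⟦X⟧) (n : ℕ) :
    HasSum (fun p : ℕ × ℕ => coeff n (X ^ (20 * p.1 ^ 2 + 2 * a * p.1 + b + (20 * p.1 + d) * p.2)
      * ((1 - X ^ (20 * p.1 + 10 * p.2 + a + 5)) * P))) (coeff n (lerchLambert a b d * P)) := by
  refine (((hasSum_lerchLambert a b hd).mul_right P).map (coeff n)
    (WithPiTopology.continuous_coeff ℤ n)).congr_fun fun p => ?_
  rw [Function.comp_apply, mul_assoc (X ^ _ : ℤ⟦X⟧)]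

theorem coeff_X_pow_mul_nonneg {f : ℤ⟦X⟧} (hf : f ∈ nonnegCoeffs) (e n : ℕ) :
    0 ≤ coeff n (X ^ e * f) :=
  mul_mem (pow_mem X_mem_nonnegCoeffs e) hf n

theorem one_sub_X_pow_add_mul_mem_nonnegCoeffs (hk : 0 < k) (hl : 0 < l) (hkl : k + l = 10)
    (hP : thetaGenFun k * P = 1) (ha : a + 5 = k * c + l * e) (i j : ℕ) :
    (1 - X ^ (20 * i + 10 * j + a + 5)) * P ∈ nonnegCoeffs := by
  convert one_sub_X_pow_mul_mem_nonnegCoeffs hk hl hkl hP (2 * i + j + c) (2 * i + j + e) using 4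
  linear_combination ha - (2 * i + j) * hkl

theorem lerchLambert_mul_mem_nonnegCoeffs (hk : 0 < k) (hl : 0 < l) (hkl : k + l = 10)
    (hP : thetaGenFun k * P = 1) (ha : a + 5 = k * c + l * e) (b : ℕ) (hd : 0 < d) :
    lerchLambert a b d * P ∈ nonnegCoeffs := by
  intro n
  refine HasSum.nonneg (fun p => ?_) (hasSum_coeff_lerchLambert_mul a b hd P n)
  exact coeff_X_pow_mul_nonneg
    (one_sub_X_pow_add_mul_mem_nonnegCoeffs hk hl hkl hP ha p.1 p.2) _ n

theorem coeff_lerchLambert_mul_pos (hk : 0 < k) (hl : 0 < l) (hkl : k + l = 10)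
    (hP : thetaGenFun k * P = 1) (ha : a + 5 = k * c + l * e) (he : 0 < e) (b : ℕ) (hd : 0 < d)
    (i j : ℕ) : 0 < coeff (k * i + (b + d * j)) (lerchLambert a b d * P) := by
  have hterm := coeff_mul_one_sub_X_pow_mul_pos hk hl hkl hP (j + c) (b := j + e) (by omega) i
  rw [show k * (j + c) + l * (j + e) = 10 * j + a + 5 by linear_combination j * hkl - ha] at hterm
  refine hterm.trans_le (le_of_eq_of_le ?_ (le_hasSum
    (hasSum_coeff_lerchLambert_mul a b hd P _) (0, j) fun p _ => coeff_X_pow_mul_nonneg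
      (one_sub_X_pow_add_mul_mem_nonnegCoeffs hk hl hkl hP ha p.1 p.2) _ _))
  simp only [mul_zero, zero_pow two_ne_zero, zero_add]
  rw [coeff_X_pow_mul]

end

theorem coeff_rankDiffGenFun {P : ℤ⟦X⟧} (hP : thetaGenFun 3 * P = 1) (m : ℕ) :
    coeff (4 + 5 * m) rankDiffGenFun = -2 * (coeff (m + 1) (lerchLambert 12 4 4 * P)
      + coeff (m + 1) (lerchLambert 8 3 6 * P)) := by
  have h := congrArg (coeff (m + 1) <| · * P) X_mul_mk_coeff_rankDiffGenFun_mul_thetaGenFun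
  rw [mul_assoc, hP, mul_one, coeff_succ_X_mul, coeff_mk, mul_assoc, add_mul,
    show (-2 : ℤ⟦X⟧) = C (-2) by simp, coeff_C_mul, map_add] at h
  exact h

theorem coeff_rankDiffGenFun_neg {m : ℕ} (h0 : m ≠ 0) (h1 : m ≠ 1) (h4 : m ≠ 4) :
    coeff (4 + 5 * m) rankDiffGenFun < 0 := by
  obtain ⟨P, hP⟩ : ∃ P, thetaGenFun 3 * P = 1 := ⟨_, mul_invOfUnit _ 1 <| by
    rw [← coeff_zero_eq_constantCoeff_apply, coeff_zero_thetaGenFun] <;> norm_num⟩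
  have h6 : 0 < 6 := by norm_num
  have h7 : 0 < 7 := by norm_num
  have ha₁₂ : 12 + 5 = 3 * 1 + 7 * 2 := by norm_num
  have ha₈ : 8 + 5 = 3 * 2 + 7 * 1 := by norm_num
  have hnonneg₁₂ := lerchLambert_mul_mem_nonnegCoeffs three_pos h7 rfl hP ha₁₂ 4 four_pos (m + 1)
  have hnonneg₈ := lerchLambert_mul_mem_nonnegCoeffs three_pos h7 rfl hP ha₈ 3 h6 (m + 1)
  have hpos₁₂ (i j : ℕ) := coeff_lerchLambert_mul_pos three_pos h7 rfl hP ha₁₂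
    two_pos 4 four_pos i j
  have hpos₈ (i : ℕ) := coeff_lerchLambert_mul_pos three_pos h7 rfl hP ha₈
    one_pos 3 h6 i 0
  have hsum : 0 < coeff (m + 1) (lerchLambert 12 4 4 * P)
      + coeff (m + 1) (lerchLambert 8 3 6 * P) := by
    obtain ⟨i, rfl | rfl | rfl⟩ : ∃ i, m = 3 * i + 2 ∨ m = 3 * i + 3 ∨ m = 3 * i + 7 :=
      ⟨if m % 3 = 1 then (m - 7) / 3 else (m - 2) / 3, by split_ifs <;> omega⟩
    · exact add_pos_of_nonneg_of_pos hnonneg₁₂ (hpos₈ i)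
    · exact add_pos_of_pos_of_nonneg (hpos₁₂ i 0) hnonneg₈
    · exact add_pos_of_pos_of_nonneg (hpos₁₂ i 1) hnonneg₈
  rw [coeff_rankDiffGenFun hP]
  linarith

end OverpartitionRank

theorem stmt6 (n : ℕ) (hn : 0 < n) (h5 : n % 5 = 4)
    (hex : n ∉ ({4, 9, 24} : Set ℕ)) :
    nbar 0 5 n < nbar 2 5 n := by
  simp only [Set.mem_insert_iff, Set.mem_singleton_iff, not_or] at hex
  obtain ⟨m, rfl⟩ : ∃ m, n = 4 + 5 * m := ⟨n / 5, by omega⟩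
  have hneg := OverpartitionRank.coeff_rankDiffGenFun_neg (m := m) (by omega) (by omega) (by omega)
  rw [OverpartitionRank.rankDiffGenFun, PowerSeries.coeff_mk] at hneg
  omega
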